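/- Weighted power variation CLT: Let x be a fractional Brownian motion with Hurst parameter ν ∈ (1/4,1/2], let (y,y′) be controlled by (x,1/2) in L₂ (here ℓ = 2), and let p ≥ 2 be a real number. Set c_r = 2^{r/2} Γ((r+1)/2)/√π for r > −1, a_{2q} = Σ_{r=0}^{q} ((−1)^r/(2^r r! (2q−2r)!)) (c_{2q−2r+p} − c_p c_{2q−2r}) for q ≥ 1, and σ² = Σ_{q=1}^∞ (2q)! a_{2q}² Σ_{k∈ℤ} ρ(k)^{2q}. Then S_n := n^{−1/2} Σ_{k=0}^{n−1} y_{t_k} (|n^ν δx_{t_k t_{k+1}}|^p − c_p) converges stably in distribution to σ ∫₀¹ y_t dW_t with W a standard Brownian motion independent of x; explicitly, for all points u_1,…,u_m ∈ [0,1], every bounded continuous g : ℝ^m → ℂ and every λ ∈ ℝ, E[g(x_{u_1},…,x_{u_m}) e^{iλ S_n}] → E[g(x_{u_1},…,x_{u_m}) exp(−(λ²σ²/2) ∫₀¹ y_t² dt)] as n → ∞. -/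

import Mathlib

/-!
The proof rests on Gaussian integration by parts and characteristic functions.

*Hermite expansion.* Write `f t = |t| ^ p - c_p`. The Hermite polynomials form a Hilbert basis of
`L²` of the standard Gaussian measure (`hermBasis`), and `f` has vanishing coefficients of degree
`0` and `1`. Orthogonality gives Gebelein's inequality `gebelein`: covariances of `f` at two jointly
Gaussian variables are at most the correlation times `‖f‖²`. As the correlations `ρ` of the
increments are summable for `ν ≤ 1/2`, the variances of the normalized sums over blocks are bounded
(`sum_fZ_sq_le`), uniformly approximated by those of truncated expansions, and the latter converge
to `σ²` (`tendsto_sig2`).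

*CLT without weights.* A truncated expansion has the form `F = X G - G'` with `G` a polynomial.
Integration by parts then expresses the derivative of `τ ↦ E exp (i (A + τ B))`, where `B` is the
normalized sum of `F`, through `-τ s² E exp (i (A + τ B))` up to the fluctuations of a quadratic
functional of small variance (`clt_ineq`, `clt_bound`). Taking for `A` a sum at a fixed level gives
the CLT together with asymptotic independence from every fixed level (`poly_clt`). By the argument
of Rényi (`mixing`) the convergence is stable: it holds against every bounded random factor, first
for deterministic weights on finitely many blocks (`det_clt`), and then for random weights by
approximation with simple functions (`random_clt`).

*Weights.* Cut `[0, 1]` into `m` blocks and replace `y` on each block by its value at the left end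
(`weighted_sum_eq`). The error consists of a second-order remainder and a first-order term with
coefficient `y'`. A discrete sewing lemma (`discrete_sewing`, `sewing_sum`), together with a bound
on the second moments of first-order sums obtained by integration by parts (`sum_XZ_sq_le`),
bounds the remainder by `m ^ (1/2 - 2ν)` (`rem_total_le`) and the contribution of
`y' - y'_0` by `m ^ (1/4 - ν)` (`der_sum_le`), uniformly in `n`; both tend to zero as `m → ∞`
because `ν > 1/4`. The term with the fixed coefficient `y'_0` is small in probability, which
suffices and requires no integrability of `y'_0` (`prod_diff`).

*Conclusion.* Letting `n → ∞` for fixed `m` and then `m → ∞`, where Riemann sums of `y²` converge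
to the integral (`tendsto_gfac_int`), gives the limit (`main_clt`).
-/

open MeasureTheory ProbabilityTheory Filter
open scoped ENNReal NNReal

noncomputable section

variable {Ω : Type*} [MeasurableSpace Ω]

/-- The smallest point `⌈n s⌉ / n` of the uniform `n`-partition that is `≥ s`. -/
def eps (n : ℕ) (s : ℝ) : ℝ := (⌈(n : ℝ) * s⌉ : ℝ) / n

/-- Discrete integral `J_s^t(f;h)` of a two-parameter process `f` against the
increments `h k = h_{t_k t_{k+1}}` along the uniform `n`-partition. -/
def Jtwo (n : ℕ) (f : ℝ → ℝ → Ω → ℝ) (h : ℕ → Ω → ℝ) (s t : ℝ) (ω : Ω) : ℝ :=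
  ∑ k ∈ Finset.range n,
    if s ≤ (k : ℝ) / n ∧ (k : ℝ) / n < t then f (eps n s) ((k : ℝ) / n) ω * h k ω else 0

/-- Discrete integral `J_s^t(y;h)` of a one-parameter path `y`. -/
def Jone (n : ℕ) (y : ℝ → Ω → ℝ) (h : ℕ → Ω → ℝ) (s t : ℝ) (ω : Ω) : ℝ :=
  ∑ k ∈ Finset.range n,
    if s ≤ (k : ℝ) / n ∧ (k : ℝ) / n < t then (y ((k : ℝ) / n) ω - y (eps n s) ω) * h k ω else 0

/-- A scalar `(L_p, ν, ℓ)`-rough path over the continuous process `X`. -/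
def IsRoughPath (P : Measure Ω) (p : ℝ≥0∞) (ν : ℝ) (ℓ : ℕ) (C : ℝ)
    (X : ℝ → Ω → ℝ) (x : ℕ → ℝ → ℝ → Ω → ℝ) : Prop :=
  (∀ i s t, Measurable (x i s t)) ∧
  (∀ ω, ContinuousOn (fun t => X t ω) (Set.Icc 0 1)) ∧
  (∀ s t ω, x 0 s t ω = 1) ∧
  (∀ s t ω, x 1 s t ω = X t ω - X s ω) ∧
  (∀ k, 1 ≤ k → k ≤ ℓ - 1 → ∀ s u t : ℝ, 0 ≤ s → s ≤ u → u ≤ t → t ≤ 1 → ∀ ω,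
    x k s t ω = ∑ j ∈ Finset.range (k + 1), x (k - j) s u ω * x j u t ω) ∧
  (∀ k, k ≤ ℓ - 1 → ∀ s t : ℝ, 0 ≤ s → s ≤ t → t ≤ 1 →
    eLpNorm (x k s t) p P ≤ ENNReal.ofReal ((C * (t - s) ^ ν) ^ k))

/-- `(y^{(0)},…,y^{(ℓ-1)})` is controlled by the rough path `x` in `L₂`,
with remainder constant `K₀`. -/
def Controlled (P : Measure Ω) (ν : ℝ) (ℓ : ℕ) (K₀ : ℝ)
    (x : ℕ → ℝ → ℝ → Ω → ℝ) (y : ℕ → ℝ → Ω → ℝ) : Prop :=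
  (∀ k, k ≤ ℓ - 1 → ∀ t, Measurable (y k t)) ∧
  (∀ k, k ≤ ℓ - 1 → ∀ ω, ContinuousOn (fun t => y k t ω) (Set.Icc 0 1)) ∧
  (∀ ω, y 0 0 ω = 0) ∧
  (∀ k, k ≤ ℓ - 1 → ∀ s t : ℝ, 0 ≤ s → s ≤ t → t ≤ 1 →
    eLpNorm (fun ω => y k t ω - y k s ω -
        ∑ j ∈ Finset.Icc 1 (ℓ - 1 - k), y (k + j) s ω * x j s t ω) 2 P
      ≤ ENNReal.ofReal (K₀ * (t - s) ^ (((ℓ - k : ℕ) : ℝ) * ν)))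

/-- Covariance of one-dimensional fractional Brownian motion. -/
def fbmCov (ν s t : ℝ) : ℝ := (s ^ (2 * ν) + t ^ (2 * ν) - |t - s| ^ (2 * ν)) / 2

/-- `x` is a fractional Brownian motion with Hurst parameter `ν` on `[0,1]`:
a measurable process with (a.s.) continuous sample paths all of whose finite
linear combinations are centered Gaussian with the fBm covariance. -/
def IsFBM (P : Measure Ω) (ν : ℝ) (x : ℝ → Ω → ℝ) : Prop :=
  (∀ t, Measurable (x t)) ∧
  (∀ᵐ ω ∂P, ContinuousOn (fun t => x t ω) (Set.Icc 0 1)) ∧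
  ∀ (m : ℕ) (t : Fin m → ℝ), (∀ j, t j ∈ Set.Icc (0 : ℝ) 1) →
    ∀ a : Fin m → ℝ,
      P.map (fun ω => ∑ j, a j * x (t j) ω) =
        gaussianReal 0 (∑ j, ∑ k, a j * a k * fbmCov ν (t j) (t k)).toNNReal

/-- Correlation function of the increments of fBm. -/
def rho (ν : ℝ) (k : ℤ) : ℝ :=
  (|(k : ℝ) + 1| ^ (2 * ν) + |(k : ℝ) - 1| ^ (2 * ν) - 2 * |(k : ℝ)| ^ (2 * ν)) / 2

/-- Hermite polynomial `H_q` (probabilists' normalization). -/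
def Hq (q : ℕ) (t : ℝ) : ℝ := Polynomial.aeval t (Polynomial.hermite q)

/-- The increments `h^{n,q}_{t_k t_{k+1}} = H_q(n^ν δx_{t_k t_{k+1}})`. -/
def hermIncr (x : ℝ → Ω → ℝ) (ν : ℝ) (n q : ℕ) (k : ℕ) (ω : Ω) : ℝ :=
  Hq q ((n : ℝ) ^ ν * (x (((k : ℝ) + 1) / n) ω - x ((k : ℝ) / n) ω))

/-- Canonical rough-path lift of a one-dimensional process: `x^i_{st} = (δx_{st})^i / i!`. -/
def xlift (x : ℝ → Ω → ℝ) (i : ℕ) (s t : ℝ) (ω : Ω) : ℝ :=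
  (x t ω - x s ω) ^ i / (Nat.factorial i : ℝ)

/-- Hermite coefficient `a_q = (1/q!) ∫ f H_q dγ` of `f` in `L²(γ)`. -/
def hermCoeff (f : ℝ → ℝ) (q : ℕ) : ℝ :=
  (Nat.factorial q : ℝ)⁻¹ * ∫ t, f t * Hq q t ∂(gaussianReal 0 1)

/-- `c_p = E|N|^p = 2^{p/2} Γ((p+1)/2)/√π`. -/
def cconst (r : ℝ) : ℝ := (2 : ℝ) ^ (r / 2) * Real.Gamma ((r + 1) / 2) / Real.sqrt Real.pi

/-- Hermite coefficients `a_{2q}` of the function `|x|^p - c_p`. -/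
def apow (p : ℝ) (q : ℕ) : ℝ :=
  ∑ r ∈ Finset.range (q + 1),
    (-1 : ℝ) ^ r / ((2 : ℝ) ^ r * (Nat.factorial r : ℝ) * (Nat.factorial (2 * q - 2 * r) : ℝ)) *
      (cconst (2 * (q : ℝ) - 2 * (r : ℝ) + p) - cconst p * cconst (2 * (q : ℝ) - 2 * (r : ℝ)))

/-! ### Gaussian integration by parts -/

lemma hasDerivAt_gaussianPDFReal_zero {v : ℝ≥0} (hv : v ≠ 0) (t : ℝ) :
    HasDerivAt (gaussianPDFReal 0 v) (-(t / v) * gaussianPDFReal 0 v t) t := by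
  have hv' : (v : ℝ) ≠ 0 := by exact_mod_cast hv
  have h1 : HasDerivAt (fun t : ℝ => -(t - 0) ^ 2 / (2 * (v : ℝ))) (-(t / v)) t := by
    have := (((hasDerivAt_id t).sub_const 0).pow 2).neg.div_const (2 * (v : ℝ))
    refine this.congr_deriv ?_
    simp
    field_simp
  have := (h1.exp).const_mul ((√(2 * Real.pi * v))⁻¹)
  refine this.congr_deriv ?_
  simp only [gaussianPDFReal]
  ring

/-- Integration by parts against a centered one-dimensional Gaussian law. -/
lemma gaussianReal_ibp {v : ℝ≥0} (hv : v ≠ 0) {φ φ' : ℝ → ℂ}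
    (hd : ∀ t, HasDerivAt φ (φ' t) t)
    (h0 : Integrable φ (gaussianReal 0 v))
    (h1 : Integrable (fun t : ℝ => (t : ℂ) * φ t) (gaussianReal 0 v))
    (h2 : Integrable φ' (gaussianReal 0 v)) :
    ∫ t, (t : ℂ) * φ t ∂(gaussianReal 0 v) = v * ∫ t, φ' t ∂(gaussianReal 0 v) := by
  have hv' : (v : ℝ) ≠ 0 := by exact_mod_cast hv
  have hvC : ((v : ℝ) : ℂ) ≠ 0 := by exact_mod_cast hv'
  have key : ∀ ψ : ℝ → ℂ, Integrable ψ (gaussianReal 0 v) →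
      Integrable (fun t => gaussianPDFReal 0 v t • ψ t) := by
    intro ψ hψ
    rw [gaussianReal_of_var_ne_zero 0 hv] at hψ
    rw [integrable_withDensity_iff_integrable_smul' (measurable_gaussianPDF 0 v)
      (ae_of_all _ fun x => gaussianPDF_lt_top)] at hψ
    simpa [toReal_gaussianPDF] using hψ
  rw [integral_gaussianReal_eq_integral_smul hv, integral_gaussianReal_eq_integral_smul hv]
  have := integral_bilinear_hasDerivAt_right_eq_neg_left_of_integrable
    (L := ContinuousLinearMap.lsmul ℝ ℝ (E := ℂ))
    (u := gaussianPDFReal 0 v) (u' := fun t => -(t / v) * gaussianPDFReal 0 v t)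
    (v := φ) (v' := φ')
    (fun t _ => hasDerivAt_gaussianPDFReal_zero hv t) (fun t _ => hd t)
    (by simpa using key _ h2)
    (by
      have := (key _ h1).smul (-(1 / (v : ℝ)))
      refine this.congr (ae_of_all _ fun t => ?_)
      simp only [Pi.smul_apply, Complex.real_smul, ContinuousLinearMap.lsmul_apply]
      push_cast; ring)
    (by simpa using key _ h0)
  simp only [ContinuousLinearMap.lsmul_apply] at this
  rw [this, ← integral_neg, ← integral_const_mul]
  refine integral_congr_ae (ae_of_all _ fun t => ?_)
  simp only [Complex.real_smul]
  push_cast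
  have : ((v : ℝ≥0) : ℂ) ≠ 0 := hvC
  field_simp

/-- Gaussian integration by parts for a finite centered Gaussian family: the coordinate `X k`
acts on `Φ (X)` as the derivative of `Φ` in the direction of the covariance row of `X k`. -/
lemma gauss_ibp {P : Measure Ω} {ι : Type*} [Fintype ι] {X : ι → Ω → ℝ}
    (hX : HasGaussianLaw (fun ω i => X i ω) P) (h0 : ∀ i, ∫ ω, X i ω ∂P = 0) (k : ι)
    {Φ D : (ι → ℝ) → ℂ} (hΦm : Measurable Φ) (hDm : Measurable D)
    (hD : ∀ x : ι → ℝ, HasDerivAt (fun t : ℝ => Φ (fun l => x l + t * cov[X k, X l; P])) (D x) 0)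
    (i0 : Integrable (fun ω => Φ (fun i => X i ω)) P)
    (i1 : Integrable (fun ω => (X k ω : ℂ) * Φ (fun i => X i ω)) P)
    (i2 : Integrable (fun ω => D (fun i => X i ω)) P) :
    ∫ ω, (X k ω : ℂ) * Φ (fun i => X i ω) ∂P = ∫ ω, D (fun i => X i ω) ∂P := by
  have hP := hX.isProbabilityMeasure
  set c : ι → ℝ := fun l => cov[X k, X l; P] with hc
  have hXk := hX.eval k
  have hmap := hXk.map_eq_gaussianReal
  rw [h0 k] at hmap
  set v : ℝ≥0 := (Var[X k; P]).toNNReal with hv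
  have hvar : ((v : ℝ≥0) : ℝ) = Var[X k; P] := Real.coe_toNNReal _ (variance_nonneg _ _)
  have hcov : cov[X k, X k; P] = v := by
    rw [covariance_self hXk.aemeasurable, hvar]
  by_cases hv0 : v = 0
  · -- a degenerate coordinate vanishes almost surely
    have hz : X k =ᵐ[P] 0 := by
      have h1 : Var[X k; P] = 0 := by rw [← hvar, hv0]; rfl
      have := ae_eq_integral_of_variance_eq_zero hXk.memLp_two h1
      filter_upwards [this] with ω hω
      rw [hω, h0 k]; rfl
    have hc0 : ∀ l, cov[X k, X l; P] = 0 := by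
      intro l
      rw [covariance, integral_eq_zero_of_ae]
      filter_upwards [hz] with ω hω
      simp [hω, h0 k]
    have hD0 : ∀ x, D x = 0 := by
      intro x
      have := hD x
      simp only [hc0, mul_zero, add_zero] at this
      exact this.unique (hasDerivAt_const _ _)
    simp only [hD0, integral_zero]
    rw [integral_eq_zero_of_ae]
    filter_upwards [hz] with ω hω
    simp [hω]
  have hvr : (v : ℝ) ≠ 0 := by exact_mod_cast hv0
  -- Subtracting the regression on `X k` leaves a family independent of `X k`.
  set V : ι → Ω → ℝ := fun i ω => X i ω - X k ω / v * c i with hV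
  have hVg : HasGaussianLaw (fun ω => (fun _ : Unit => X k ω, fun i => V i ω)) P := by
    let Lm : (ι → ℝ) →L[ℝ] ((Unit → ℝ) × (ι → ℝ)) :=
      ContinuousLinearMap.prod (ContinuousLinearMap.pi fun _ => ContinuousLinearMap.proj k)
        (ContinuousLinearMap.pi fun i => ContinuousLinearMap.proj i -
          (c i / v) • ContinuousLinearMap.proj k)
    have := hX.map_fun Lm
    refine this.congr (ae_of_all _ fun ω => ?_)
    refine Prod.ext ?_ ?_
    · ext i; simp [Lm]
    · ext i; simp [Lm, hV]; ring
  have hind : IndepFun (fun ω (_ : Unit) => X k ω) (fun ω i => V i ω) P := by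
    refine HasGaussianLaw.indepFun_of_covariance_eval (X := fun _ => X k) hVg ?_
    intro _ j
    have hj := (hX.eval j).memLp_two
    have : V j = fun ω => X j ω - (c j / v) * X k ω := by ext ω; simp [hV]; ring
    rw [this, covariance_fun_sub_right hXk.memLp_two hj (hXk.memLp_two.const_mul _),
      covariance_const_mul_right, hcov]
    simp only [hc]; field_simp; ring
  have hind' : IndepFun (X k) (fun ω i => V i ω) P :=
    hind.comp (φ := fun f : Unit → ℝ => f ()) (ψ := id) (by fun_prop) measurable_id
  have hVm : AEMeasurable (fun ω i => V i ω) P := hVg.snd.aemeasurable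
  have hlaw : P.map (fun ω => (X k ω, fun i => V i ω)) =
      (gaussianReal 0 v).prod (P.map (fun ω i => V i ω)) := by
    rw [(indepFun_iff_map_prod_eq_prod_map_map hXk.aemeasurable hVm).1 hind', hmap]
  have hpm : AEMeasurable (fun ω => (X k ω, fun i => V i ω)) P :=
    hXk.aemeasurable.prodMk hVm
  have hVp : IsProbabilityMeasure (P.map (fun ω i => V i ω)) :=
    Measure.isProbabilityMeasure_map hVm
  let T : ℝ × (ι → ℝ) → (ι → ℝ) := fun q l => q.2 l + q.1 / v * c l
  have hT : Measurable T := by fun_prop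
  have hTX : ∀ ω, T (X k ω, fun i => V i ω) = fun i => X i ω := by
    intro ω; ext i; simp [T, hV]
  have trans_int : ∀ Ψ : ℝ × (ι → ℝ) → ℂ, Measurable Ψ →
      Integrable (fun ω => Ψ (X k ω, fun i => V i ω)) P →
      Integrable Ψ ((gaussianReal 0 v).prod (P.map (fun ω i => V i ω))) := by
    intro Ψ hΨ h
    rw [← hlaw, integrable_map_measure hΨ.aestronglyMeasurable hpm]
    exact h
  have trans_eq : ∀ Ψ : ℝ × (ι → ℝ) → ℂ, Measurable Ψ →
      Integrable (fun ω => Ψ (X k ω, fun i => V i ω)) P →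
      ∫ ω, Ψ (X k ω, fun i => V i ω) ∂P =
        ∫ w, ∫ t, Ψ (t, w) ∂(gaussianReal 0 v) ∂(P.map (fun ω i => V i ω)) := by
    intro Ψ hΨ h
    rw [← integral_prod_symm _ (trans_int Ψ hΨ h), ← hlaw,
      integral_map hpm hΨ.aestronglyMeasurable]
  have e0 := trans_int (fun q => Φ (T q)) (by fun_prop) (by simpa only [hTX] using i0)
  have e1 := trans_int (fun q => (q.1 : ℂ) * Φ (T q)) (by fun_prop) (by simpa only [hTX] using i1)
  have e2 := trans_int (fun q => D (T q)) (by fun_prop) (by simpa only [hTX] using i2)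
  have t1 := trans_eq (fun q => (q.1 : ℂ) * Φ (T q)) (by fun_prop) (by simpa only [hTX] using i1)
  have t2 := trans_eq (fun q => D (T q)) (by fun_prop) (by simpa only [hTX] using i2)
  simp only [hTX] at t1 t2
  rw [t1, t2]
  refine integral_congr_ae ?_
  filter_upwards [e0.prod_left_ae, e1.prod_left_ae, e2.prod_left_ae] with w f0 f1 f2
  -- For fixed values of this family, the one-dimensional formula applies.
  have hd : ∀ t, HasDerivAt (fun t => Φ (T (t, w))) ((v : ℂ)⁻¹ * D (T (t, w))) t := by
    intro t
    have h := hD (T (t, w))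
    have hg : HasDerivAt (fun s : ℝ => (s - t) / v) (1 / v) t :=
      ((hasDerivAt_id t).sub_const t).div_const _
    have h' := HasDerivAt.scomp t (g₁ := fun t' : ℝ => Φ (fun l => T (t, w) l + t' * c l))
      (h := fun s : ℝ => (s - t) / v) (by simpa using h) hg
    have he : (fun t' : ℝ => Φ (fun l => T (t, w) l + t' * c l)) ∘ (fun s : ℝ => (s - t) / v)
        = fun s => Φ (T (s, w)) := by
      ext s
      simp only [Function.comp]
      congr 1
      ext l
      simp only [T]
      ring
    rw [he] at h'
    refine h'.congr_deriv ?_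
    simp
  have := gaussianReal_ibp hv0 hd f0 f1 (f2.const_mul _)
  rw [this, integral_const_mul, ← mul_assoc]
  have hvC : ((v : ℝ≥0) : ℂ) ≠ 0 := by exact_mod_cast hvr
  rw [mul_inv_cancel₀ hvC, one_mul]

/-! ### Gaussian families and Hermite polynomials -/

/-- `f` belongs to `L^r` for all finite exponents `r`. -/
def AllLp (P : Measure Ω) (f : Ω → ℝ) : Prop := ∀ r : ℝ≥0, MemLp f r P

namespace AllLp
variable {P : Measure Ω} {f g : Ω → ℝ}

lemma aesm (hf : AllLp P f) : AEStronglyMeasurable f P := (hf 0).1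

lemma two (hf : AllLp P f) : MemLp f 2 P := by simpa using hf 2

lemma integrable (hf : AllLp P f) : Integrable f P := by
  rw [← memLp_one_iff_integrable]; simpa using hf 1

lemma add (hf : AllLp P f) (hg : AllLp P g) : AllLp P (fun ω => f ω + g ω) :=
  fun r => (hf r).add (hg r)

lemma sub (hf : AllLp P f) (hg : AllLp P g) : AllLp P (fun ω => f ω - g ω) :=
  fun r => (hf r).sub (hg r)

lemma const_mul (hf : AllLp P f) (c : ℝ) : AllLp P (fun ω => c * f ω) :=
  fun r => (hf r).const_mul c

lemma const [IsFiniteMeasure P] (c : ℝ) : AllLp P (fun _ : Ω => c) := fun _ => memLp_const c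

lemma mul (hf : AllLp P f) (hg : AllLp P g) : AllLp P (fun ω => f ω * g ω) := by
  intro r
  have : ENNReal.HolderTriple ((2 * r : ℝ≥0) : ℝ≥0∞) ((2 * r : ℝ≥0) : ℝ≥0∞) (r : ℝ≥0∞) := by
    constructor
    push_cast
    rw [ENNReal.mul_inv (by simp) (by simp), ← add_mul, ENNReal.inv_two_add_inv_two, one_mul]
  exact (hg (2 * r)).mul (hf (2 * r))

lemma pow [IsFiniteMeasure P] (hf : AllLp P f) (n : ℕ) : AllLp P (fun ω => f ω ^ n) := by
  induction n with
  | zero => simpa using const (P := P) 1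
  | succ n ih => simpa only [pow_succ] using ih.mul hf

lemma sum {ι : Type*} {s : Finset ι} {F : ι → Ω → ℝ} (h : ∀ i ∈ s, AllLp P (F i)) :
    AllLp P (fun ω => ∑ i ∈ s, F i ω) :=
  fun r => memLp_finsetSum s fun i hi => h i hi r

lemma mono (hg : AllLp P g) (hf : AEStronglyMeasurable f P) (h : ∀ ω, |f ω| ≤ g ω) :
    AllLp P f :=
  fun r => (hg r).mono' hf (ae_of_all _ h)

lemma abs (hf : AllLp P f) : AllLp P (fun ω => |f ω|) := fun r => (hf r).abs

lemma polyEval [IsFiniteMeasure P] (hf : AllLp P f) (p : Polynomial ℝ) :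
    AllLp P (fun ω => p.eval (f ω)) := by
  simp only [Polynomial.eval_eq_sum_range]
  exact sum fun i _ => (hf.pow i).const_mul _

lemma rpow [IsFiniteMeasure P] (hf : AllLp P f) {p : ℝ} (hp : 0 ≤ p) :
    AllLp P (fun ω => |f ω| ^ p) := by
  refine ((((const (P := P) 1).add hf.abs).pow ⌈p⌉₊)).mono ?_ fun ω => ?_
  · exact (hf.aesm.aemeasurable.abs.pow_const p).aestronglyMeasurable
  · have h1 : (1 : ℝ) ≤ 1 + |f ω| := by linarith [abs_nonneg (f ω)]
    rw [abs_of_nonneg (by positivity), ← Real.rpow_natCast]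
    calc |f ω| ^ p ≤ (1 + |f ω|) ^ p := by gcongr; linarith
      _ ≤ _ := Real.rpow_le_rpow_of_exponent_le h1 (Nat.le_ceil p)

end AllLp

/-- A finite centered Gaussian family; its covariance may be degenerate. -/
structure CG (P : Measure Ω) {ι : Type*} [Fintype ι] (X : ι → Ω → ℝ) : Prop where
  law : HasGaussianLaw (fun ω i => X i ω) P
  mean : ∀ i, ∫ ω, X i ω ∂P = 0

lemma CG.allLp {P : Measure Ω} {ι : Type*} [Fintype ι] {X : ι → Ω → ℝ} (hX : CG P X) (k : ι) :
    AllLp P (X k) := fun r => (hX.law.eval k).memLp (by simp)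

lemma CG.prob {P : Measure Ω} {ι : Type*} [Fintype ι] {X : ι → Ω → ℝ} (hX : CG P X) :
    IsProbabilityMeasure P := hX.law.isProbabilityMeasure

lemma CG.ibp {P : Measure Ω} {ι : Type*} [Fintype ι] {X : ι → Ω → ℝ} (hX : CG P X) (k : ι)
    {Φ D : (ι → ℝ) → ℝ} (hΦm : Measurable Φ) (hDm : Measurable D)
    (hD : ∀ x : ι → ℝ, HasDerivAt (fun t : ℝ => Φ (fun l => x l + t * cov[X k, X l; P])) (D x) 0)
    (i0 : AllLp P (fun ω => Φ (fun i => X i ω)))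
    (i2 : AllLp P (fun ω => D (fun i => X i ω))) :
    ∫ ω, X k ω * Φ (fun i => X i ω) ∂P = ∫ ω, D (fun i => X i ω) ∂P := by
  have := gauss_ibp hX.law hX.mean k (Φ := fun x => (Φ x : ℂ)) (D := fun x => (D x : ℂ))
    (by fun_prop) (by fun_prop) (fun x => (hD x).ofReal_comp)
    i0.integrable.ofReal
    (by
      have := ((hX.allLp k).mul i0).integrable.ofReal (𝕜 := ℂ)
      simpa using this)
    i2.integrable.ofReal
  simp only [← Complex.ofReal_mul] at this
  rw [integral_complex_ofReal, integral_complex_ofReal] at this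
  exact_mod_cast this

lemma Hq_eq (q : ℕ) (t : ℝ) :
    Hq q t = ((Polynomial.hermite q).map (Int.castRingHom ℝ)).eval t := by
  rw [Hq, Polynomial.aeval_def, Polynomial.eval_map]; rfl

lemma derivative_hermite_succ (n : ℕ) : Polynomial.derivative (Polynomial.hermite (n + 1)) =
    ((n + 1 : ℕ) : Polynomial ℤ) * Polynomial.hermite n := by
  induction n with
  | zero => simp
  | succ n ih =>
    rw [Polynomial.hermite_succ (n + 1), Polynomial.derivative_sub, Polynomial.derivative_mul, ih,
      Polynomial.derivative_mul, Polynomial.derivative_X, Polynomial.derivative_natCast]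
    have := Polynomial.hermite_succ n
    push_cast
    linear_combination (-(n : Polynomial ℤ) - 1) * this

lemma Hq_zero (t : ℝ) : Hq 0 t = 1 := by simp [Hq]

lemma hasDerivAt_Hq (q : ℕ) (t : ℝ) : HasDerivAt (Hq q) (q * Hq (q - 1) t) t := by
  have h := ((Polynomial.hermite q).map (Int.castRingHom ℝ)).hasDerivAt t
  have e : Hq q = fun t => ((Polynomial.hermite q).map (Int.castRingHom ℝ)).eval t := by
    ext t; exact Hq_eq q t
  rw [e]
  refine h.congr_deriv ?_
  rw [Polynomial.derivative_map]
  cases q with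
  | zero => simp
  | succ n => rw [derivative_hermite_succ]; simp [Hq_eq]

lemma Hq_succ (q : ℕ) (t : ℝ) : Hq (q + 1) t = t * Hq q t - q * Hq (q - 1) t := by
  have h : Hq (q + 1) t = t * Hq q t - Polynomial.aeval t (Polynomial.derivative
      (Polynomial.hermite q)) := by
    simp [Hq, Polynomial.hermite_succ]
  rw [h]
  cases q with
  | zero => simp
  | succ n => rw [derivative_hermite_succ]; simp [Hq]

lemma continuous_Hq (q : ℕ) : Continuous (Hq q) := by
  have e : Hq q = fun t => ((Polynomial.hermite q).map (Int.castRingHom ℝ)).eval t := by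
    ext t; exact Hq_eq q t
  rw [e]; exact Polynomial.continuous _

lemma measurable_Hq (q : ℕ) : Measurable (Hq q) := (continuous_Hq q).measurable

lemma AllLp.Hq {P : Measure Ω} [IsFiniteMeasure P] {f : Ω → ℝ} (hf : AllLp P f) (q : ℕ) :
    AllLp P (fun ω => Hq q (f ω)) := by
  simpa only [Hq_eq] using hf.polyEval _

/-- Gaussian integration by parts in Hermite form. -/
lemma hermite_step {P : Measure Ω} {ι : Type*} [Fintype ι] {X : ι → Ω → ℝ} (hX : CG P X)
    {k l : ι} (hk : cov[X k, X k; P] = 1) (q : ℕ) {ψ ψ' : ℝ → ℝ}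
    (hψ : ∀ t, HasDerivAt ψ (ψ' t) t) (hψ'm : Measurable ψ')
    (i0 : AllLp P (fun ω => ψ (X l ω))) (i1 : AllLp P (fun ω => ψ' (X l ω))) :
    ∫ ω, Hq (q + 1) (X k ω) * ψ (X l ω) ∂P =
      cov[X k, X l; P] * ∫ ω, Hq q (X k ω) * ψ' (X l ω) ∂P := by
  have := hX.prob
  have hψm : Measurable ψ := (continuous_iff_continuousAt.2 fun t => (hψ t).continuousAt).measurable
  have hm := fun q => measurable_Hq q
  have ha := fun q => (hX.allLp k).Hq q
  have h := hX.ibp k (Φ := fun x => Hq q (x k) * ψ (x l))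
    (D := fun x => q * Hq (q - 1) (x k) * ψ (x l) + Hq q (x k) * (cov[X k, X l; P] * ψ' (x l)))
    (((hm q).comp (measurable_pi_apply k)).mul (hψm.comp (measurable_pi_apply l)))
    ((((hm (q - 1)).comp (measurable_pi_apply k)).const_mul _).mul
      (hψm.comp (measurable_pi_apply l)) |>.add
      (((hm q).comp (measurable_pi_apply k)).mul
      ((hψ'm.comp (measurable_pi_apply l)).const_mul _)))
    (fun x => by
      have d1 : HasDerivAt (fun t : ℝ => x k + t * cov[X k, X k; P]) 1 0 := by
        rw [hk]; simpa using (hasDerivAt_id (0 : ℝ)).const_add (x k)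
      have d2 : HasDerivAt (fun t : ℝ => x l + t * cov[X k, X l; P]) (cov[X k, X l; P]) 0 := by
        simpa using ((hasDerivAt_id (0 : ℝ)).mul_const (cov[X k, X l; P])).const_add (x l)
      have e1 := HasDerivAt.comp (0 : ℝ) (h₂ := Hq q)
        (by simpa using hasDerivAt_Hq q (x k)) d1
      have e2 := HasDerivAt.comp (0 : ℝ) (h₂ := ψ) (by simpa using hψ (x l)) d2
      refine (e1.mul e2).congr_deriv ?_
      simp only [Function.comp, zero_mul, add_zero]; ring)
    ((ha q).mul i0)
    ((((ha (q - 1)).const_mul _).mul i0).add ((ha q).mul (i1.const_mul _)))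
  have e : ∀ ω, Hq (q + 1) (X k ω) * ψ (X l ω) =
      X k ω * (Hq q (X k ω) * ψ (X l ω)) - q * Hq (q - 1) (X k ω) * ψ (X l ω) := by
    intro ω; rw [Hq_succ]; ring
  simp only [e]
  rw [integral_sub ((hX.allLp k).mul ((ha q).mul i0)).integrable
    (((ha (q - 1)).const_mul _).mul i0).integrable, h, integral_add
    (((ha (q - 1)).const_mul _).mul i0).integrable ((ha q).mul (i1.const_mul _)).integrable,
    add_sub_cancel_left, ← integral_const_mul]
  congr 1; ext ω; ring

lemma hermite_mean {P : Measure Ω} {ι : Type*} [Fintype ι] {X : ι → Ω → ℝ} (hX : CG P X)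
    {k : ι} (hk : cov[X k, X k; P] = 1) (q : ℕ) : ∫ ω, Hq (q + 1) (X k ω) ∂P = 0 := by
  have := hX.prob
  have h := hermite_step hX (l := k) hk q (ψ := fun _ => 1) (ψ' := fun _ => 0)
    (fun t => hasDerivAt_const _ _) measurable_const (AllLp.const 1) (AllLp.const 0)
  simpa using h

/-- Orthogonality of Hermite polynomials of jointly Gaussian standard variables. -/
lemma hermite_orth {P : Measure Ω} {ι : Type*} [Fintype ι] {X : ι → Ω → ℝ} (hX : CG P X)
    {k l : ι} (hk : cov[X k, X k; P] = 1) (hl : cov[X l, X l; P] = 1) (q r : ℕ) :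
    ∫ ω, Hq q (X k ω) * Hq r (X l ω) ∂P =
      if q = r then (q.factorial : ℝ) * cov[X k, X l; P] ^ q else 0 := by
  have := hX.prob
  induction q generalizing r with
  | zero =>
    cases r with
    | zero => simp [Hq_zero]
    | succ r => simpa [Hq_zero] using hermite_mean hX hl r
  | succ q ih =>
    rw [hermite_step hX hk q (fun t => hasDerivAt_Hq r t) ((measurable_Hq _).const_mul _)
      ((hX.allLp l).Hq r) (((hX.allLp l).Hq (r - 1)).const_mul _)]
    have e : ∀ ω, Hq q (X k ω) * (r * Hq (r - 1) (X l ω)) =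
      r * (Hq q (X k ω) * Hq (r - 1) (X l ω)) := fun ω => by ring
    simp only [e]
    rw [integral_const_mul, ih]
    cases r with
    | zero => simp
    | succ r =>
      by_cases h : q = r
      · subst h; simp [Nat.factorial_succ]; ring
      · simp [h]

/-- The coordinate variable of the standard Gaussian law on `ℝ`, as a Gaussian family. -/
lemma cg_std : CG (gaussianReal 0 1) (fun (_ : Unit) (t : ℝ) => t) where
  law := by
    have h : HasGaussianLaw (id : ℝ → ℝ) (gaussianReal 0 1) := IsGaussian.hasGaussianLaw_id
    exact h.map_fun (ContinuousLinearMap.pi fun _ : Unit => ContinuousLinearMap.id ℝ ℝ)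
  mean := fun _ => by simp [integral_id_gaussianReal]

lemma cov_std : cov[(fun t : ℝ => t), (fun t : ℝ => t); gaussianReal 0 1] = 1 := by
  rw [covariance_self (by fun_prop), variance_fun_id_gaussianReal]; simp

lemma allLp_std : AllLp (gaussianReal 0 1) (fun t : ℝ => t) := cg_std.allLp ()

lemma hermite_orth_std (q r : ℕ) : ∫ t, Hq q t * Hq r t ∂(gaussianReal 0 1) =
    if q = r then (q.factorial : ℝ) else 0 := by
  have h := hermite_orth cg_std (k := ()) (l := ()) cov_std cov_std q r
  simpa [cov_std] using h

/-! ### Hermite expansions and the Gebelein inequality -/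

lemma int_sub {P : Measure Ω} {f g : Ω → ℝ} (hf : Integrable f P) (hg : Integrable g P) :
    Integrable (fun ω => f ω - g ω) P := hf.sub hg

lemma int_add {P : Measure Ω} {f g : Ω → ℝ} (hf : Integrable f P) (hg : Integrable g P) :
    Integrable (fun ω => f ω + g ω) P := hf.add hg

lemma int_mul {P : Measure Ω} {f g : Ω → ℝ} (hf : MemLp f 2 P) (hg : MemLp g 2 P) :
    Integrable (fun ω => f ω * g ω) P := hf.integrable_mul hg

lemma memLp_abs {P : Measure Ω} {f : Ω → ℝ} {p : ℝ≥0∞} (hf : MemLp f p P) :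
    MemLp (fun ω => |f ω|) p P := hf.abs

lemma memLp_two_exp_abs (c : ℝ) :
    MemLp (fun t : ℝ => Real.exp (c * |t|)) 2 (gaussianReal 0 1) := by
  rw [memLp_two_iff_integrable_sq (by fun_prop)]
  have h := integrable_exp_mul_abs (X := fun t : ℝ => t) (μ := gaussianReal 0 1) (t := 2 * c)
    (integrable_exp_mul_gaussianReal _) (integrable_exp_mul_gaussianReal _)
  refine h.congr (ae_of_all _ fun t => ?_)
  simp only
  rw [← Real.exp_nat_mul]; congr 1; push_cast; ring

/-- Determinacy of the Gaussian measure, in the form: a square-integrable function orthogonal to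
all monomials has vanishing Fourier transform with respect to `gaussianReal 0 1`. -/
lemma fourier_eq_zero {h : ℝ → ℝ} (hh : MemLp h 2 (gaussianReal 0 1))
    (h0 : ∀ n : ℕ, ∫ t, h t * t ^ n ∂(gaussianReal 0 1) = 0) (s : ℝ) :
    ∫ t, (h t : ℂ) * Complex.exp (s * t * Complex.I) ∂(gaussianReal 0 1) = 0 := by
  have key := hasSum_integral_of_dominated_convergence (μ := gaussianReal 0 1)
    (F := fun (n : ℕ) (t : ℝ) => (h t : ℂ) * ((s * t * Complex.I) ^ n / (n.factorial : ℂ)))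
    (f := fun t => (h t : ℂ) * Complex.exp (s * t * Complex.I))
    (fun (n : ℕ) (t : ℝ) => |h t| * ((|s| * |t|) ^ n / n.factorial))
    (fun n => (Complex.measurable_ofReal.comp_aemeasurable hh.1.aemeasurable).mul
      (by fun_prop) |>.aestronglyMeasurable)
    (fun n => ae_of_all _ fun t => by simp)
    (ae_of_all _ fun t => (Real.summable_pow_div_factorial _).mul_left _)
    (by
      have := hh.abs.integrable_mul (memLp_two_exp_abs |s|)
      refine this.congr (ae_of_all _ fun t => ?_)
      simp only [Pi.mul_apply]
      rw [tsum_mul_left, Real.exp_eq_exp_ℝ, NormedSpace.exp_eq_tsum_div]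
      rfl)
    (ae_of_all _ fun t => by
      have := (NormedSpace.expSeries_div_hasSum_exp (𝔸 := ℂ) (s * t * Complex.I)).mul_left (h t : ℂ)
      rwa [← Complex.exp_eq_exp_ℂ] at this)
  have z : ∀ n : ℕ, ∫ t, (h t : ℂ) * ((s * t * Complex.I) ^ n / (n.factorial : ℂ))
      ∂(gaussianReal 0 1) = 0 := by
    intro n
    have e : ∀ t : ℝ, (h t : ℂ) * ((s * t * Complex.I) ^ n / (n.factorial : ℂ)) =
      ((s * Complex.I) ^ n / (n.factorial : ℂ)) * ((h t * t ^ n : ℝ) : ℂ) := by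
      intro t; push_cast; rw [mul_right_comm, mul_pow _ (t : ℂ)]; ring
    simp only [e]
    rw [integral_const_mul, integral_complex_ofReal, h0 n]; simp
  simp only [z] at key
  exact key.unique hasSum_zero

/-- The positive and negative parts of `h`, as densities with respect to the Gaussian measure,
have the same characteristic function by `fourier_eq_zero`, hence coincide. -/
lemma ae_zero_of_moments {h : ℝ → ℝ} (hm : Measurable h) (hh : MemLp h 2 (gaussianReal 0 1))
    (h0 : ∀ n : ℕ, ∫ t, h t * t ^ n ∂(gaussianReal 0 1) = 0) :
    h =ᵐ[gaussianReal 0 1] 0 := by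
  set γ := gaussianReal 0 1 with hγ
  have hi : Integrable h γ := hh.integrable (by norm_num)
  have f1 : IsFiniteMeasure (γ.withDensity fun t => ENNReal.ofReal (h t)) :=
    isFiniteMeasure_withDensity_ofReal hi.2
  have f2 : IsFiniteMeasure (γ.withDensity fun t => ENNReal.ofReal (-h t)) :=
    isFiniteMeasure_withDensity_ofReal hi.neg.2
  have hexp : ∀ s t : ℝ, ‖Complex.exp (s * t * Complex.I)‖ = 1 := fun s t => by
    rw [← Complex.ofReal_mul, Complex.norm_exp_ofReal_mul_I]
  -- The positive and negative parts have the same characteristic function.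
  have e : (γ.withDensity fun t => ENNReal.ofReal (h t)) =
      γ.withDensity fun t => ENNReal.ofReal (-h t) := by
    apply Measure.ext_of_charFun
    ext s
    rw [charFun_apply_real, charFun_apply_real,
      integral_withDensity_eq_integral_toReal_smul (by fun_prop) (by simp),
      integral_withDensity_eq_integral_toReal_smul (by fun_prop) (by simp)]
    have i1 : ∀ k : ℝ → ℝ, Integrable k γ → Integrable (fun t => (ENNReal.ofReal (k t)).toReal •
        Complex.exp (s * t * Complex.I)) γ := by
      intro k hk
      have : Integrable (fun t => (max (k t) 0)) γ := hk.pos_part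
      refine (this.norm).mono' ?_ (ae_of_all _ fun t => ?_)
      · refine AEStronglyMeasurable.smul (f := fun t => (ENNReal.ofReal (k t)).toReal)
          (g := fun t : ℝ => Complex.exp (s * t * Complex.I)) ?_
          (Measurable.aestronglyMeasurable (by fun_prop))
        exact (hk.1.aemeasurable.ennreal_ofReal.ennreal_toReal).aestronglyMeasurable
      · rw [norm_smul, hexp, mul_one, ENNReal.toReal_ofReal']
    rw [← sub_eq_zero, ← integral_sub (i1 h hi) (i1 (fun t => -h t) hi.neg)]
    rw [← fourier_eq_zero hh h0 s]
    refine integral_congr_ae (ae_of_all _ fun t => ?_)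
    simp only [ENNReal.toReal_ofReal']
    rw [← sub_smul, Complex.real_smul]
    congr 2
    have := max_zero_sub_eq_self (h t)
    rw [← this]; simp
  rw [withDensity_eq_iff (by fun_prop) (by fun_prop) ?_] at e
  · filter_upwards [e] with t ht
    rcases le_total 0 (h t) with h1 | h1
    · rw [ENNReal.ofReal_of_nonpos (by linarith : -h t ≤ 0), ENNReal.ofReal_eq_zero] at ht
      simp; linarith
    · rw [ENNReal.ofReal_of_nonpos h1, eq_comm, ENNReal.ofReal_eq_zero] at ht
      simp; linarith
  · exact hi.lintegral_lt_top.ne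

lemma memLp_Hq (q : ℕ) : MemLp (Hq q) 2 (gaussianReal 0 1) := (allLp_std.Hq q).two

/-- Completeness of the Hermite polynomials: by the recurrence `Hq_succ`, orthogonality to all
Hermite polynomials passes to their products with powers of `t`, in particular to all monomials.
-/
lemma ae_zero_of_hermite {h : ℝ → ℝ} (hm : Measurable h) (hh : MemLp h 2 (gaussianReal 0 1))
    (h0 : ∀ q : ℕ, ∫ t, h t * Hq q t ∂(gaussianReal 0 1) = 0) :
    h =ᵐ[gaussianReal 0 1] 0 := by
  refine ae_zero_of_moments hm hh fun n => ?_
  have key : ∀ n q : ℕ, ∫ t, h t * (t ^ n * Hq q t) ∂(gaussianReal 0 1) = 0 := by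
    intro n
    have hi : ∀ n q : ℕ, Integrable (fun t => h t * (t ^ n * Hq q t)) (gaussianReal 0 1) :=
      fun n q => hh.integrable_mul ((allLp_std.pow n).mul (allLp_std.Hq q)).two
    induction n with
    | zero => simpa using h0
    | succ n ih =>
      intro q
      have e : ∀ t, h t * (t ^ (n + 1) * Hq q t) =
          h t * (t ^ n * Hq (q + 1) t) + q * (h t * (t ^ n * Hq (q - 1) t)) := fun t => by
        rw [Hq_succ]; ring
      simp only [e]
      rw [integral_add (hi _ _) ((hi _ _).const_mul _), integral_const_mul, ih, ih]; simp
  simpa [Hq_zero] using key n 0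

/-- The normalized Hermite polynomials as elements of `L²(γ)`. -/
def hermLp (q : ℕ) : Lp ℝ 2 (gaussianReal 0 1) :=
  ((Real.sqrt q.factorial)⁻¹ : ℝ) • (memLp_Hq q).toLp

lemma inner_toLp {f g : ℝ → ℝ} (hf : MemLp f 2 (gaussianReal 0 1))
    (hg : MemLp g 2 (gaussianReal 0 1)) :
    inner ℝ hf.toLp hg.toLp = ∫ t, f t * g t ∂(gaussianReal 0 1) := by
  rw [L2.inner_def]
  refine integral_congr_ae ?_
  filter_upwards [hf.coeFn_toLp, hg.coeFn_toLp] with t h1 h2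
  rw [h1, h2]; simp [mul_comm]

lemma inner_hermLp {f : ℝ → ℝ} (hf : MemLp f 2 (gaussianReal 0 1)) (q : ℕ) :
    inner ℝ (hermLp q) hf.toLp =
      (Real.sqrt q.factorial)⁻¹ * ∫ t, f t * Hq q t ∂(gaussianReal 0 1) := by
  rw [hermLp, real_inner_smul_left, inner_toLp]
  simp only [mul_comm]

lemma orthonormal_hermLp : Orthonormal ℝ hermLp := by
  rw [orthonormal_iff_ite]
  intro q r
  rw [hermLp, hermLp, real_inner_smul_left, real_inner_smul_right, inner_toLp, hermite_orth_std]
  split_ifs with h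
  · subst h
    have : Real.sqrt q.factorial ≠ 0 := by positivity
    have h2 := Real.mul_self_sqrt (Nat.cast_nonneg (α := ℝ) q.factorial)
    field_simp
    rw [sq]; exact h2.symm
  · simp

/-- The Hermite basis of `L²(γ)`. -/
def hermBasis : HilbertBasis ℕ ℝ (Lp ℝ 2 (gaussianReal 0 1)) :=
  HilbertBasis.mkOfOrthogonalEqBot orthonormal_hermLp (by
    rw [Submodule.eq_bot_iff]
    intro h hh
    have h1 : ∀ q, inner ℝ (hermLp q) h = 0 := fun q =>
      (Submodule.mem_orthogonal _ _).1 hh _ (Submodule.subset_span ⟨q, rfl⟩)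
    obtain ⟨k, hk, e⟩ := (Lp.memLp h).1
    have hk2 : MemLp k 2 (gaussianReal 0 1) := (memLp_congr_ae e).1 (Lp.memLp h)
    have e2 : h = hk2.toLp := by
      apply Lp.ext; exact e.trans hk2.coeFn_toLp.symm
    have z := ae_zero_of_hermite hk.measurable hk2 fun q => by
      have := h1 q
      rw [e2, inner_hermLp] at this
      rcases mul_eq_zero.1 this with h | h
      · exact absurd h (by positivity)
      · exact h
    rw [Lp.eq_zero_iff_ae_eq_zero]
    exact e.trans z)

/-- Truncated Hermite expansion. -/
def hermSum (f : ℝ → ℝ) (N : ℕ) (t : ℝ) : ℝ := ∑ q ∈ Finset.range N, hermCoeff f q * Hq q t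

lemma allLp_hermSum (f : ℝ → ℝ) (N : ℕ) : AllLp (gaussianReal 0 1) (hermSum f N) :=
  AllLp.sum fun q _ => (allLp_std.Hq q).const_mul _

/-- Hermite expansions converge in `L²(γ)`. -/
lemma tendsto_hermSum {f : ℝ → ℝ} (hf : MemLp f 2 (gaussianReal 0 1)) :
    Tendsto (fun N => ∫ t, (f t - hermSum f N t) ^ 2 ∂(gaussianReal 0 1)) atTop (nhds 0) := by
  have h := (hermBasis.hasSum_repr hf.toLp).tendsto_sum_nat
  rw [← tendsto_sub_nhds_zero_iff] at h
  have h2 := (h.norm).pow 2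
  simp only [norm_zero, ne_eq, OfNat.ofNat_ne_zero, not_false_eq_true, zero_pow] at h2
  refine h2.congr fun N => ?_
  have e : ∑ i ∈ Finset.range N, hermBasis.repr hf.toLp i • hermBasis i =
      (allLp_hermSum f N).two.toLp := by
    have : ∀ i, hermBasis.repr hf.toLp i • hermBasis i =
        (((allLp_std.Hq i).const_mul (hermCoeff f i))).two.toLp := by
      intro i
      rw [HilbertBasis.repr_apply_apply]
      simp only [hermBasis, HilbertBasis.coe_mkOfOrthogonalEqBot]
      rw [inner_hermLp, hermLp, smul_smul]
      change _ = (MemLp.const_mul (memLp_Hq i) _).toLp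
      rw [← MemLp.toLp_const_smul]
      · congr 1
        rw [hermCoeff]
        have h2 := Real.mul_self_sqrt (Nat.cast_nonneg (α := ℝ) i.factorial)
        have : Real.sqrt i.factorial ≠ 0 := by positivity
        rw [mul_right_comm, ← mul_inv, h2]
        rfl
    simp only [this]
    clear h h2
    induction N with
    | zero =>
      simp only [Finset.range_zero, Finset.sum_empty]
      symm
      rw [Lp.eq_zero_iff_ae_eq_zero]
      refine (MemLp.coeFn_toLp _).trans (ae_of_all _ fun t => by simp [hermSum])
    | succ N ih =>
      rw [Finset.sum_range_succ, ih, ← MemLp.toLp_add]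
      congr 1
      ext t; simp [hermSum, Finset.sum_range_succ]
  rw [e, ← MemLp.toLp_sub, ← real_inner_self_eq_norm_sq, inner_toLp]
  refine integral_congr_ae (ae_of_all _ fun t => ?_)
  simp only [Pi.sub_apply]; ring

lemma integral_mul_hermSum {f : ℝ → ℝ} (hf : MemLp f 2 (gaussianReal 0 1)) (N : ℕ) :
    ∫ t, f t * hermSum f N t ∂(gaussianReal 0 1) =
      ∑ q ∈ Finset.range N, (q.factorial : ℝ) * hermCoeff f q ^ 2 := by
  simp only [hermSum, Finset.mul_sum]
  rw [integral_finsetSum]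
  · refine Finset.sum_congr rfl fun q _ => ?_
    have e : ∀ t, f t * (hermCoeff f q * Hq q t) = hermCoeff f q * (f t * Hq q t) :=
      fun t => by ring
    simp only [e]
    rw [integral_const_mul, hermCoeff]
    have : (q.factorial : ℝ) ≠ 0 := by positivity
    field_simp
  · exact fun q _ => hf.integrable_mul ((allLp_std.Hq q).const_mul _).two

lemma integral_hermSum_mul {P : Measure Ω} {ι : Type*} [Fintype ι] {X : ι → Ω → ℝ} (hX : CG P X)
    {k l : ι} (hk : cov[X k, X k; P] = 1) (hl : cov[X l, X l; P] = 1) (f g : ℝ → ℝ) (N M : ℕ) :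
    ∫ ω, hermSum f N (X k ω) * hermSum g M (X l ω) ∂P =
      ∑ q ∈ Finset.range N, if q < M then
        (q.factorial : ℝ) * hermCoeff f q * hermCoeff g q * cov[X k, X l; P] ^ q else 0 := by
  have := hX.prob
  have hi : ∀ q r, Integrable (fun ω => hermCoeff f q * Hq q (X k ω) *
      (hermCoeff g r * Hq r (X l ω))) P := fun q r =>
    ((((hX.allLp k).Hq q).const_mul _).mul (((hX.allLp l).Hq r).const_mul _)).integrable
  simp only [hermSum, Finset.sum_mul_sum]
  rw [integral_finsetSum _ fun q _ => integrable_finsetSum _ fun r _ => hi q r]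
  refine Finset.sum_congr rfl fun q _ => ?_
  rw [integral_finsetSum _ fun r _ => hi q r]
  have e : ∀ r, ∫ ω, hermCoeff f q * Hq q (X k ω) * (hermCoeff g r * Hq r (X l ω)) ∂P =
      if q = r then
        (q.factorial : ℝ) * hermCoeff f q * hermCoeff g q * cov[X k, X l; P] ^ q else 0 := by
    intro r
    have e : ∀ ω, hermCoeff f q * Hq q (X k ω) * (hermCoeff g r * Hq r (X l ω)) =
      hermCoeff f q * hermCoeff g r * (Hq q (X k ω) * Hq r (X l ω)) := fun ω => by ring
    simp only [e]
    rw [integral_const_mul, hermite_orth hX hk hl]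
    split_ifs with h
    · subst h; ring
    · simp
  simp only [e, Finset.sum_ite_eq, Finset.mem_range]

lemma integral_hermSum_sq (f : ℝ → ℝ) (N : ℕ) :
    ∫ t, hermSum f N t ^ 2 ∂(gaussianReal 0 1) =
      ∑ q ∈ Finset.range N, (q.factorial : ℝ) * hermCoeff f q ^ 2 := by
  have := integral_hermSum_mul cg_std (k := ()) (l := ()) cov_std cov_std f f N N
  simp only [sq]
  rw [this]
  refine Finset.sum_congr rfl fun q hq => ?_
  rw [if_pos (Finset.mem_range.1 hq), cov_std]; ring

/-- Bessel inequality and the exact `L²(γ)` truncation error. -/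
lemma integral_sub_hermSum_sq {f : ℝ → ℝ} (hf : MemLp f 2 (gaussianReal 0 1)) (N : ℕ) :
    ∫ t, (f t - hermSum f N t) ^ 2 ∂(gaussianReal 0 1) =
      ∫ t, f t ^ 2 ∂(gaussianReal 0 1) -
        ∑ q ∈ Finset.range N, (q.factorial : ℝ) * hermCoeff f q ^ 2 := by
  have e : ∀ t, (f t - hermSum f N t) ^ 2 =
    f t ^ 2 - 2 * (f t * hermSum f N t) + hermSum f N t ^ 2 := fun t => by ring
  have i1 := hf.integrable_sq
  have i2 := (int_mul hf (allLp_hermSum f N).two).const_mul 2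
  have i3 := (allLp_hermSum f N).two.integrable_sq
  simp only [e]
  rw [integral_add (int_sub i1 i2) i3, integral_sub i1 i2]
  rw [integral_const_mul, integral_mul_hermSum hf, integral_hermSum_sq]; ring

lemma sum_hermCoeff_le {f : ℝ → ℝ} (hf : MemLp f 2 (gaussianReal 0 1)) (N : ℕ) :
    ∑ q ∈ Finset.range N, (q.factorial : ℝ) * hermCoeff f q ^ 2 ≤
      ∫ t, f t ^ 2 ∂(gaussianReal 0 1) := by
  have h := integral_sub_hermSum_sq hf N
  have : 0 ≤ ∫ t, (f t - hermSum f N t) ^ 2 ∂(gaussianReal 0 1) :=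
    integral_nonneg fun t => sq_nonneg _
  linarith

lemma CG.map_eq {P : Measure Ω} {ι : Type*} [Fintype ι] {X : ι → Ω → ℝ} (hX : CG P X)
    {k : ι} (hk : cov[X k, X k; P] = 1) : P.map (X k) = gaussianReal 0 1 := by
  have h := (hX.law.eval k).map_eq_gaussianReal
  rw [hX.mean k] at h
  rw [covariance_self (hX.law.eval k).aemeasurable] at hk
  rw [h, hk]; simp

lemma CG.memLp_comp {P : Measure Ω} {ι : Type*} [Fintype ι] {X : ι → Ω → ℝ} (hX : CG P X)
    {k : ι} (hk : cov[X k, X k; P] = 1) {f : ℝ → ℝ} {p : ℝ≥0∞} (hf : MemLp f p (gaussianReal 0 1)) :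
    MemLp (fun ω => f (X k ω)) p P := by
  rw [← hX.map_eq hk] at hf
  exact hf.comp_of_map (hX.law.eval k).aemeasurable

lemma CG.integral_comp {P : Measure Ω} {ι : Type*} [Fintype ι] {X : ι → Ω → ℝ} (hX : CG P X)
    {k : ι} (hk : cov[X k, X k; P] = 1) {f : ℝ → ℝ} (hf : Measurable f) :
    ∫ ω, f (X k ω) ∂P = ∫ t, f t ∂(gaussianReal 0 1) := by
  rw [← hX.map_eq hk, integral_map (hX.law.eval k).aemeasurable hf.aestronglyMeasurable]

lemma abs_integral_mul_le {P : Measure Ω} {f g : Ω → ℝ} (hf : MemLp f 2 P) (hg : MemLp g 2 P) :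
    |∫ ω, f ω * g ω ∂P| ≤ Real.sqrt (∫ ω, f ω ^ 2 ∂P) * Real.sqrt (∫ ω, g ω ^ 2 ∂P) := by
  have h := integral_mul_le_Lp_mul_Lq_of_nonneg (μ := P) (f := fun ω => |f ω|)
    (g := fun ω => |g ω|) Real.HolderConjugate.two_two (ae_of_all _ fun _ => abs_nonneg _)
    (ae_of_all _ fun _ => abs_nonneg _) (by simpa using memLp_abs hf) (by simpa using memLp_abs hg)
  refine (abs_integral_le_integral_abs).trans ?_
  simp only [abs_mul]
  simpa [Real.sqrt_eq_rpow] using h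

/-- **Gebelein's inequality** for jointly Gaussian standard variables. -/
lemma gebelein {P : Measure Ω} {ι : Type*} [Fintype ι] {X : ι → Ω → ℝ} (hX : CG P X)
    {k l : ι} (hk : cov[X k, X k; P] = 1) (hl : cov[X l, X l; P] = 1)
    (hc : |cov[X k, X l; P]| ≤ 1) {f g : ℝ → ℝ} (hfm : Measurable f) (hgm : Measurable g)
    (hf : MemLp f 2 (gaussianReal 0 1))
    (hg : MemLp g 2 (gaussianReal 0 1)) (h0 : ∫ t, f t ∂(gaussianReal 0 1) = 0) :
    |∫ ω, f (X k ω) * g (X l ω) ∂P| ≤ |cov[X k, X l; P]| *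
      (Real.sqrt (∫ t, f t ^ 2 ∂(gaussianReal 0 1)) *
        Real.sqrt (∫ t, g t ^ 2 ∂(gaussianReal 0 1))) := by
  set c := cov[X k, X l; P]
  set A := Real.sqrt (∫ t, f t ^ 2 ∂(gaussianReal 0 1))
  set B := Real.sqrt (∫ t, g t ^ 2 ∂(gaussianReal 0 1))
  have a0 : hermCoeff f 0 = 0 := by simp [hermCoeff, Hq_zero, h0]
  -- The constant term vanishes, so every term carries a factor `|c| ^ q ≤ |c|`.
  have hN : ∀ N, |∫ ω, hermSum f N (X k ω) * hermSum g N (X l ω) ∂P| ≤ |c| * (A * B) := by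
    intro N
    rw [integral_hermSum_mul hX hk hl]
    refine (Finset.abs_sum_le_sum_abs _ _).trans ?_
    have h1 : ∀ q ∈ Finset.range N, |if q < N then (q.factorial : ℝ) * hermCoeff f q *
        hermCoeff g q * c ^ q else 0| ≤ |c| * ((Real.sqrt q.factorial * |hermCoeff f q|) *
          (Real.sqrt q.factorial * |hermCoeff g q|)) := by
      intro q hq
      rw [if_pos (Finset.mem_range.1 hq)]
      have h2 := Real.mul_self_sqrt (Nat.cast_nonneg (α := ℝ) q.factorial)
      have e : |c| * ((Real.sqrt q.factorial * |hermCoeff f q|) *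
          (Real.sqrt q.factorial * |hermCoeff g q|)) =
          (q.factorial * |hermCoeff f q| * |hermCoeff g q|) * |c| := by
        nth_rewrite 3 [← h2]; ring
      rw [e]
      cases q with
      | zero => simp [a0]
      | succ q =>
        rw [abs_mul, abs_mul, abs_mul, Nat.abs_cast, abs_pow, pow_succ]
        have : |c| ^ q ≤ 1 := pow_le_one₀ (abs_nonneg _) hc
        have : |c| ^ q * |c| ≤ |c| := by nlinarith [abs_nonneg c]
        gcongr
    refine (Finset.sum_le_sum h1).trans ?_
    rw [← Finset.mul_sum]
    refine mul_le_mul_of_nonneg_left ?_ (abs_nonneg c)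
    refine (Real.sum_mul_le_sqrt_mul_sqrt _ _ _).trans ?_
    have e : ∀ (f : ℝ → ℝ) (q : ℕ), (Real.sqrt q.factorial * |hermCoeff f q|) ^ 2 =
      q.factorial * hermCoeff f q ^ 2 := fun f q => by
      rw [mul_pow, Real.sq_sqrt (by positivity), sq_abs]
    simp only [e]
    exact mul_le_mul (Real.sqrt_le_sqrt (sum_hermCoeff_le hf N))
      (Real.sqrt_le_sqrt (sum_hermCoeff_le hg N)) (Real.sqrt_nonneg _) (Real.sqrt_nonneg _)
  have hmS : ∀ (f : ℝ → ℝ) N, Measurable (hermSum f N) := fun f N =>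
    Finset.measurable_fun_sum _ fun q _ => (measurable_Hq q).const_mul _
  have hd : ∀ {f : ℝ → ℝ}, MemLp f 2 (gaussianReal 0 1) → Measurable f →
      ∀ N, MemLp (fun t => f t - hermSum f N t) 2 (gaussianReal 0 1) := fun hf _ N =>
    hf.sub (allLp_hermSum _ N).two
  -- the truncated covariances converge
  have lim : Tendsto (fun N => ∫ ω, hermSum f N (X k ω) * hermSum g N (X l ω) ∂P) atTop
      (nhds (∫ ω, f (X k ω) * g (X l ω) ∂P)) := by
    rw [tendsto_iff_dist_tendsto_zero]
    have b1 := (tendsto_hermSum hf).sqrt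
    have b2 := (tendsto_hermSum hg).sqrt
    have b3 : Tendsto (fun N => Real.sqrt (∫ t, (f t - hermSum f N t) ^ 2 ∂(gaussianReal 0 1)) * B +
        A * Real.sqrt (∫ t, (g t - hermSum g N t) ^ 2 ∂(gaussianReal 0 1))) atTop (nhds 0) := by
      simpa using (b1.mul_const B).add (b2.const_mul A)
    refine squeeze_zero (fun _ => dist_nonneg) (fun N => ?_) b3
    have mf := hX.memLp_comp hk hf
    have mg := hX.memLp_comp hl hg
    have md := hX.memLp_comp hk (hd hf hfm N)
    have md' := hX.memLp_comp hl (hd hg hgm N)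
    have ms := hX.memLp_comp hk (allLp_hermSum f N).two
    have ms' := hX.memLp_comp hl (allLp_hermSum g N).two
    rw [Real.dist_eq, abs_sub_comm, ← integral_sub (int_mul mf mg) (int_mul ms ms')]
    have e : ∀ ω, f (X k ω) * g (X l ω) - hermSum f N (X k ω) * hermSum g N (X l ω) =
      (f (X k ω) - hermSum f N (X k ω)) * g (X l ω) +
        hermSum f N (X k ω) * (g (X l ω) - hermSum g N (X l ω)) := fun ω => by ring
    simp only [e]
    rw [integral_add (int_mul md mg) (int_mul ms md')]
    refine (abs_add_le _ _).trans (add_le_add ?_ ?_)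
    · refine (abs_integral_mul_le md mg).trans_eq ?_
      rw [hX.integral_comp hk (f := fun t => (f t - hermSum f N t) ^ 2)
        ((hfm.sub (hmS f N)).pow_const 2), hX.integral_comp hl (f := fun t => g t ^ 2)
        (hgm.pow_const 2)]
    · refine (abs_integral_mul_le ms md').trans ?_
      rw [hX.integral_comp hk (f := fun t => (hermSum f N t) ^ 2)
        ((hmS f N).pow_const 2), hX.integral_comp hl (f := fun t => (g t - hermSum g N t) ^ 2)
        ((hgm.sub (hmS g N)).pow_const 2), integral_hermSum_sq]
      exact mul_le_mul_of_nonneg_right (Real.sqrt_le_sqrt (sum_hermCoeff_le hf N))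
        (Real.sqrt_nonneg _)
  exact le_of_tendsto lim.abs (Eventually.of_forall hN)

/-! ### Hermite coefficients of the centered absolute power -/

/-- The constants `c_r` are the absolute moments of the standard Gaussian law. -/
lemma integral_abs_rpow_std {r : ℝ} (hr : 0 ≤ r) :
    ∫ t, |t| ^ r ∂(gaussianReal 0 1) = cconst r := by
  rw [integral_gaussianReal_eq_integral_smul (by norm_num)]
  have e : ∀ t : ℝ, gaussianPDFReal 0 1 t • |t| ^ r =
      (Real.sqrt (2 * Real.pi))⁻¹ * (|t| ^ r * Real.exp (-(1 / 2) * |t| ^ (2 : ℝ))) := fun t => by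
    have : |t| ^ (2 : ℝ) = t ^ 2 := by rw [Real.rpow_two, sq_abs]
    rw [this, gaussianPDFReal, smul_eq_mul]
    have : -(t - 0) ^ 2 / (2 * ((1 : ℝ≥0) : ℝ)) = -(1 / 2) * t ^ 2 := by push_cast; ring
    rw [this]; push_cast; rw [mul_one]; ring
  simp only [e]
  rw [integral_const_mul, integral_comp_abs
    (f := fun t => t ^ r * Real.exp (-(1 / 2) * t ^ (2 : ℝ))),
    integral_rpow_mul_exp_neg_mul_rpow (by norm_num) (by linarith) (by norm_num)]
  rw [cconst, Real.sqrt_mul (by norm_num)]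
  have h1 : (1 / 2 : ℝ) ^ (-(r + 1) / 2) = 2 ^ (r / 2) * Real.sqrt 2 := by
    rw [one_div, Real.inv_rpow (by norm_num), ← Real.rpow_neg (by norm_num), Real.sqrt_eq_rpow,
      ← Real.rpow_add (by norm_num)]
    congr 1; ring
  rw [h1]
  have : Real.sqrt 2 ≠ 0 := by positivity
  field_simp

/-- The centered power function `|t|^p - c_p`. -/
def fpow (p t : ℝ) : ℝ := |t| ^ p - cconst p

lemma measurable_fpow (p : ℝ) : Measurable (fpow p) := by unfold fpow; fun_prop

lemma allLp_fpow {P : Measure Ω} [IsFiniteMeasure P] {f : Ω → ℝ} (hf : AllLp P f) {p : ℝ}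
    (hp : 0 ≤ p) : AllLp P (fun ω => fpow p (f ω)) := (hf.rpow hp).sub (AllLp.const _)

lemma memLp_fpow {p : ℝ} (hp : 0 ≤ p) : MemLp (fpow p) 2 (gaussianReal 0 1) :=
  (allLp_fpow allLp_std hp).two

lemma integral_fpow_mul_even {p : ℝ} (hp : 0 ≤ p) (j : ℕ) :
    ∫ t, fpow p t * t ^ (2 * j) ∂(gaussianReal 0 1) =
      cconst (2 * (j : ℝ) + p) - cconst p * cconst (2 * (j : ℝ)) := by
  rw [← integral_abs_rpow_std (by positivity : 0 ≤ 2 * (j : ℝ) + p),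
    ← integral_abs_rpow_std (by positivity : 0 ≤ 2 * (j : ℝ)), ← integral_const_mul,
    ← integral_sub (allLp_std.rpow (by positivity)).integrable
      ((allLp_std.rpow (by positivity)).const_mul _).integrable]
  refine integral_congr_ae (ae_of_all _ fun t => ?_)
  have e : |t| ^ (2 * (j : ℝ)) = t ^ (2 * j) := by
    rw [← Nat.cast_ofNat (R := ℝ), ← Nat.cast_mul, Real.rpow_natCast, pow_mul, sq_abs, ← pow_mul]
  simp only [fpow]
  rw [Real.rpow_add_of_nonneg (abs_nonneg t) (by positivity) hp, e]; ring

lemma cconst_zero : cconst 0 = 1 := by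
  have := integral_abs_rpow_std (le_refl 0)
  simpa using this.symm

lemma integral_fpow {p : ℝ} (hp : 0 ≤ p) : ∫ t, fpow p t ∂(gaussianReal 0 1) = 0 := by
  have := integral_fpow_mul_even hp 0
  simpa [cconst_zero] using this

lemma Hq_neg (q : ℕ) (t : ℝ) : Hq q (-t) = (-1) ^ q * Hq q t := by
  induction q using Nat.strong_induction_on with
  | _ q ih =>
    cases q with
    | zero => simp [Hq_zero]
    | succ q =>
      rw [Hq_succ, Hq_succ, ih q (by omega)]
      cases q with
      | zero => simp
      | succ q => simp only [Nat.add_sub_cancel]; rw [ih q (by omega)]; ring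

lemma hermCoeff_fpow_odd (p : ℝ) {q : ℕ} (hq : Odd q) : hermCoeff (fpow p) q = 0 := by
  have h : ∫ t, fpow p t * Hq q t ∂(gaussianReal 0 1) =
      ∫ t, fpow p (-t) * Hq q (-t) ∂(gaussianReal 0 1) := by
    have e := gaussianReal_map_neg (μ := 0) (v := 1)
    rw [neg_zero] at e
    conv_lhs => rw [← e]
    rw [integral_map (by fun_prop)]
    exact ((measurable_fpow p).mul (measurable_Hq q)).aestronglyMeasurable
  have e : ∀ t, fpow p (-t) * Hq q (-t) = -(fpow p t * Hq q t) := fun t => by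
    rw [Hq_neg, hq.neg_one_pow, fpow, fpow, abs_neg]; ring
  simp only [e, integral_neg] at h
  have : ∫ t, fpow p t * Hq q t ∂(gaussianReal 0 1) = 0 := by linarith
  rw [hermCoeff, this, mul_zero]

lemma hermCoeff_fpow_zero {p : ℝ} (hp : 0 ≤ p) : hermCoeff (fpow p) 0 = 0 := by
  simp [hermCoeff, Hq_zero, integral_fpow hp]

lemma factorial_two_mul (r : ℕ) :
    (2 * r).factorial = 2 ^ r * r.factorial * (2 * r - 1).doubleFactorial := by
  cases r with
  | zero => simp
  | succ r =>
    have h1 := Nat.factorial_eq_mul_doubleFactorial (2 * r + 1)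
    have h2 := Nat.doubleFactorial_two_mul (r + 1)
    have e : 2 * (r + 1) = 2 * r + 1 + 1 := by ring
    rw [e, h1, ← e, h2]; simp [e]

/-- Explicit coefficients of the Hermite polynomials of even degree. -/
lemma Hq_even (q : ℕ) (t : ℝ) : Hq (2 * q) t = ∑ r ∈ Finset.range (q + 1),
    ((2 * q).factorial : ℝ) * ((-1 : ℝ) ^ r / ((2 : ℝ) ^ r * (Nat.factorial r : ℝ) *
      (Nat.factorial (2 * q - 2 * r) : ℝ))) * t ^ (2 * (q - r)) := by
  rw [Hq_eq, Polynomial.eval_eq_sum_range' (n := 2 * q + 1)]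
  · symm
    refine Finset.sum_of_injOn (fun r => 2 * (q - r)) ?_ ?_ ?_ ?_
    · intro a ha b hb h
      simp only [Finset.coe_range, Set.mem_Iio] at ha hb h; omega
    · intro a ha
      simp only [Finset.coe_range, Set.mem_Iio] at ha ⊢; omega
    · intro i hi hi2
      rw [Finset.mem_range] at hi
      have : Odd (2 * q + i) := by
        rcases Nat.even_or_odd' i with ⟨j, rfl | rfl⟩
        · exact absurd ⟨q - j, by simp, by dsimp only; omega⟩ hi2
        · exact ⟨q + j, by ring⟩
      simp [Polynomial.coeff_hermite_of_odd_add this]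
    · intro r hr
      rw [Finset.mem_range] at hr
      have e : 2 * q = 2 * r + 2 * (q - r) := by omega
      have h := Polynomial.coeff_hermite_explicit r (2 * (q - r))
      rw [← e] at h
      simp only [Polynomial.coeff_map, h]
      have h2 : 2 * q - 2 * r = 2 * (q - r) := by omega
      have h3 : (2 * q).factorial = (2 * q).choose (2 * (q - r)) * (2 * (q - r)).factorial *
          (2 * r).factorial := by
        rw [← Nat.choose_mul_factorial_mul_factorial (show 2 * (q - r) ≤ 2 * q by omega)]
        congr 2; omega
      rw [h2, h3, factorial_two_mul r]
      push_cast
      simp only [map_mul, map_pow, map_neg, map_one, map_natCast]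
      field_simp
  · refine lt_of_le_of_lt (Polynomial.natDegree_map_le) ?_
    simp [Polynomial.natDegree_hermite]

/-- The even Hermite coefficients of `|t| ^ p - c_p` are the numbers `a_{2q}`. -/
lemma hermCoeff_fpow_even {p : ℝ} (hp : 0 ≤ p) (q : ℕ) :
    hermCoeff (fpow p) (2 * q) = apow p q := by
  rw [hermCoeff, apow]
  simp only [Hq_even, Finset.mul_sum]
  rw [integral_finsetSum]
  · rw [Finset.mul_sum]
    refine Finset.sum_congr rfl fun r hr => ?_
    have hr : r ≤ q := by simpa [Nat.lt_succ_iff] using hr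
    set A := (-1 : ℝ) ^ r / ((2 : ℝ) ^ r * (Nat.factorial r : ℝ) *
      (Nat.factorial (2 * q - 2 * r) : ℝ))
    have e : ∀ t, fpow p t * (((2 * q).factorial : ℝ) * A * t ^ (2 * (q - r))) =
      ((2 * q).factorial : ℝ) * A * (fpow p t * t ^ (2 * (q - r))) := fun t => by ring
    simp only [e]
    rw [integral_const_mul, integral_fpow_mul_even hp, Nat.cast_sub hr]
    have : ((2 * q).factorial : ℝ) ≠ 0 := by positivity
    rw [mul_assoc, inv_mul_cancel_left₀ this, mul_sub (2 : ℝ)]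
  · exact fun r _ => int_mul (memLp_fpow hp) ((allLp_std.pow _).const_mul _).two

/-! ### Increments of fractional Brownian motion -/

lemma abs_rpow_sub_le {H : ℝ} (h0 : 0 < H) (h1 : H ≤ 1) (a b : ℝ) :
    |(|a| ^ H - |b| ^ H)| ≤ |a - b| ^ H := by
  have key : ∀ a b : ℝ, |a| ^ H ≤ |b| ^ H + |a - b| ^ H := fun a b => by
    have h2 : |a| ≤ |b| + |a - b| := by
      have := abs_add_le b (a - b); rwa [add_sub_cancel] at this
    refine (Real.rpow_le_rpow (abs_nonneg _) h2 h0.le).trans ?_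
    exact Real.rpow_add_le_add_rpow (abs_nonneg _) (abs_nonneg _) h0.le h1
  rw [abs_le]
  have k1 := key a b
  have k2 := key b a
  rw [abs_sub_comm] at k2
  constructor <;> linarith

/-- Covariance of the increments of fBm over `[s,t]` and `[s',t']`. -/
def incCov (ν s t s' t' : ℝ) : ℝ :=
  (|t - s'| ^ (2 * ν) + |s - t'| ^ (2 * ν) - |t - t'| ^ (2 * ν) - |s - s'| ^ (2 * ν)) / 2

lemma abs_incCov_le {ν : ℝ} (h0 : 0 < ν) (h1 : ν ≤ 1 / 2) (s t s' t' : ℝ) :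
    |incCov ν s t s' t'| ≤ |t' - s'| ^ (2 * ν) := by
  have e1 := abs_rpow_sub_le (H := 2 * ν) (by linarith) (by linarith) (t - s') (t - t')
  have e2 := abs_rpow_sub_le (H := 2 * ν) (by linarith) (by linarith) (s - t') (s - s')
  rw [show t - s' - (t - t') = t' - s' by ring] at e1
  rw [show s - t' - (s - s') = -(t' - s') by ring, abs_neg] at e2
  rw [incCov, abs_le]
  rw [abs_le] at e1 e2
  constructor <;> linarith [e1.1, e1.2, e2.1, e2.2]

lemma rho_zero {ν : ℝ} (h0 : 0 < ν) : rho ν 0 = 1 := by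
  have : (2 * ν) ≠ 0 := by positivity
  simp [rho, Real.zero_rpow this]

lemma rho_eq_incCov (ν : ℝ) (k l : ℤ) : rho ν (k - l) = incCov ν k (k + 1) l (l + 1) := by
  rw [rho, incCov]
  push_cast
  rw [show (k : ℝ) - l + 1 = k + 1 - l by ring, show (k : ℝ) - l - 1 = k - (l + 1) by ring,
    show (k : ℝ) + 1 - (l + 1) = k - l by ring]
  ring

lemma rho_neg (ν : ℝ) (k : ℤ) : rho ν (-k) = rho ν k := by
  rw [rho, rho]
  push_cast
  rw [← abs_neg (-(k : ℝ) + 1), ← abs_neg (-(k : ℝ) - 1), abs_neg (k : ℝ),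
    show -(-(k : ℝ) + 1) = k - 1 by ring, show -(-(k : ℝ) - 1) = k + 1 by ring]
  ring

lemma abs_rho_le {ν : ℝ} (h0 : 0 < ν) (h1 : ν ≤ 1 / 2) (k : ℤ) : |rho ν k| ≤ 1 := by
  have h := rho_eq_incCov ν k 0
  rw [sub_zero] at h
  rw [h]
  refine (abs_incCov_le h0 h1 _ _ _ _).trans ?_
  simp

/-- By concavity of `t ^ (2ν)` one has `ρ k ≤ 0` for `k ≥ 1`, so that the sum of `|ρ k|`
telescopes. -/
lemma summable_rho {ν : ℝ} (h0 : 0 < ν) (h1 : ν ≤ 1 / 2) : Summable (fun k : ℤ => |rho ν k|) := by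
  have hnat : Summable fun n : ℕ => |rho ν n| := by
    rw [← summable_nat_add_iff 1]
    have e : ∀ n : ℕ, |rho ν ((n + 1 : ℕ) : ℤ)| =
        ((n + 1 : ℝ) ^ (2 * ν) - (n : ℝ) ^ (2 * ν)) / 2 -
          ((n + 2 : ℝ) ^ (2 * ν) - (n + 1 : ℝ) ^ (2 * ν)) / 2 := by
      intro n
      have e : rho ν ((n + 1 : ℕ) : ℤ) = ((n + 2 : ℝ) ^ (2 * ν) - (n + 1 : ℝ) ^ (2 * ν)) / 2 -
          ((n + 1 : ℝ) ^ (2 * ν) - (n : ℝ) ^ (2 * ν)) / 2 := by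
        rw [rho]; push_cast
        rw [show (n : ℝ) + 1 + 1 = n + 2 by ring, show (n : ℝ) + 1 - 1 = n by ring,
          abs_of_nonneg (by positivity), abs_of_nonneg (by positivity),
          abs_of_nonneg (by positivity)]
        ring
      rw [e, abs_of_nonpos]
      · ring
      · have hcc : ConcaveOn ℝ (Set.Ici 0) fun x : ℝ => x ^ (2 * ν) :=
          Real.concaveOn_rpow (by linarith) (by linarith)
        have hc := @hcc.2 (n : ℝ) (by simp) ((n : ℝ) + 2) (by simp; positivity)
          (1 / 2) (1 / 2) (by norm_num) (by norm_num) (by norm_num)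
        simp only [smul_eq_mul] at hc
        rw [show (1 / 2 : ℝ) * n + 1 / 2 * (n + 2) = n + 1 by ring] at hc
        linarith
    -- The partial sums telescope.
    refine summable_of_sum_range_le (c := 1 / 2) (fun _ => abs_nonneg _) fun N => ?_
    simp only [e]
    have := Finset.sum_range_sub' (fun n : ℕ => ((n + 1 : ℝ) ^ (2 * ν) - (n : ℝ) ^ (2 * ν)) / 2) N
    have e2 : ∀ n : ℕ, (n : ℝ) + 1 + 1 = n + 2 := fun n => by ring
    push_cast at this
    simp only [e2] at this
    rw [this]
    have h3 : (N : ℝ) ^ (2 * ν) ≤ ((N : ℝ) + 1) ^ (2 * ν) :=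
      Real.rpow_le_rpow (by positivity) (by linarith) (by linarith)
    rw [Real.zero_rpow (by positivity)]
    simp
    linarith
  rw [summable_int_iff_summable_nat_and_neg]
  refine ⟨hnat, ?_⟩
  simpa only [rho_neg] using hnat

/-- `∑_{k∈ℤ} |ρ(k)|`. -/
def rhoSum (ν : ℝ) : ℝ := ∑' k : ℤ, |rho ν k|

lemma rhoSum_nonneg (ν : ℝ) : 0 ≤ rhoSum ν := tsum_nonneg fun _ => abs_nonneg _

lemma sum_rho_le {ν : ℝ} (h0 : 0 < ν) (h1 : ν ≤ 1 / 2) (k : ℕ) (s : Finset ℕ) :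
    ∑ l ∈ s, |rho ν ((k : ℤ) - l)| ≤ rhoSum ν := by
  have hinj : Function.Injective (fun l : ℕ => (k : ℤ) - l) := fun a b h => by simpa using h
  have := (summable_rho h0 h1).sum_le_tsum (s.map ⟨_, hinj⟩) (fun _ _ => abs_nonneg _)
  simpa [rhoSum] using this

section fbm
variable {P : Measure Ω} {ν : ℝ} {x : ℝ → Ω → ℝ}

lemma IsFBM.hasGaussianLaw (hx : IsFBM P ν x) {ι : Type*} [Fintype ι] (t : ι → ℝ)
    (ht : ∀ i, t i ∈ Set.Icc (0 : ℝ) 1) : HasGaussianLaw (fun ω i => x (t i) ω) P := by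
  have hm : Measurable (fun ω i => x (t i) ω) := measurable_pi_lambda _ fun i => hx.1 _
  refine ⟨isGaussian_of_map_eq_gaussianReal fun L => ?_⟩
  classical
  let e := Fintype.equivFin ι
  have h := hx.2.2 (Fintype.card ι) (fun j => t (e.symm j)) (fun j => ht _)
    (fun j => L (Pi.single (e.symm j) 1))
  have h2 : (P.map (fun ω i => x (t i) ω)).map L =
      P.map (fun ω => ∑ j, L (Pi.single (e.symm j) 1) * x (t (e.symm j)) ω) := by
    rw [Measure.map_map (by fun_prop) hm]
    congr 1
    ext ω
    simp only [Function.comp]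
    rw [Equiv.sum_comp e.symm (fun i => L (Pi.single i 1) * x (t i) ω)]
    have e1 : (fun i => x (t i) ω) = ∑ i, x (t i) ω • (Pi.single i (1 : ℝ) : ι → ℝ) := by
      ext i; simp [Finset.sum_apply, Pi.single_apply]
    rw [e1, map_sum]
    simp [mul_comm]
  exact ⟨_, _, h2.trans h⟩

lemma IsFBM.map_comb (hx : IsFBM P ν x) {s t : ℝ} (hs : s ∈ Set.Icc (0 : ℝ) 1)
    (ht : t ∈ Set.Icc (0 : ℝ) 1) (a b : ℝ) : P.map (fun ω => a * x s ω + b * x t ω) =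
      gaussianReal 0 (a * a * fbmCov ν s s + a * b * fbmCov ν s t +
        (b * a * fbmCov ν t s + b * b * fbmCov ν t t)).toNNReal := by
  have := hx.2.2 2 ![s, t] (by intro j; fin_cases j <;> simpa) ![a, b]
  simpa [Fin.sum_univ_two] using this

lemma var_of_map {X : Ω → ℝ} (hX : Measurable X) {v : ℝ} (hv : 0 ≤ v)
    (h : P.map X = gaussianReal 0 v.toNNReal) : Var[X; P] = v := by
  have := variance_map (X := id) (Y := X) (μ := P) aemeasurable_id hX.aemeasurable
  rw [h, variance_id_gaussianReal] at this
  simpa [hv] using this.symm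

lemma mean_of_map {X : Ω → ℝ} (hX : Measurable X) {v : ℝ≥0}
    (h : P.map X = gaussianReal 0 v) : ∫ ω, X ω ∂P = 0 := by
  have := integral_map (μ := P) hX.aemeasurable (f := fun t : ℝ => t) (by fun_prop)
  rw [h] at this
  rw [← this]; simp [integral_id_gaussianReal]

lemma fbmCov_self {s : ℝ} (h0 : 0 < ν) : fbmCov ν s s = s ^ (2 * ν) := by
  have : (2 * ν) ≠ 0 := by positivity
  simp [fbmCov, Real.zero_rpow this]

lemma IsFBM.mean (hx : IsFBM P ν x) {s : ℝ} (hs : s ∈ Set.Icc (0 : ℝ) 1) : ∫ ω, x s ω ∂P = 0 := by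
  have := hx.map_comb hs hs 1 0
  simp only [one_mul, zero_mul, add_zero] at this
  exact mean_of_map (hx.1 s) this

lemma IsFBM.memLp (hx : IsFBM P ν x) {s : ℝ} (hs : s ∈ Set.Icc (0 : ℝ) 1) : AllLp P (x s) := by
  have := hx.hasGaussianLaw (fun _ : Unit => s) (fun _ => hs)
  exact fun r => (this.eval ()).memLp (by simp)

lemma IsFBM.cov [IsProbabilityMeasure P] (h0 : 0 < ν) (hx : IsFBM P ν x) {s t : ℝ}
    (hs : s ∈ Set.Icc (0 : ℝ) 1)
    (ht : t ∈ Set.Icc (0 : ℝ) 1) : cov[x s, x t; P] = fbmCov ν s t := by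
  have v : ∀ {s : ℝ}, s ∈ Set.Icc (0 : ℝ) 1 → cov[x s, x s; P] = s ^ (2 * ν) := fun {s} hs => by
    rw [covariance_self (hx.1 s).aemeasurable]
    refine var_of_map (hx.1 s) (Real.rpow_nonneg hs.1 _) ?_
    have := hx.map_comb hs hs 1 0
    simpa [fbmCov_self h0] using this
  have v2 : cov[fun ω => x s ω - x t ω, fun ω => x s ω - x t ω; P] = |t - s| ^ (2 * ν) := by
    have hm : Measurable (fun ω => x s ω - x t ω) := (hx.1 s).sub (hx.1 t)
    rw [covariance_self hm.aemeasurable]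
    refine var_of_map hm (by positivity) ?_
    have := hx.map_comb hs ht 1 (-1)
    simp only [one_mul, neg_mul, ← sub_eq_add_neg, mul_one, neg_neg, fbmCov_self h0] at this
    rw [this]
    congr 2
    simp only [fbmCov]
    rw [abs_sub_comm s t]; ring
  rw [covariance_fun_sub_fun_sub (hx.memLp hs).two (hx.memLp ht).two (hx.memLp hs).two
    (hx.memLp ht).two, v hs, v ht, covariance_comm (x t) (x s)] at v2
  rw [fbmCov]; linarith

/-- Scaled increments of fBm form a centered Gaussian family. -/
lemma IsFBM.cg (hx : IsFBM P ν x) {ι : Type*} [Fintype ι] (c s t : ι → ℝ)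
    (hs : ∀ i, s i ∈ Set.Icc (0 : ℝ) 1) (ht : ∀ i, t i ∈ Set.Icc (0 : ℝ) 1) :
    CG P (fun i ω => c i * (x (t i) ω - x (s i) ω)) where
  law := by
    have h := hx.hasGaussianLaw (ι := ι ⊕ ι) (Sum.elim t s) (by rintro (i | i) <;> simp [*])
    exact h.map_fun (ContinuousLinearMap.pi fun i : ι =>
      c i • (ContinuousLinearMap.proj (R := ℝ) (φ := fun _ : ι ⊕ ι => ℝ) (Sum.inl i) -
        ContinuousLinearMap.proj (R := ℝ) (φ := fun _ : ι ⊕ ι => ℝ) (Sum.inr i)))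
  mean := fun i => by
    rw [integral_const_mul, integral_sub (hx.memLp (ht i)).integrable (hx.memLp (hs i)).integrable,
      hx.mean (ht i), hx.mean (hs i)]; simp

lemma IsFBM.cov_incr [IsProbabilityMeasure P] (h0 : 0 < ν) (hx : IsFBM P ν x) {s t s' t' : ℝ}
    (hs : s ∈ Set.Icc (0 : ℝ) 1) (ht : t ∈ Set.Icc (0 : ℝ) 1) (hs' : s' ∈ Set.Icc (0 : ℝ) 1)
    (ht' : t' ∈ Set.Icc (0 : ℝ) 1) (c c' : ℝ) :
    cov[fun ω => c * (x t ω - x s ω), fun ω => c' * (x t' ω - x s' ω); P] =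
      c * c' * incCov ν s t s' t' := by
  rw [covariance_const_mul_left, covariance_const_mul_right,
    covariance_fun_sub_fun_sub (hx.memLp ht).two (hx.memLp hs).two (hx.memLp ht').two
    (hx.memLp hs').two, hx.cov h0 ht ht', hx.cov h0 ht hs', hx.cov h0 hs ht', hx.cov h0 hs hs']
  simp only [fbmCov, incCov]
  rw [abs_sub_comm t' t, abs_sub_comm s' t, abs_sub_comm t' s, abs_sub_comm s' s]; ring

/-- Normalized increments of the path over the uniform partition. -/
def Zinc (x : ℝ → Ω → ℝ) (ν : ℝ) (n k : ℕ) (ω : Ω) : ℝ :=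
  (n : ℝ) ^ ν * (x (((k : ℝ) + 1) / n) ω - x ((k : ℝ) / n) ω)

lemma incCov_scale (ν : ℝ) {c : ℝ} (hc : 0 < c) (s t s' t' : ℝ) :
    c ^ (2 * ν) * incCov ν (s / c) (t / c) (s' / c) (t' / c) = incCov ν s t s' t' := by
  have e : ∀ a b : ℝ, c ^ (2 * ν) * |a / c - b / c| ^ (2 * ν) = |a - b| ^ (2 * ν) := fun a b => by
    rw [← sub_div, abs_div, abs_of_pos hc, Real.div_rpow (abs_nonneg _) hc.le]
    field_simp
  rw [incCov, incCov, ← e t s', ← e s t', ← e t t', ← e s s']; ring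

lemma grid_mem {n k : ℕ} (hk : k ≤ n) : (k : ℝ) / n ∈ Set.Icc (0 : ℝ) 1 :=
  ⟨by positivity, div_le_one_of_le₀ (by exact_mod_cast hk) (by positivity)⟩

lemma grid_mem' {n k : ℕ} (hk : k < n) : ((k : ℝ) + 1) / n ∈ Set.Icc (0 : ℝ) 1 := by
  have := grid_mem (n := n) (k := k + 1) hk
  simpa using this

lemma IsFBM.cov_Z [IsProbabilityMeasure P] (h0 : 0 < ν) (hx : IsFBM P ν x) {n k l : ℕ}
    (hk : k < n) (hl : l < n) : cov[Zinc x ν n k, Zinc x ν n l; P] = rho ν ((k : ℤ) - l) := by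
  have hn : (0 : ℝ) < n := by exact_mod_cast (by omega : 0 < n)
  have := hx.cov_incr h0 (grid_mem hk.le) (grid_mem' hk) (grid_mem hl.le) (grid_mem' hl)
    ((n : ℝ) ^ ν) ((n : ℝ) ^ ν)
  unfold Zinc
  rw [this, ← Real.rpow_add hn, ← two_mul, incCov_scale ν hn, rho_eq_incCov]
  push_cast; rfl

end fbm

/-! ### Integration by parts for characteristic functions -/

open Polynomial in
/-- Gaussian integration by parts against the characteristic functional of a sum of
polynomial functionals: `F = X G - G'` is the image of `G` under the adjoint of `d/dx`. -/
lemma ibp_char {P : Measure Ω} {ι : Type*} [Fintype ι] {X : ι → Ω → ℝ} (hX : CG P X)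
    {k : ι} (hk : cov[X k, X k; P] = 1) {F G : ℝ[X]} (hFG : F = Polynomial.X * G - derivative G)
    (γ : ι → ℝ) :
    ∫ ω, ((F.eval (X k ω) : ℝ) : ℂ) *
        Complex.exp (Complex.I * ((∑ l, γ l * F.eval (X l ω) : ℝ) : ℂ)) ∂P =
      Complex.I * ∫ ω, ((∑ l, γ l * cov[X k, X l; P] *
        (G.eval (X k ω) * (derivative F).eval (X l ω)) : ℝ) : ℂ) *
        Complex.exp (Complex.I * ((∑ l, γ l * F.eval (X l ω) : ℝ) : ℂ)) ∂P := by
  have := hX.prob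
  set E : (ι → ℝ) → ℂ := fun x => Complex.exp (Complex.I * ((∑ l, γ l * F.eval (x l) : ℝ) : ℂ))
    with hE
  have hEc : Continuous E := by
    refine Complex.continuous_exp.comp (continuous_const.mul (Complex.continuous_ofReal.comp ?_))
    exact continuous_finsetSum _ fun l _ => continuous_const.mul
      (F.continuous.comp (continuous_apply l))
  have hEn : ∀ x, ‖E x‖ ≤ 1 := fun x => by
    rw [hE]; simp only
    rw [mul_comm, Complex.norm_exp_ofReal_mul_I]
  have hXm : AEStronglyMeasurable (fun ω i => X i ω) P := hX.law.aemeasurable.aestronglyMeasurable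
  have hEm : AEStronglyMeasurable (fun ω => E (fun i => X i ω)) P :=
    hEc.comp_aestronglyMeasurable hXm
  have intE : ∀ {a : Ω → ℝ}, AllLp P a → Integrable (fun ω => (a ω : ℂ) * E (fun i => X i ω)) P := by
    intro a ha
    exact (ha.integrable.ofReal (𝕜 := ℂ)).mul_bdd (c := 1) hEm (ae_of_all _ fun ω => hEn _)
  set L : (ι → ℝ) → ℝ := fun x => ∑ l, γ l * cov[X k, X l; P] *
        (G.eval (x k) * (derivative F).eval (x l)) with hL
  have hLc : Continuous L := by
    refine continuous_finsetSum _ fun l _ => continuous_const.mul ?_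
    exact (G.continuous.comp (continuous_apply k)).mul
      ((derivative F).continuous.comp (continuous_apply l))
  have hLi : AllLp P (fun ω => L (fun i => X i ω)) := by
    refine AllLp.sum fun l _ => AllLp.const_mul ?_ _
    exact ((hX.allLp k).polyEval G).mul ((hX.allLp l).polyEval _)
  have hG := (hX.allLp k).polyEval G
  have hG' := (hX.allLp k).polyEval (derivative G)
  have h := gauss_ibp hX.law hX.mean k (Φ := fun x => ((G.eval (x k) : ℝ) : ℂ) * E x)
    (D := fun x => (((derivative G).eval (x k) : ℝ) : ℂ) * E x + Complex.I * ((L x : ℂ) * E x))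
    (by
      have : Continuous fun x : ι → ℝ => G.eval (x k) := G.continuous.comp (continuous_apply k)
      exact (Continuous.mul (by fun_prop) hEc).measurable)
    (by
      have : Continuous fun x : ι → ℝ => (derivative G).eval (x k) :=
        (derivative G).continuous.comp (continuous_apply k)
      exact (Continuous.add (Continuous.mul (by fun_prop) hEc)
        (continuous_const.mul ((Complex.continuous_ofReal.comp hLc).mul hEc))).measurable)
    (fun x => by
      have d2 : ∀ l, HasDerivAt (fun t : ℝ => x l + t * cov[X k, X l; P]) (cov[X k, X l; P]) 0 := by
        intro l
        simpa using ((hasDerivAt_id (0 : ℝ)).mul_const (cov[X k, X l; P])).const_add (x l)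
      have e1 : ∀ (Q : ℝ[X]) l, HasDerivAt (fun t : ℝ => Q.eval (x l + t * cov[X k, X l; P]))
          ((derivative Q).eval (x l) * cov[X k, X l; P]) 0 := by
        intro Q l
        exact HasDerivAt.comp (0 : ℝ) (h₂ := fun t => Q.eval t)
          (by simpa using Q.hasDerivAt (x l)) (d2 l)
      have e2 : HasDerivAt (fun t : ℝ => ∑ l, γ l * F.eval (x l + t * cov[X k, X l; P]))
          (∑ l, γ l * ((derivative F).eval (x l) * cov[X k, X l; P])) 0 :=
        HasDerivAt.fun_sum fun l _ => (e1 F l).const_mul _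
      have e3 := ((e2.ofReal_comp).const_mul Complex.I).cexp
      refine ((e1 G k).ofReal_comp.mul e3).congr_deriv ?_
      simp only [hE, hL, hk, zero_mul, add_zero, mul_one]
      have : (∑ l, γ l * cov[X k, X l; P] * (G.eval (x k) * (derivative F).eval (x l))) =
        G.eval (x k) * ∑ l, γ l * ((derivative F).eval (x l) * cov[X k, X l; P]) := by
        rw [Finset.mul_sum]; exact Finset.sum_congr rfl fun l _ => by ring
      rw [this]
      push_cast
      ring)
    (intE hG)
    ((intE ((hX.allLp k).mul hG)).congr (ae_of_all _ fun ω => by simp only; push_cast; ring))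
    ((intE hG').add ((intE hLi).const_mul _))
  rw [integral_add (intE hG') ((intE hLi).const_mul _), integral_const_mul] at h
  have e : ∀ ω, ((F.eval (X k ω) : ℝ) : ℂ) * E (fun i => X i ω) =
      (X k ω : ℂ) * (((G.eval (X k ω) : ℝ) : ℂ) * E (fun i => X i ω)) -
        (((derivative G).eval (X k ω) : ℝ) : ℂ) * E (fun i => X i ω) := by
    intro ω; rw [hFG]; simp only [eval_sub, eval_mul, eval_X]; push_cast; ring
  calc _ = ∫ ω, ((F.eval (X k ω) : ℝ) : ℂ) * E (fun i => X i ω) ∂P := rfl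
    _ = _ := by
      simp only [e]
      rw [integral_sub ((intE ((hX.allLp k).mul hG)).congr
        (ae_of_all _ fun ω => by simp only; push_cast; ring)) (intE hG'), h]
      simp only [add_sub_cancel_left]
      rfl

open Polynomial in
/-- Integration by parts for `F = X G - G'` in one coordinate against a polynomial in another
one: a single covariance factor appears. -/
lemma ibp_mul {P : Measure Ω} {ι : Type*} [Fintype ι] {X : ι → Ω → ℝ} (hX : CG P X)
    {k : ι} (hk : cov[X k, X k; P] = 1) (l : ι) {F G : ℝ[X]}
    (hFG : F = Polynomial.X * G - derivative G) (Q : ℝ[X]) :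
    ∫ ω, F.eval (X k ω) * Q.eval (X l ω) ∂P =
      cov[X k, X l; P] * ∫ ω, G.eval (X k ω) * (derivative Q).eval (X l ω) ∂P := by
  have := hX.prob
  have hG := (hX.allLp k).polyEval G
  have hG' := (hX.allLp k).polyEval (derivative G)
  have hQ := (hX.allLp l).polyEval Q
  have hQ' := (hX.allLp l).polyEval (derivative Q)
  have cc : ∀ (Q : ℝ[X]) l, Continuous fun x : ι → ℝ => Q.eval (x l) := fun Q l =>
    Q.continuous.comp (continuous_apply l)
  have h := hX.ibp k (Φ := fun x => G.eval (x k) * Q.eval (x l))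
    (D := fun x => (derivative G).eval (x k) * Q.eval (x l) + cov[X k, X l; P] *
      (G.eval (x k) * (derivative Q).eval (x l)))
    ((cc _ _).mul (cc _ _)).measurable
    (((cc _ _).mul (cc _ _)).add (continuous_const.mul ((cc _ _).mul (cc _ _)))).measurable
    (fun x => by
      have d2 : ∀ l, HasDerivAt (fun t : ℝ => x l + t * cov[X k, X l; P]) (cov[X k, X l; P]) 0 := by
        intro l
        simpa using ((hasDerivAt_id (0 : ℝ)).mul_const (cov[X k, X l; P])).const_add (x l)
      have e1 : ∀ (Q : ℝ[X]) l, HasDerivAt (fun t : ℝ => Q.eval (x l + t * cov[X k, X l; P]))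
          ((derivative Q).eval (x l) * cov[X k, X l; P]) 0 := by
        intro Q l
        exact HasDerivAt.comp (0 : ℝ) (h₂ := fun t => Q.eval t)
          (by simpa using Q.hasDerivAt (x l)) (d2 l)
      refine ((e1 G k).mul (e1 Q l)).congr_deriv ?_
      simp only [zero_mul, add_zero, hk]; ring)
    (hG.mul hQ) ((hG'.mul hQ).add ((hG.mul hQ').const_mul _))
  rw [integral_add (hG'.mul hQ).integrable ((hG.mul hQ').const_mul _).integrable,
    integral_const_mul] at h
  have e : ∀ ω, F.eval (X k ω) * Q.eval (X l ω) = X k ω * (G.eval (X k ω) * Q.eval (X l ω)) -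
      (derivative G).eval (X k ω) * Q.eval (X l ω) := by
    intro ω; rw [hFG]; simp only [eval_sub, eval_mul, eval_X]; ring
  simp only [e]
  rw [integral_sub ((hX.allLp k).mul (hG.mul hQ)).integrable (hG'.mul hQ).integrable, h]
  ring

/-! ### A differential inequality for characteristic functions -/

open Polynomial in
/-- Quantitative characteristic function estimate obtained from Gaussian integration by parts. -/
lemma clt_ineq {P : Measure Ω} {ι : Type*} [Fintype ι] {X : ι → Ω → ℝ} (hX : CG P X)
    (hv : ∀ k, cov[X k, X k; P] = 1) {F G : ℝ[X]} (hFG : F = Polynomial.X * G - derivative G)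
    (α β : ι → ℝ) {s2 : ℝ} (hs : 0 ≤ s2) :
    ‖∫ ω, Complex.exp (Complex.I * ((∑ l, (β l + α l) * F.eval (X l ω) : ℝ) : ℂ)) ∂P -
      (∫ ω, Complex.exp (Complex.I * ((∑ l, β l * F.eval (X l ω) : ℝ) : ℂ)) ∂P) *
        ((Real.exp (-(s2 / 2)) : ℝ) : ℂ)‖ ≤
      ∫ ω, |∑ k, ∑ l, α k * α l * cov[X k, X l; P] *
          (G.eval (X k ω) * (derivative F).eval (X l ω)) - s2| ∂P +
      ∫ ω, |∑ k, ∑ l, α k * β l * cov[X k, X l; P] *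
          (G.eval (X k ω) * (derivative F).eval (X l ω))| ∂P := by
  have := hX.prob
  set A : Ω → ℝ := fun ω => ∑ l, β l * F.eval (X l ω) with hA
  set B : Ω → ℝ := fun ω => ∑ l, α l * F.eval (X l ω) with hB
  set Γ : Ω → ℝ := fun ω => ∑ k, ∑ l, α k * α l * cov[X k, X l; P] *
          (G.eval (X k ω) * (derivative F).eval (X l ω)) with hΓ
  set Λ : Ω → ℝ := fun ω => ∑ k, ∑ l, α k * β l * cov[X k, X l; P] *
          (G.eval (X k ω) * (derivative F).eval (X l ω)) with hΛ
  have pA : AllLp P A := AllLp.sum fun l _ => ((hX.allLp l).polyEval F).const_mul _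
  have pB : AllLp P B := AllLp.sum fun l _ => ((hX.allLp l).polyEval F).const_mul _
  have pΓ : AllLp P Γ := AllLp.sum fun k _ => AllLp.sum fun l _ =>
    (((hX.allLp k).polyEval G).mul ((hX.allLp l).polyEval _)).const_mul _
  have pΛ : AllLp P Λ := AllLp.sum fun k _ => AllLp.sum fun l _ =>
    (((hX.allLp k).polyEval G).mul ((hX.allLp l).polyEval _)).const_mul _
  set e : ℝ → Ω → ℂ := fun τ ω => Complex.exp (Complex.I * ((A ω + τ * B ω : ℝ) : ℂ)) with he
  have en : ∀ τ ω, ‖e τ ω‖ = 1 := fun τ ω => by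
    simp only [he]; rw [mul_comm, Complex.norm_exp_ofReal_mul_I]
  have em : ∀ τ, AEStronglyMeasurable (e τ) P := fun τ => by
    have h1 : AEStronglyMeasurable (fun ω => A ω + τ * B ω) P := (pA.add (pB.const_mul τ)).aesm
    exact (show Continuous fun r : ℝ => Complex.exp (Complex.I * (r : ℂ)) by
      fun_prop).comp_aestronglyMeasurable h1
  have ei : ∀ τ, Integrable (e τ) P := fun τ =>
    (integrable_const (1 : ℝ)).mono' (em τ) (ae_of_all _ fun ω => (en τ ω).le)
  have intE : ∀ τ {a : Ω → ℝ}, AllLp P a → Integrable (fun ω => (a ω : ℂ) * e τ ω) P := by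
    intro τ a ha
    exact (ha.integrable.ofReal (𝕜 := ℂ)).mul_bdd (c := 1) (em τ) (ae_of_all _ fun ω => (en τ ω).le)
  -- Interpolation `ψ τ = E exp (i (A + τ B))`.
  set ψ : ℝ → ℂ := fun τ => ∫ ω, e τ ω ∂P with hψ
  -- Integration by parts expresses the derivative of `ψ`.
  have key : ∀ τ, ∫ ω, (B ω : ℂ) * e τ ω ∂P =
      Complex.I * ∫ ω, ((Λ ω + τ * Γ ω : ℝ) : ℂ) * e τ ω ∂P := by
    intro τ
    have e1 : ∀ ω, e τ ω = Complex.exp (Complex.I *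
        ((∑ l, (β l + τ * α l) * F.eval (X l ω) : ℝ) : ℂ)) := by
      intro ω
      simp only [he, hA, hB, Finset.mul_sum, ← Finset.sum_add_distrib]
      congr 3
      exact Finset.sum_congr rfl fun l _ => by ring
    have e2 : ∀ ω, (B ω : ℂ) * e τ ω = ∑ k, (α k : ℂ) * (((F.eval (X k ω) : ℝ) : ℂ) * e τ ω) := by
      intro ω; simp only [hB]; push_cast; rw [Finset.sum_mul]
      exact Finset.sum_congr rfl fun l _ => by ring
    have e3 : ∀ ω, ((Λ ω + τ * Γ ω : ℝ) : ℂ) * e τ ω = ∑ k, (α k : ℂ) *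
        (((∑ l, (β l + τ * α l) * cov[X k, X l; P] *
        (G.eval (X k ω) * (derivative F).eval (X l ω)) : ℝ) : ℂ) * e τ ω) := by
      intro ω
      have : Λ ω + τ * Γ ω = ∑ k, α k * ∑ l, (β l + τ * α l) * cov[X k, X l; P] *
        (G.eval (X k ω) * (derivative F).eval (X l ω)) := by
        simp only [hΛ, hΓ, Finset.mul_sum, ← Finset.sum_add_distrib]
        exact Finset.sum_congr rfl fun k _ => Finset.sum_congr rfl fun l _ => by ring
      rw [this, Complex.ofReal_sum, Finset.sum_mul]
      exact Finset.sum_congr rfl fun k _ => by rw [Complex.ofReal_mul]; ring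
    simp only [e2, e3]
    rw [integral_finsetSum _ fun k _ => (intE τ ((hX.allLp k).polyEval F)).const_mul _,
      integral_finsetSum _ fun k _ => (intE τ (AllLp.sum fun l _ =>
        (((hX.allLp k).polyEval G).mul ((hX.allLp l).polyEval _)).const_mul _)).const_mul _,
      Finset.mul_sum]
    refine Finset.sum_congr rfl fun k _ => ?_
    rw [integral_const_mul, integral_const_mul]
    simp only [e1]
    rw [ibp_char hX (hv k) hFG]
    ring
  have dψ : ∀ τ, HasDerivAt ψ (Complex.I * ∫ ω, (B ω : ℂ) * e τ ω ∂P) τ := by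
    intro τ
    have h := hasDerivAt_integral_of_dominated_loc_of_deriv_le (μ := P) (F := e)
      (F' := fun τ ω => Complex.I * ((B ω : ℂ) * e τ ω)) (x₀ := τ) (s := Set.univ)
      (bound := fun ω => |B ω|) univ_mem (Eventually.of_forall em) (ei τ)
      ((intE τ pB).const_mul _).1
      (ae_of_all _ fun ω t _ => by
        rw [norm_mul, norm_mul, en, Complex.norm_I, Complex.norm_real]; simp)
      pB.abs.integrable
      (ae_of_all _ fun ω t _ => by
        have d1 : HasDerivAt (fun t : ℝ => A ω + t * B ω) (B ω) t := by
          simpa using ((hasDerivAt_id t).mul_const (B ω)).const_add (A ω)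
        have d2 := (d1.ofReal_comp.const_mul Complex.I).cexp
        refine d2.congr_deriv ?_
        simp only [he]; ring)
    have h2 := h.2
    rw [integral_const_mul] at h2
    exact h2
  set M : ℝ := ∫ ω, |Γ ω - s2| ∂P + ∫ ω, |Λ ω| ∂P with hM
  have iΓ : Integrable (fun ω => |Γ ω - s2|) P := (pΓ.sub (AllLp.const s2)).abs.integrable
  have iΛ : Integrable (fun ω => |Λ ω|) P := pΛ.abs.integrable
  have M0 : 0 ≤ M := add_nonneg (integral_nonneg fun _ => abs_nonneg _)
    (integral_nonneg fun _ => abs_nonneg _)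
  -- The integrating factor `exp (τ² s2 / 2)` cancels the main term `-τ s2 ψ` of the derivative.
  set φ : ℝ → ℂ := fun τ => ψ τ * ((Real.exp (τ ^ 2 * s2 / 2) : ℝ) : ℂ) with hφ
  have dφ : ∀ τ, HasDerivAt φ (-((Real.exp (τ ^ 2 * s2 / 2) : ℝ) : ℂ) *
      ∫ ω, ((Λ ω + τ * (Γ ω - s2) : ℝ) : ℂ) * e τ ω ∂P) τ := by
    intro τ
    have d1 : HasDerivAt (fun t : ℝ => Real.exp (t ^ 2 * s2 / 2))
        (Real.exp (τ ^ 2 * s2 / 2) * (τ * s2)) τ := by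
      have := (((hasDerivAt_pow 2 τ).mul_const s2).div_const 2).exp
      refine this.congr_deriv ?_
      simp; ring_nf
    refine ((dψ τ).mul d1.ofReal_comp).congr_deriv ?_
    rw [key]
    have e1 : ∀ ω, ((Λ ω + τ * (Γ ω - s2) : ℝ) : ℂ) * e τ ω =
      ((Λ ω + τ * Γ ω : ℝ) : ℂ) * e τ ω - ((τ * s2 : ℝ) : ℂ) * e τ ω := by
      intro ω; push_cast; ring
    simp only [e1]
    rw [integral_sub (intE τ (pΛ.add (pΓ.const_mul τ))) ((ei τ).const_mul _), integral_const_mul,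
      ← mul_assoc Complex.I, Complex.I_mul_I]
    push_cast
    ring
  have bound : ∀ τ ∈ Set.Ico (0 : ℝ) 1, ‖-((Real.exp (τ ^ 2 * s2 / 2) : ℝ) : ℂ) *
      ∫ ω, ((Λ ω + τ * (Γ ω - s2) : ℝ) : ℂ) * e τ ω ∂P‖ ≤ Real.exp (s2 / 2) * M := by
    intro τ hτ
    rw [norm_mul, norm_neg, Complex.norm_real, Real.norm_eq_abs, Real.abs_exp]
    refine mul_le_mul (Real.exp_le_exp.2 ?_) ?_ (norm_nonneg _) (Real.exp_pos _).le
    · have : τ ^ 2 ≤ 1 := by nlinarith [hτ.1, hτ.2]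
      nlinarith
    · refine (norm_integral_le_integral_norm _).trans ?_
      rw [hM, ← integral_add iΓ iΛ]
      refine integral_mono_of_nonneg (ae_of_all _ fun _ => norm_nonneg _) (iΓ.add iΛ)
        (ae_of_all _ fun ω => ?_)
      simp only [norm_mul, en, mul_one, Complex.norm_real, Real.norm_eq_abs]
      refine (abs_add_le _ _).trans ?_
      rw [add_comm, abs_mul, abs_of_nonneg hτ.1]
      gcongr
      exact mul_le_of_le_one_left (abs_nonneg _) hτ.2.le
  -- Mean value inequality on `[0, 1]`.
  have fin := norm_image_sub_le_of_norm_deriv_le_segment_01' (f := φ)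
    (fun τ _ => (dφ τ).hasDerivWithinAt) bound
  have f1 : φ 1 = ψ 1 * ((Real.exp (s2 / 2) : ℝ) : ℂ) := by simp [hφ]
  have f0 : φ 0 = ψ 0 := by simp [hφ]
  rw [f1, f0] at fin
  have e1 : ∫ ω, Complex.exp (Complex.I * ((∑ l, (β l + α l) * F.eval (X l ω) : ℝ) : ℂ)) ∂P = ψ 1 := by
    simp only [hψ, he, hA, hB, add_mul, Finset.sum_add_distrib, one_mul]
  have e0 : ∫ ω, Complex.exp (Complex.I * ((A ω : ℝ) : ℂ)) ∂P = ψ 0 := by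
    simp only [hψ, he, zero_mul, add_zero]
  rw [e1, e0]
  have e2 : ψ 1 - ψ 0 * ((Real.exp (-(s2 / 2)) : ℝ) : ℂ) =
      (ψ 1 * ((Real.exp (s2 / 2) : ℝ) : ℂ) - ψ 0) * ((Real.exp (-(s2 / 2)) : ℝ) : ℂ) := by
    have : ((Real.exp (s2 / 2) : ℝ) : ℂ) * ((Real.exp (-(s2 / 2)) : ℝ) : ℂ) = 1 := by
      rw [← Complex.ofReal_mul, ← Real.exp_add]; simp
    rw [sub_mul, mul_assoc, this, mul_one]
  rw [e2, norm_mul, Complex.norm_real, Real.norm_eq_abs, Real.abs_exp]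
  calc _ ≤ (Real.exp (s2 / 2) * M) * Real.exp (-(s2 / 2)) := by gcongr
    _ = M := by rw [mul_comm (Real.exp _) M, mul_assoc, ← Real.exp_add]; simp

/-! ### Covariances of polynomials in Gaussian variables -/

lemma CG.comp {P : Measure Ω} {ι κ : Type*} [Fintype ι] [Fintype κ] {X : ι → Ω → ℝ} (hX : CG P X)
    (j : κ → ι) : CG P (fun i => X (j i)) where
  law := by
    have := hX.law.map_fun (ContinuousLinearMap.pi fun i : κ =>
      ContinuousLinearMap.proj (R := ℝ) (φ := fun _ : ι => ℝ) (j i))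
    exact this
  mean := fun i => hX.mean _

lemma CG.cov_eq {P : Measure Ω} {ι : Type*} [Fintype ι] {X : ι → Ω → ℝ} (hX : CG P X) (k l : ι) :
    cov[X k, X l; P] = ∫ ω, X k ω * X l ω ∂P := by
  simp [covariance, hX.mean]

lemma CG.abs_cov_le_one {P : Measure Ω} {ι : Type*} [Fintype ι] {X : ι → Ω → ℝ} (hX : CG P X)
    {k l : ι} (hk : cov[X k, X k; P] = 1) (hl : cov[X l, X l; P] = 1) :
    |cov[X k, X l; P]| ≤ 1 := by
  rw [hX.cov_eq]
  refine (abs_integral_mul_le (hX.allLp k).two (hX.allLp l).two).trans ?_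
  rw [hX.cov_eq] at hk hl
  simp only [sq, hk, hl]; simp

/-- Absolute value bound for mixed moments of standard Gaussian variables. -/
lemma mom_le {P : Measure Ω} {X : Fin 4 → Ω → ℝ} (hX : CG P X)
    (hv : ∀ k, cov[X k, X k; P] = 1) (a b c d : ℕ) :
    |∫ ω, X 0 ω ^ a * X 1 ω ^ b * X 2 ω ^ c * X 3 ω ^ d ∂P| ≤
      ∫ t, (t ^ (4 * a) + t ^ (4 * b) + t ^ (4 * c) + t ^ (4 * d)) ∂(gaussianReal 0 1) := by
  have := hX.prob
  have i0 : ∀ r, Integrable (fun t : ℝ => t ^ r) (gaussianReal 0 1) := fun r =>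
    (allLp_std.pow r).integrable
  have i1 : ∀ k r, Integrable (fun ω => X k ω ^ r) P := fun k r => ((hX.allLp k).pow r).integrable
  have e : ∀ k r, ∫ t, t ^ r ∂(gaussianReal 0 1) = ∫ ω, X k ω ^ r ∂P := fun k r =>
    (hX.integral_comp (hv k) (f := fun t => t ^ r) (by fun_prop)).symm
  rw [integral_add (int_add (int_add (i0 _) (i0 _)) (i0 _)) (i0 _), integral_add (int_add (i0 _) (i0 _)) (i0 _),
    integral_add (i0 _) (i0 _), e 0, e 1, e 2, e 3, ← integral_add (i1 _ _) (i1 _ _),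
    ← integral_add (int_add (i1 _ _) (i1 _ _)) (i1 _ _),
    ← integral_add (int_add (int_add (i1 _ _) (i1 _ _)) (i1 _ _)) (i1 _ _)]
  refine abs_integral_le_integral_abs.trans (integral_mono_of_nonneg
    (ae_of_all _ fun _ => abs_nonneg _)
    (int_add (int_add (int_add (i1 _ _) (i1 _ _)) (i1 _ _)) (i1 _ _)) (ae_of_all _ fun ω => ?_))
  simp only [abs_mul, pow_mul']
  generalize X 0 ω ^ a = u
  generalize X 1 ω ^ b = v
  generalize X 2 ω ^ c = w
  generalize X 3 ω ^ d = z
  have h4 : ∀ t : ℝ, t ^ 4 = |t| ^ 4 := fun t => by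
    rw [show 4 = 2 * 2 by rfl, pow_mul, pow_mul, sq_abs]
  rw [h4 u, h4 v, h4 w, h4 z]
  have := abs_nonneg u
  have := abs_nonneg v
  have := abs_nonneg w
  have := abs_nonneg z
  nlinarith [sq_nonneg (|u| * |v| - |w| * |z|), sq_nonneg (|u| ^ 2 - |v| ^ 2),
    sq_nonneg (|w| ^ 2 - |z| ^ 2), sq_nonneg (|u| ^ 2), sq_nonneg (|v| ^ 2), sq_nonneg (|w| ^ 2),
    sq_nonneg (|z| ^ 2), sq_nonneg (|u| * |v| + |w| * |z|)]

/-- Gaussian integration by parts for mixed monomials in four variables. The truncated exponent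
`a - 1` is harmless, since its coefficient vanishes when `a = 0`. -/
lemma mono_ibp {P : Measure Ω} {X : Fin 4 → Ω → ℝ} (hX : CG P X) (a b c d : ℕ) :
    ∫ ω, X 0 ω ^ (a + 1) * X 1 ω ^ b * X 2 ω ^ c * X 3 ω ^ d ∂P =
      a * cov[X 0, X 0; P] * (∫ ω, X 0 ω ^ (a - 1) * X 1 ω ^ b * X 2 ω ^ c * X 3 ω ^ d ∂P) +
      b * cov[X 0, X 1; P] * (∫ ω, X 0 ω ^ a * X 1 ω ^ (b - 1) * X 2 ω ^ c * X 3 ω ^ d ∂P) +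
      c * cov[X 0, X 2; P] * (∫ ω, X 0 ω ^ a * X 1 ω ^ b * X 2 ω ^ (c - 1) * X 3 ω ^ d ∂P) +
      d * cov[X 0, X 3; P] * (∫ ω, X 0 ω ^ a * X 1 ω ^ b * X 2 ω ^ c * X 3 ω ^ (d - 1) ∂P) := by
  have := hX.prob
  have p : ∀ a b c d, AllLp P (fun ω => X 0 ω ^ a * X 1 ω ^ b * X 2 ω ^ c * X 3 ω ^ d) :=
    fun a b c d => ((((hX.allLp 0).pow a).mul ((hX.allLp 1).pow b)).mul ((hX.allLp 2).pow c)).mul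
      ((hX.allLp 3).pow d)
  have h := hX.ibp 0 (Φ := fun x => x 0 ^ a * x 1 ^ b * x 2 ^ c * x 3 ^ d)
    (D := fun x => a * cov[X 0, X 0; P] * (x 0 ^ (a - 1) * x 1 ^ b * x 2 ^ c * x 3 ^ d) +
      b * cov[X 0, X 1; P] * (x 0 ^ a * x 1 ^ (b - 1) * x 2 ^ c * x 3 ^ d) +
      c * cov[X 0, X 2; P] * (x 0 ^ a * x 1 ^ b * x 2 ^ (c - 1) * x 3 ^ d) +
      d * cov[X 0, X 3; P] * (x 0 ^ a * x 1 ^ b * x 2 ^ c * x 3 ^ (d - 1)))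
    (by fun_prop) (by fun_prop)
    (fun x => by
      have d2 : ∀ l (r : ℕ), HasDerivAt (fun t : ℝ => (x l + t * cov[X 0, X l; P]) ^ r)
          (r * x l ^ (r - 1) * cov[X 0, X l; P]) 0 := by
        intro l r
        have := (((hasDerivAt_id (0 : ℝ)).mul_const (cov[X 0, X l; P])).const_add (x l)).fun_pow r
        simpa using this
      refine ((((d2 0 a).mul (d2 1 b)).mul (d2 2 c)).mul (d2 3 d)).congr_deriv ?_
      simp only [zero_mul, add_zero, Pi.mul_apply]; ring)
    (p _ _ _ _)
    (((((p _ _ _ _).const_mul _).add ((p _ _ _ _).const_mul _)).add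
      ((p _ _ _ _).const_mul _)).add ((p _ _ _ _).const_mul _))
  rw [integral_add ((((p _ _ _ _).const_mul _).add ((p _ _ _ _).const_mul _)).add
      ((p _ _ _ _).const_mul _)).integrable ((p _ _ _ _).const_mul _).integrable,
    integral_add (((p _ _ _ _).const_mul _).add ((p _ _ _ _).const_mul _)).integrable
      ((p _ _ _ _).const_mul _).integrable,
    integral_add ((p _ _ _ _).const_mul _).integrable ((p _ _ _ _).const_mul _).integrable,
    integral_const_mul, integral_const_mul, integral_const_mul, integral_const_mul] at h
  rw [← h]
  congr 1; ext ω; ring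

/-- Covariance of two mixed monomials in standard Gaussians is controlled by the
cross covariances. -/
lemma mono_cov (P : Measure Ω) (s : ℕ) : ∀ a b c d : ℕ, a + b = s → ∃ K : ℝ, 0 ≤ K ∧
    ∀ X : Fin 4 → Ω → ℝ, CG P X → (∀ k, cov[X k, X k; P] = 1) →
    |∫ ω, X 0 ω ^ a * X 1 ω ^ b * X 2 ω ^ c * X 3 ω ^ d ∂P -
      (∫ ω, X 0 ω ^ a * X 1 ω ^ b ∂P) * (∫ ω, X 2 ω ^ c * X 3 ω ^ d ∂P)| ≤
    K * (|cov[X 0, X 2; P]| + |cov[X 0, X 3; P]| + |cov[X 1, X 2; P]| + |cov[X 1, X 3; P]|) := by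
  induction s using Nat.strong_induction_on with
  | _ s ih =>
  have main : ∀ a b c d : ℕ, a + 1 + b = s → ∃ K : ℝ, 0 ≤ K ∧
    ∀ X : Fin 4 → Ω → ℝ, CG P X → (∀ k, cov[X k, X k; P] = 1) →
    |∫ ω, X 0 ω ^ (a + 1) * X 1 ω ^ b * X 2 ω ^ c * X 3 ω ^ d ∂P -
      (∫ ω, X 0 ω ^ (a + 1) * X 1 ω ^ b ∂P) * (∫ ω, X 2 ω ^ c * X 3 ω ^ d ∂P)| ≤
    K * (|cov[X 0, X 2; P]| + |cov[X 0, X 3; P]| + |cov[X 1, X 2; P]| + |cov[X 1, X 3; P]|) := by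
    intro a b c d hs
    obtain ⟨K1, k1, h1⟩ := ih (a - 1 + b) (by omega) (a - 1) b c d rfl
    obtain ⟨K2, k2, h2⟩ := ih (a + (b - 1)) (by omega) a (b - 1) c d rfl
    set M : ℕ → ℕ → ℕ → ℕ → ℝ := fun a b c d =>
      ∫ t, (t ^ (4 * a) + t ^ (4 * b) + t ^ (4 * c) + t ^ (4 * d)) ∂(gaussianReal 0 1) with hM
    have M0 : ∀ a b c d, 0 ≤ M a b c d := fun a b c d => integral_nonneg fun t => by
      simp only [pow_mul]; positivity
    refine ⟨a * K1 + b * K2 + c * M a b (c - 1) d + d * M a b c (d - 1), ?_, fun X hX hv => ?_⟩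
    · have := M0 a b (c - 1) d
      have := M0 a b c (d - 1)
      positivity
    · have e1 := mono_ibp hX a b c d
      have e2 := mono_ibp hX a b 0 0
      have m1 := mom_le hX hv a b (c - 1) d
      have m2 := mom_le hX hv a b c (d - 1)
      have n1 := h1 X hX hv
      have n2 := h2 X hX hv
      have c01 := hX.abs_cov_le_one (hv 0) (hv 1)
      simp only [pow_zero, mul_one, Nat.cast_zero, zero_mul, add_zero] at e2
      rw [e1, e2, hv]
      generalize (∫ ω, X 0 ω ^ (a - 1) * X 1 ω ^ b * X 2 ω ^ c * X 3 ω ^ d ∂P) = A1 at *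
      generalize (∫ ω, X 0 ω ^ a * X 1 ω ^ (b - 1) * X 2 ω ^ c * X 3 ω ^ d ∂P) = A2 at *
      generalize (∫ ω, X 0 ω ^ a * X 1 ω ^ b * X 2 ω ^ (c - 1) * X 3 ω ^ d ∂P) = A3 at *
      generalize (∫ ω, X 0 ω ^ a * X 1 ω ^ b * X 2 ω ^ c * X 3 ω ^ (d - 1) ∂P) = A4 at *
      generalize (∫ ω, X 0 ω ^ (a - 1) * X 1 ω ^ b ∂P) = B1 at *
      generalize (∫ ω, X 0 ω ^ a * X 1 ω ^ (b - 1) ∂P) = B2 at *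
      generalize (∫ ω, X 2 ω ^ c * X 3 ω ^ d ∂P) = V at *
      change |A3| ≤ M a b (c - 1) d at m1
      change |A4| ≤ M a b c (d - 1) at m2
      generalize M a b (c - 1) d = M1 at *
      generalize M a b c (d - 1) = M2 at *
      set S := |cov[X 0, X 2; P]| + |cov[X 0, X 3; P]| + |cov[X 1, X 2; P]| + |cov[X 1, X 3; P]|
        with hS
      have s2 : |cov[X 0, X 2; P]| ≤ S := by
        rw [hS]; linarith [abs_nonneg cov[X 0, X 3; P], abs_nonneg cov[X 1, X 2; P],
          abs_nonneg cov[X 1, X 3; P]]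
      have s3 : |cov[X 0, X 3; P]| ≤ S := by
        rw [hS]; linarith [abs_nonneg cov[X 0, X 2; P], abs_nonneg cov[X 1, X 2; P],
          abs_nonneg cov[X 1, X 3; P]]
      have S0 : 0 ≤ S := (abs_nonneg _).trans s2
      have : (a : ℝ) * 1 * A1 + b * cov[X 0, X 1; P] * A2 + c * cov[X 0, X 2; P] * A3 +
          d * cov[X 0, X 3; P] * A4 - (a * 1 * B1 + b * cov[X 0, X 1; P] * B2) * V =
          a * (A1 - B1 * V) + b * (cov[X 0, X 1; P] * (A2 - B2 * V)) + c * (cov[X 0, X 2; P] * A3) +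
          d * (cov[X 0, X 3; P] * A4) := by ring
      rw [this]
      refine (abs_add_le _ _).trans ?_
      refine (add_le_add_left ((abs_add_le _ _).trans (add_le_add_left (abs_add_le _ _) _)) _).trans ?_
      simp only [abs_mul, Nat.abs_cast]
      have t2 : |cov[X 0, X 1; P]| * |A2 - B2 * V| ≤ 1 * (K2 * S) := by gcongr
      have t3 : |cov[X 0, X 2; P]| * |A3| ≤ S * M1 := by gcongr
      have t4 : |cov[X 0, X 3; P]| * |A4| ≤ S * M2 := by gcongr
      calc _ ≤ (a : ℝ) * (K1 * S) + b * (1 * (K2 * S)) + c * (S * M1) + d * (S * M2) := by gcongr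
        _ = _ := by ring
  intro a b c d hs
  rcases a with _ | a
  · rcases b with _ | b
    · refine ⟨0, le_rfl, fun X hX hv => ?_⟩
      have := hX.prob
      simp
    · obtain ⟨K, k0, h⟩ := main b 0 c d (by omega)
      refine ⟨K, k0, fun X hX hv => ?_⟩
      have := h (fun i => X (Equiv.swap 0 1 i)) (hX.comp _) (fun k => hv _)
      simp only [Equiv.swap_apply_left, Equiv.swap_apply_right,
        show Equiv.swap (0 : Fin 4) 1 2 = 2 by decide,
        show Equiv.swap (0 : Fin 4) 1 3 = 3 by decide] at this
      simp only [pow_zero, one_mul, mul_one] at this ⊢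
      linarith
  · exact main a b c d hs

/-- Second moment of a weighted sum with summable correlations. -/
lemma sq_sum_le {P : Measure Ω} {κ : Type*} {s : Finset κ} {Y : κ → Ω → ℝ} {a : κ → ℝ}
    {c : κ → κ → ℝ} {A R : ℝ} (hY : ∀ k ∈ s, MemLp (Y k) 2 P)
    (ha : ∀ k ∈ s, |a k| ≤ A) (hc : ∀ k ∈ s, ∀ l ∈ s, |∫ ω, Y k ω * Y l ω ∂P| ≤ c k l)
    (hR : ∀ k ∈ s, ∑ l ∈ s, c k l ≤ R) :
    ∫ ω, (∑ k ∈ s, a k * Y k ω) ^ 2 ∂P ≤ A ^ 2 * (s.card * R) := by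
  have e : ∀ ω, (∑ k ∈ s, a k * Y k ω) ^ 2 =
      ∑ k ∈ s, ∑ l ∈ s, (a k * a l) * (Y k ω * Y l ω) := by
    intro ω; rw [sq, Finset.sum_mul_sum]
    exact Finset.sum_congr rfl fun k _ => Finset.sum_congr rfl fun l _ => by ring
  have i1 : ∀ k ∈ s, ∀ l ∈ s, Integrable (fun ω => (a k * a l) * (Y k ω * Y l ω)) P :=
    fun k hk l hl => (int_mul (hY k hk) (hY l hl)).const_mul _
  simp only [e]
  rw [integral_finsetSum _ fun k hk => integrable_finsetSum _ fun l hl => i1 k hk l hl]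
  have : ∀ k ∈ s, ∫ ω, ∑ l ∈ s, (a k * a l) * (Y k ω * Y l ω) ∂P ≤ A ^ 2 * R := by
    intro k hk
    rw [integral_finsetSum _ fun l hl => i1 k hk l hl]
    have hA : 0 ≤ A := (abs_nonneg _).trans (ha k hk)
    calc _ ≤ ∑ l ∈ s, A ^ 2 * c k l := by
          refine Finset.sum_le_sum fun l hl => ?_
          rw [integral_const_mul]
          refine (le_abs_self _).trans ?_
          rw [abs_mul, abs_mul, sq]
          have := ha k hk
          have := ha l hl
          have := hc k hk l hl
          gcongr
      _ ≤ _ := by rw [← Finset.mul_sum]; exact mul_le_mul_of_nonneg_left (hR k hk) (sq_nonneg _)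
  calc _ ≤ ∑ k ∈ s, A ^ 2 * R := Finset.sum_le_sum this
    _ = _ := by rw [Finset.sum_const, nsmul_eq_mul]; ring

open Polynomial in
/-- Covariance bound for products of polynomials of standard Gaussian variables. -/
lemma poly_cov (P : Measure Ω) (G Q : ℝ[X]) : ∃ K : ℝ, 0 ≤ K ∧
    ∀ X : Fin 4 → Ω → ℝ, CG P X → (∀ k, cov[X k, X k; P] = 1) →
    |∫ ω, (G.eval (X 0 ω) * Q.eval (X 1 ω)) * (G.eval (X 2 ω) * Q.eval (X 3 ω)) ∂P -
      (∫ ω, G.eval (X 0 ω) * Q.eval (X 1 ω) ∂P) * (∫ ω, G.eval (X 2 ω) * Q.eval (X 3 ω) ∂P)| ≤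
    K * (|cov[X 0, X 2; P]| + |cov[X 0, X 3; P]| + |cov[X 1, X 2; P]| + |cov[X 1, X 3; P]|) := by
  choose! K k0 hK using fun a b c d => mono_cov P (a + b) a b c d rfl
  set I := Finset.range (G.natDegree + 1) ×ˢ Finset.range (Q.natDegree + 1) with hI
  set u : ℕ × ℕ → ℝ := fun p => G.coeff p.1 * Q.coeff p.2 with hu
  refine ⟨∑ p ∈ I, ∑ r ∈ I, |u p| * |u r| * K p.1 p.2 r.1 r.2, Finset.sum_nonneg fun p _ =>
    Finset.sum_nonneg fun r _ => mul_nonneg (by positivity) (k0 _ _ _ _), fun X hX hv => ?_⟩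
  have := hX.prob
  have e : ∀ s t : ℝ, G.eval s * Q.eval t = ∑ p ∈ I, u p * (s ^ p.1 * t ^ p.2) := by
    intro s t
    rw [eval_eq_sum_range, eval_eq_sum_range, Finset.sum_mul_sum, hI, Finset.sum_product]
    exact Finset.sum_congr rfl fun k _ => Finset.sum_congr rfl fun l _ => by simp only [hu]; ring
  have p2 : ∀ (k l : Fin 4) (a b : ℕ), AllLp P (fun ω => X k ω ^ a * X l ω ^ b) :=
    fun k l a b => ((hX.allLp k).pow a).mul ((hX.allLp l).pow b)
  have f1 : ∀ k l : Fin 4, ∫ ω, G.eval (X k ω) * Q.eval (X l ω) ∂P =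
      ∑ p ∈ I, u p * ∫ ω, X k ω ^ p.1 * X l ω ^ p.2 ∂P := by
    intro k l
    simp only [e]
    rw [integral_finsetSum _ fun p _ => ((p2 k l _ _).const_mul _).integrable]
    simp only [integral_const_mul]
  have f2 : ∫ ω, (G.eval (X 0 ω) * Q.eval (X 1 ω)) * (G.eval (X 2 ω) * Q.eval (X 3 ω)) ∂P =
      ∑ p ∈ I, ∑ r ∈ I, u p * u r *
        ∫ ω, X 0 ω ^ p.1 * X 1 ω ^ p.2 * X 2 ω ^ r.1 * X 3 ω ^ r.2 ∂P := by
    have e2 : ∀ ω, (G.eval (X 0 ω) * Q.eval (X 1 ω)) * (G.eval (X 2 ω) * Q.eval (X 3 ω)) =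
      ∑ p ∈ I, ∑ r ∈ I, u p * u r * (X 0 ω ^ p.1 * X 1 ω ^ p.2 * X 2 ω ^ r.1 * X 3 ω ^ r.2) := by
      intro ω
      rw [e, e, Finset.sum_mul_sum]
      exact Finset.sum_congr rfl fun k _ => Finset.sum_congr rfl fun l _ => by ring
    have p4 : ∀ a b c d, AllLp P (fun ω => X 0 ω ^ a * X 1 ω ^ b * X 2 ω ^ c * X 3 ω ^ d) :=
      fun a b c d => ((p2 0 1 a b).mul ((hX.allLp 2).pow c)).mul ((hX.allLp 3).pow d)
    simp only [e2]
    rw [integral_finsetSum _ fun p _ =>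
      (AllLp.sum fun r _ => (p4 _ _ _ _).const_mul _).integrable]
    refine Finset.sum_congr rfl fun p _ => ?_
    rw [integral_finsetSum _ fun r _ => ((p4 _ _ _ _).const_mul _).integrable]
    simp only [integral_const_mul]
  rw [f2, f1, f1, Finset.sum_mul_sum, ← Finset.sum_sub_distrib, Finset.sum_mul]
  refine (Finset.abs_sum_le_sum_abs _ _).trans (Finset.sum_le_sum fun p _ => ?_)
  rw [← Finset.sum_sub_distrib, Finset.sum_mul]
  refine (Finset.abs_sum_le_sum_abs _ _).trans (Finset.sum_le_sum fun r _ => ?_)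
  have h := hK p.1 p.2 r.1 r.2 X hX hv
  rw [show ∀ A B C : ℝ, u p * u r * A - u p * B * (u r * C) = u p * u r * (A - B * C) by
    intros; ring, abs_mul, abs_mul, mul_assoc (|u p| * |u r|)]
  gcongr

/-- Chain bound for a symmetric kernel with bounded row sums. -/
lemma chain_sum_le {ι : Type*} [Fintype ι] {c : ι → ι → ℝ} {R : ℝ} (h0 : ∀ k l, 0 ≤ c k l)
    (hs : ∀ k l, c k l = c l k) (hR : ∀ k, ∑ l, c k l ≤ R) :
    ∑ k, ∑ l, ∑ k', ∑ l', c k l * c k' l' * (c k k' + c k l' + c l k' + c l l') ≤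
      4 * (Fintype.card ι * R ^ 3) := by
  have key : ∑ k, ∑ l, ∑ k', ∑ l', c k l * c k' l' * c k k' ≤ Fintype.card ι * R ^ 3 := by
    have : ∀ k, ∑ l, ∑ k', ∑ l', c k l * c k' l' * c k k' ≤ R ^ 3 := by
      intro k
      have R0 : 0 ≤ R := (Finset.sum_nonneg fun l _ => h0 k l).trans (hR k)
      calc ∑ l, ∑ k', ∑ l', c k l * c k' l' * c k k'
          = ∑ l, c k l * ∑ k', c k k' * ∑ l', c k' l' := by
            simp only [Finset.mul_sum]
            exact Finset.sum_congr rfl fun _ _ => Finset.sum_congr rfl fun _ _ =>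
              Finset.sum_congr rfl fun _ _ => by ring
        _ ≤ ∑ l, c k l * ∑ k', c k k' * R := by
            gcongr with l _ k' _
            · exact h0 _ _
            · exact h0 _ _
            · exact hR _
        _ = (∑ l, c k l) * ((∑ k', c k k') * R) := by simp only [Finset.sum_mul]
        _ ≤ R * (R * R) := by
            have := hR k
            have := Finset.sum_nonneg fun l (_ : l ∈ Finset.univ) => h0 k l
            gcongr
        _ = _ := by ring
    calc _ ≤ ∑ k : ι, R ^ 3 := Finset.sum_le_sum fun k _ => this k
      _ = _ := by simp
  have k2 : ∑ k, ∑ l, ∑ k', ∑ l', c k l * c k' l' * c k l' ≤ Fintype.card ι * R ^ 3 := by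
    refine le_trans (le_of_eq ?_) key
    refine Finset.sum_congr rfl fun k _ => Finset.sum_congr rfl fun l _ => ?_
    rw [Finset.sum_comm]
    exact Finset.sum_congr rfl fun u _ => Finset.sum_congr rfl fun v _ => by rw [hs v u]
  have k3 : ∑ k, ∑ l, ∑ k', ∑ l', c k l * c k' l' * c l k' ≤ Fintype.card ι * R ^ 3 := by
    refine le_trans (le_of_eq ?_) key
    rw [Finset.sum_comm]
    exact Finset.sum_congr rfl fun k _ => Finset.sum_congr rfl fun l _ => by
      simp only [hs l k]
  have k4 : ∑ k, ∑ l, ∑ k', ∑ l', c k l * c k' l' * c l l' ≤ Fintype.card ι * R ^ 3 := by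
    refine le_trans (le_of_eq ?_) k2
    rw [Finset.sum_comm]
    exact Finset.sum_congr rfl fun k _ => Finset.sum_congr rfl fun l _ => by
      simp only [hs l k]
  simp only [mul_add, Finset.sum_add_distrib]
  linarith

/-! ### Quantitative central limit theorem for polynomial sums -/

lemma integral_abs_le_sqrt {P : Measure Ω} [IsProbabilityMeasure P] {f : Ω → ℝ}
    (hf : MemLp f 2 P) : ∫ ω, |f ω| ∂P ≤ Real.sqrt (∫ ω, f ω ^ 2 ∂P) := by
  have h := abs_integral_mul_le (memLp_abs hf) (memLp_const (1 : ℝ))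
  simpa using (le_abs_self _).trans h

open Polynomial in
/-- The quadratic functional of `clt_ineq` is close in `L¹` to its mean: its variance is bounded
through `poly_cov` and `chain_sum_le`. -/
lemma gamma_var (P : Measure Ω) (G Q : ℝ[X]) : ∃ K : ℝ, 0 ≤ K ∧
    ∀ (ι : Type) [Fintype ι] (X : ι → Ω → ℝ), CG P X → (∀ k, cov[X k, X k; P] = 1) →
    ∀ (R a : ℝ) (α : ι → ℝ), (∀ k, |α k| ≤ a) → (∀ k, ∑ l, |cov[X k, X l; P]| ≤ R) →
    ∫ ω, |∑ k, ∑ l, α k * α l * cov[X k, X l; P] * (G.eval (X k ω) * Q.eval (X l ω)) -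
      ∑ k, ∑ l, α k * α l * cov[X k, X l; P] * ∫ ω, G.eval (X k ω) * Q.eval (X l ω) ∂P| ∂P ≤
      Real.sqrt (a ^ 4 * K * (4 * (Fintype.card ι * R ^ 3))) := by
  obtain ⟨K, k0, hK⟩ := poly_cov P G Q
  refine ⟨K, k0, fun ι _ X hX hv R a α ha hR => ?_⟩
  have := hX.prob
  set c : ι → ι → ℝ := fun k l => |cov[X k, X l; P]| with hc
  set w : ι × ι → ℝ := fun p => α p.1 * α p.2 * cov[X p.1, X p.2; P] with hw
  set m : ι × ι → ℝ := fun p => ∫ ω, G.eval (X p.1 ω) * Q.eval (X p.2 ω) ∂P with hm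
  set V : ι × ι → Ω → ℝ := fun p ω => G.eval (X p.1 ω) * Q.eval (X p.2 ω) - m p with hV
  have p0 : ∀ p : ι × ι, AllLp P (fun ω => G.eval (X p.1 ω) * Q.eval (X p.2 ω)) := fun p =>
    ((hX.allLp p.1).polyEval G).mul ((hX.allLp p.2).polyEval Q)
  have pV : ∀ p, AllLp P (V p) := fun p => (p0 p).sub (AllLp.const _)
  have e : ∀ ω, ∑ k, ∑ l, α k * α l * cov[X k, X l; P] * (G.eval (X k ω) * Q.eval (X l ω)) -
      ∑ k, ∑ l, α k * α l * cov[X k, X l; P] * ∫ ω, G.eval (X k ω) * Q.eval (X l ω) ∂P =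
      ∑ p, w p * V p ω := by
    intro ω
    rw [Fintype.sum_prod_type, ← Finset.sum_sub_distrib]
    refine Finset.sum_congr rfl fun k _ => ?_
    rw [← Finset.sum_sub_distrib]
    exact Finset.sum_congr rfl fun l _ => by simp only [hw, hV, hm]; ring
  simp only [e]
  refine (integral_abs_le_sqrt (AllLp.sum fun p _ => (pV p).const_mul _).two).trans
    (Real.sqrt_le_sqrt ?_)
  have e2 : ∀ ω, (∑ p, w p * V p ω) ^ 2 = ∑ p, ∑ r, w p * w r * (V p ω * V r ω) := by
    intro ω; rw [sq, Finset.sum_mul_sum]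
    exact Finset.sum_congr rfl fun k _ => Finset.sum_congr rfl fun l _ => by ring
  simp only [e2]
  rw [integral_finsetSum _ fun p _ => (AllLp.sum fun r _ =>
    ((pV p).mul (pV r)).const_mul _).integrable]
  have cv : ∀ p r, |∫ ω, V p ω * V r ω ∂P| ≤
      K * (c p.1 r.1 + c p.1 r.2 + c p.2 r.1 + c p.2 r.2) := by
    intro p r
    have h := hK (fun i => X (![p.1, p.2, r.1, r.2] i)) (hX.comp _) (fun k => hv _)
    have : ∫ ω, V p ω * V r ω ∂P = (∫ ω, (G.eval (X p.1 ω) * Q.eval (X p.2 ω)) *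
        (G.eval (X r.1 ω) * Q.eval (X r.2 ω)) ∂P) - m p * m r := by
      have e3 : ∀ ω, V p ω * V r ω = (G.eval (X p.1 ω) * Q.eval (X p.2 ω)) *
        (G.eval (X r.1 ω) * Q.eval (X r.2 ω)) - m r * (G.eval (X p.1 ω) * Q.eval (X p.2 ω)) -
        m p * (G.eval (X r.1 ω) * Q.eval (X r.2 ω)) + m p * m r := by
        intro ω; simp only [hV]; ring
      simp only [e3]
      rw [integral_add ((((p0 p).mul (p0 r)).sub ((p0 p).const_mul _)).sub
          ((p0 r).const_mul _)).integrable (integrable_const _),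
        integral_sub (((p0 p).mul (p0 r)).sub ((p0 p).const_mul _)).integrable
          ((p0 r).const_mul _).integrable,
        integral_sub ((p0 p).mul (p0 r)).integrable ((p0 p).const_mul _).integrable,
        integral_const_mul, integral_const_mul, integral_const]
      simp only [probReal_univ, one_smul]
      change _ - m r * m p - m p * m r + m p * m r = _
      ring
    rw [this]
    exact h
  have cs : ∀ k l, c k l = c l k := fun k l => by simp only [hc]; rw [covariance_comm]
  have hb : ∀ p, |w p| ≤ a ^ 2 * c p.1 p.2 := by
    intro p
    simp only [hw, abs_mul, hc]
    have := ha p.1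
    have := ha p.2
    have : 0 ≤ a := (abs_nonneg _).trans this
    rw [sq]
    gcongr
  calc _ ≤ ∑ p : ι × ι, ∑ r : ι × ι, (a ^ 2 * c p.1 p.2) * (a ^ 2 * c r.1 r.2) *
        (K * (c p.1 r.1 + c p.1 r.2 + c p.2 r.1 + c p.2 r.2)) := by
        refine Finset.sum_le_sum fun p _ => ?_
        rw [integral_finsetSum _ fun r _ => (((pV p).mul (pV r)).const_mul _).integrable]
        refine Finset.sum_le_sum fun r _ => ?_
        rw [integral_const_mul]
        refine (le_abs_self _).trans ?_
        rw [abs_mul, abs_mul]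
        have := hb p
        have := hb r
        have := cv p r
        gcongr
    _ = a ^ 4 * K * ∑ k, ∑ l, ∑ k', ∑ l', c k l * c k' l' *
        (c k k' + c k l' + c l k' + c l l') := by
        simp only [Fintype.sum_prod_type, Finset.mul_sum]
        exact Finset.sum_congr rfl fun _ _ => Finset.sum_congr rfl fun _ _ =>
          Finset.sum_congr rfl fun _ _ => Finset.sum_congr rfl fun _ _ => by ring
    _ ≤ _ := mul_le_mul_of_nonneg_left (chain_sum_le (fun _ _ => abs_nonneg _) cs hR)
        (by positivity)

open Polynomial in
/-- Asymptotic independence and normality of a weighted polynomial sum, in quantitative form. -/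
lemma clt_bound (P : Measure Ω) {F G : ℝ[X]} (hFG : F = Polynomial.X * G - derivative G)
    (hG0 : ∫ t, G.eval t ∂(gaussianReal 0 1) = 0) : ∃ K K' : ℝ, 0 ≤ K ∧ 0 ≤ K' ∧
    ∀ (ι κ : Type) [Fintype ι] [Fintype κ] (X : ι ⊕ κ → Ω → ℝ), CG P X →
    (∀ k, cov[X k, X k; P] = 1) →
    ∀ (R a δ s2 : ℝ) (α : ι → ℝ) (β : κ → ℝ), (∀ k, |α k| ≤ a) →
    (∀ k, ∑ l, |cov[X (.inl k), X (.inl l); P]| ≤ R) →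
    (∀ k l, |cov[X (.inl k), X (.inr l); P]| ≤ δ) → 0 ≤ s2 →
    ‖∫ ω, Complex.exp (Complex.I * ((∑ l, β l * F.eval (X (.inr l) ω) +
        ∑ k, α k * F.eval (X (.inl k) ω) : ℝ) : ℂ)) ∂P -
      (∫ ω, Complex.exp (Complex.I * ((∑ l, β l * F.eval (X (.inr l) ω) : ℝ) : ℂ)) ∂P) *
        ((Real.exp (-(s2 / 2)) : ℝ) : ℂ)‖ ≤
      Real.sqrt (a ^ 4 * K * (4 * (Fintype.card ι * R ^ 3))) +
      |∫ ω, (∑ k, α k * F.eval (X (.inl k) ω)) ^ 2 ∂P - s2| +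
      (∑ l, |β l|) * (K' * Real.sqrt ((a * δ) ^ 2 * (Fintype.card ι * R))) := by
  obtain ⟨K, k0, hK⟩ := gamma_var P G (derivative F)
  set Q := derivative F with hQ
  set vG := ∫ t, G.eval t ^ 2 ∂(gaussianReal 0 1) with hvG
  set vQ := ∫ t, Q.eval t ^ 2 ∂(gaussianReal 0 1) with hvQ
  have vG0 : 0 ≤ vG := integral_nonneg fun t => sq_nonneg _
  refine ⟨K, Real.sqrt vQ * Real.sqrt vG, k0, by positivity,
    fun ι κ _ _ X hX hv R a δ s2 α β ha hR hδ hs => ?_⟩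
  have := hX.prob
  have pG : ∀ k, AllLp P (fun ω => G.eval (X k ω)) := fun k => (hX.allLp k).polyEval _
  have pQ : ∀ k, AllLp P (fun ω => Q.eval (X k ω)) := fun k => (hX.allLp k).polyEval _
  have pF : ∀ k, AllLp P (fun ω => F.eval (X k ω)) := fun k => (hX.allLp k).polyEval _
  -- The weights `α` live on the left coordinates and `β` on the right ones.
  have h := clt_ineq hX hv hFG (Sum.elim α 0) (Sum.elim 0 β) hs
  simp only [Fintype.sum_sum_type, Sum.elim_inl, Sum.elim_inr, Pi.zero_apply, zero_add, add_zero,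
    zero_mul, mul_zero, Finset.sum_const_zero] at h
  have e1 : ∀ ω, ∑ k, α k * F.eval (X (.inl k) ω) + ∑ l, β l * F.eval (X (.inr l) ω) =
    ∑ l, β l * F.eval (X (.inr l) ω) + ∑ k, α k * F.eval (X (.inl k) ω) := fun ω => add_comm _ _
  simp only [e1, ← hQ] at h
  refine h.trans (add_le_add ?_ ?_)
  -- Deviation of the quadratic functional, whose mean is the variance of the sum by `ibp_mul`.
  · have hg := hK ι (fun k => X (.inl k)) (hX.comp _) (fun k => hv _) R a α ha hR
    have hm : ∫ ω, (∑ k, α k * F.eval (X (.inl k) ω)) ^ 2 ∂P = ∑ k, ∑ l, α k * α l *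
        cov[X (.inl k), X (.inl l); P] * ∫ ω, G.eval (X (.inl k) ω) * Q.eval (X (.inl l) ω) ∂P := by
      have e : ∀ ω, (∑ k, α k * F.eval (X (.inl k) ω)) ^ 2 =
          ∑ k, ∑ l, (α k * α l) * (F.eval (X (.inl k) ω) * F.eval (X (.inl l) ω)) := by
        intro ω; rw [sq, Finset.sum_mul_sum]
        exact Finset.sum_congr rfl fun k _ => Finset.sum_congr rfl fun l _ => by ring
      simp only [e]
      rw [integral_finsetSum _ fun k _ => (AllLp.sum fun l _ =>
        ((pF _).mul (pF _)).const_mul _).integrable]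
      refine Finset.sum_congr rfl fun k _ => ?_
      rw [integral_finsetSum _ fun l _ => (((pF _).mul (pF _)).const_mul _).integrable]
      refine Finset.sum_congr rfl fun l _ => ?_
      rw [integral_const_mul, ibp_mul hX (hv _) _ hFG]
      ring
    rw [hm]
    set μ := ∑ k, ∑ l, α k * α l *
        cov[X (.inl k), X (.inl l); P] * ∫ ω, G.eval (X (.inl k) ω) * Q.eval (X (.inl l) ω) ∂P
    have pΓ : AllLp P (fun ω => ∑ k, ∑ l, α k * α l * cov[X (.inl k), X (.inl l); P] *
          (G.eval (X (.inl k) ω) * Q.eval (X (.inl l) ω))) :=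
      AllLp.sum fun k _ => AllLp.sum fun l _ => ((pG _).mul (pQ _)).const_mul _
    calc _ ≤ ∫ ω, (|∑ k, ∑ l, α k * α l * cov[X (.inl k), X (.inl l); P] *
          (G.eval (X (.inl k) ω) * Q.eval (X (.inl l) ω)) - μ| + |μ - s2|) ∂P := by
          refine integral_mono (pΓ.sub (AllLp.const s2)).abs.integrable
            ((pΓ.sub (AllLp.const μ)).abs.add (AllLp.const _)).integrable fun ω => ?_
          exact abs_sub_le _ _ _
      _ ≤ _ := by
          rw [integral_add (pΓ.sub (AllLp.const μ)).abs.integrable (integrable_const _),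
            integral_const]
          simp only [probReal_univ, one_smul]
          exact add_le_add hg le_rfl
  -- The cross term is bounded by the Cauchy-Schwarz inequality.
  · have e : ∀ ω, ∑ k, ∑ l, α k * β l * cov[X (.inl k), X (.inr l); P] *
        (G.eval (X (.inl k) ω) * Q.eval (X (.inr l) ω)) = ∑ l, β l * (Q.eval (X (.inr l) ω) *
          ∑ k, (α k * cov[X (.inl k), X (.inr l); P]) * G.eval (X (.inl k) ω)) := by
      intro ω
      simp only [Finset.mul_sum]
      rw [Finset.sum_comm]
      exact Finset.sum_congr rfl fun k _ => Finset.sum_congr rfl fun l _ => by ring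
    simp only [e]
    have pS : ∀ l, AllLp P (fun ω => ∑ k, (α k * cov[X (.inl k), X (.inr l); P]) *
      G.eval (X (.inl k) ω)) := fun l => AllLp.sum fun k _ => (pG _).const_mul _
    calc _ ≤ ∫ ω, ∑ l, |β l| * |Q.eval (X (.inr l) ω) *
          ∑ k, (α k * cov[X (.inl k), X (.inr l); P]) * G.eval (X (.inl k) ω)| ∂P := by
          refine integral_mono (AllLp.sum fun l _ => ((pQ _).mul (pS l)).const_mul _).abs.integrable
            (AllLp.sum fun l _ => ((pQ _).mul (pS l)).abs.const_mul _).integrable fun ω => ?_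
          refine (Finset.abs_sum_le_sum_abs _ _).trans (le_of_eq ?_)
          simp only [abs_mul]
      _ = ∑ l, |β l| * ∫ ω, |Q.eval (X (.inr l) ω) *
          ∑ k, (α k * cov[X (.inl k), X (.inr l); P]) * G.eval (X (.inl k) ω)| ∂P := by
          rw [integral_finsetSum _ fun l _ =>
            (((pQ _).mul (pS l)).abs.const_mul _).integrable]
          simp only [integral_const_mul]
      _ ≤ _ := by
          rw [Finset.sum_mul]
          refine Finset.sum_le_sum fun l _ => mul_le_mul_of_nonneg_left ?_ (abs_nonneg _)
          have h1 := abs_integral_mul_le (pQ (.inr l)).abs.two (pS l).abs.two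
          simp only [← abs_mul, sq_abs] at h1
          refine (le_abs_self _).trans (h1.trans ?_)
          rw [mul_assoc]
          have h2 : ∫ ω, Q.eval (X (.inr l) ω) ^ 2 ∂P = vQ :=
            hX.integral_comp (hv _) (f := fun t => Q.eval t ^ 2) (by fun_prop)
          rw [h2]
          refine mul_le_mul_of_nonneg_left ?_ (Real.sqrt_nonneg _)
          rw [← Real.sqrt_mul vG0]
          refine Real.sqrt_le_sqrt ?_
          have h3 := sq_sum_le (P := P) (s := Finset.univ) (Y := fun k ω => G.eval (X (.inl k) ω))
            (a := fun k => α k * cov[X (.inl k), X (.inr l); P]) (A := a * δ) (R := R * vG)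
            (c := fun k l => |cov[X (.inl k), X (.inl l); P]| * vG)
            (fun k _ => (pG _).two)
            (fun k _ => by
              rw [abs_mul]
              exact mul_le_mul (ha k) (hδ k l) (abs_nonneg _) ((abs_nonneg _).trans (ha k)))
            (fun k _ l _ => by
              have := gebelein hX (hv (.inl k)) (hv (.inl l)) (hX.abs_cov_le_one (hv _) (hv _))
                (f := fun t => G.eval t) (g := fun t => G.eval t) (by fun_prop) (by fun_prop)
                (allLp_std.polyEval G).two (allLp_std.polyEval G).two hG0
              rwa [Real.mul_self_sqrt vG0] at this)
            (fun k _ => by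
              rw [← Finset.sum_mul]
              exact mul_le_mul_of_nonneg_right (hR k) vG0)
          refine h3.trans (le_of_eq ?_)
          rw [Finset.card_univ]; ring

/-! ### Blocks of the partition and correlation sums -/

/-- Left endpoint of the `j`-th of `m` blocks of `{0, …, n-1}`. -/
def blk (n m j : ℕ) : ℕ := (j * n) / m

lemma blk_mono (n m : ℕ) {i j : ℕ} (h : i ≤ j) : blk n m i ≤ blk n m j :=
  Nat.div_le_div_right (Nat.mul_le_mul_right _ h)

lemma blk_zero (n m : ℕ) : blk n m 0 = 0 := by simp [blk]

lemma blk_self (n : ℕ) {m : ℕ} (hm : 0 < m) : blk n m m = n := by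
  simp [blk, hm]

lemma blk_le (n : ℕ) {m j : ℕ} (hm : 0 < m) (hj : j ≤ m) : blk n m j ≤ n :=
  (blk_mono n m hj).trans (blk_self n hm).le

lemma tendsto_blk {m : ℕ} (hm : 0 < m) (j : ℕ) :
    Tendsto (fun n : ℕ => (blk n m j : ℝ) / n) atTop (nhds ((j : ℝ) / m)) := by
  have hm' : (0 : ℝ) < m := by exact_mod_cast hm
  have h1 : Tendsto (fun n : ℕ => (j : ℝ) / m - 1 / n) atTop (nhds ((j : ℝ) / m - 0)) :=
    tendsto_const_nhds.sub tendsto_one_div_atTop_nhds_zero_nat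
  rw [sub_zero] at h1
  refine tendsto_of_tendsto_of_tendsto_of_le_of_le' h1 tendsto_const_nhds ?_ ?_
  · filter_upwards [eventually_gt_atTop 0] with n hn
    have hn' : (0 : ℝ) < n := by exact_mod_cast hn
    have h : j * n < (blk n m j + 1) * m := by
      rw [blk]; exact Nat.lt_mul_of_div_lt (Nat.lt_succ_self _) hm
    have h' : (j : ℝ) * n < (blk n m j + 1) * m := by exact_mod_cast h
    rw [sub_le_iff_le_add, ← add_div, div_le_div_iff₀ hm' hn']
    exact h'.le
  · filter_upwards [eventually_gt_atTop 0] with n hn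
    have hn' : (0 : ℝ) < n := by exact_mod_cast hn
    have h : blk n m j * m ≤ j * n := Nat.div_mul_le_self _ _
    have h' : (blk n m j : ℝ) * m ≤ j * n := by exact_mod_cast h
    rw [div_le_div_iff₀ hn' hm']
    exact h'

/-- A double sum of `r (k - l)` is grouped by the difference `d = k - l`. -/
lemma sum_shift_eq_tsum {r : ℤ → ℝ} (hr : Summable r) (S S' : Finset ℤ) :
    ∑ k ∈ S, ∑ l ∈ S', r (k - l) =
      ∑' d, r d * ((S.filter fun k => k - d ∈ S').card : ℝ) := by
  have h1 : ∀ k, ∑ l ∈ S', r (k - l) = ∑' d, if k - d ∈ S' then r d else 0 := by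
    intro k
    rw [← (Equiv.subLeft k).tsum_eq (fun d => if k - d ∈ S' then r d else 0)]
    simp only [Equiv.subLeft_apply, sub_sub_cancel]
    rw [tsum_eq_sum (s := S') fun b hb => by simp [hb]]
    exact Finset.sum_congr rfl fun l hl => by simp [hl]
  simp only [h1]
  rw [← Summable.tsum_finsetSum]
  · refine tsum_congr fun d => ?_
    rw [Finset.card_filter, Nat.cast_sum, Finset.mul_sum]
    exact Finset.sum_congr rfl fun k _ => by split_ifs <;> simp
  · intro k _
    refine Summable.of_norm_bounded hr.norm fun d => ?_
    split_ifs
    · exact le_rfl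
    · simp

lemma image_cast_Ico (a b : ℕ) :
    Finset.Ico (a : ℤ) (b : ℤ) = (Finset.Ico a b).image (fun k : ℕ => (k : ℤ)) := by
  ext z
  simp only [Finset.mem_Ico, Finset.mem_image]
  constructor
  · rintro ⟨h1, h2⟩
    exact ⟨z.toNat, by omega, by omega⟩
  · rintro ⟨k, h, rfl⟩; omega

/-- The normalized correlation sums over the blocks `i` and `j` tend to `0` off the diagonal and
to `m⁻¹ ∑ r d` on it. -/
lemma pair_tendsto {r : ℤ → ℝ} (hr : Summable r) {m : ℕ} (hm : 0 < m) {i j : ℕ}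
    (hi : i < m) (hj : j < m) :
    Tendsto (fun n : ℕ => (n : ℝ)⁻¹ * ∑ k ∈ Finset.Ico (blk n m i) (blk n m (i + 1)),
      ∑ l ∈ Finset.Ico (blk n m j) (blk n m (j + 1)), r ((k : ℤ) - l)) atTop
      (nhds (if i = j then (m : ℝ)⁻¹ * ∑' d, r d else 0)) := by
  have e : ∀ n : ℕ, (n : ℝ)⁻¹ * ∑ k ∈ Finset.Ico (blk n m i) (blk n m (i + 1)),
      ∑ l ∈ Finset.Ico (blk n m j) (blk n m (j + 1)), r ((k : ℤ) - l) =
      ∑' d, r d * ((n : ℝ)⁻¹ * (((Finset.Ico (blk n m i : ℤ) (blk n m (i + 1))).filter fun k =>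
        k - d ∈ Finset.Ico (blk n m j : ℤ) (blk n m (j + 1))).card : ℝ)) := by
    intro n
    have := sum_shift_eq_tsum hr (Finset.Ico (blk n m i : ℤ) (blk n m (i + 1)))
      (Finset.Ico (blk n m j : ℤ) (blk n m (j + 1)))
    simp only [mul_left_comm (r _), tsum_mul_left]
    rw [← this, image_cast_Ico, image_cast_Ico,
      Finset.sum_image (by simp)]
    congr 1
    exact Finset.sum_congr rfl fun k _ => by rw [Finset.sum_image (by simp)]
  have lim : (if i = j then (m : ℝ)⁻¹ * ∑' d, r d else 0) =
      ∑' d, r d * (if i = j then (m : ℝ)⁻¹ else 0) := by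
    split_ifs
    · rw [tsum_mul_right, mul_comm]
    · simp
  simp only [e, lim]
  have hm' : (0 : ℝ) < m := by exact_mod_cast hm
  -- Dominated convergence in the lag `d`: the number of pairs with lag `d`, divided by `n`, is
  -- at most one.
  refine tendsto_tsum_of_dominated_convergence (bound := fun d => |r d|) hr.abs (fun d => ?_) ?_
  · refine Tendsto.const_mul _ ?_
    -- The number of pairs with lag `d` is the length of the intersection of one block with the
    -- shift of the other.
    have c : ∀ n : ℕ, (((Finset.Ico (blk n m i : ℤ) (blk n m (i + 1))).filter fun k =>
        k - d ∈ Finset.Ico (blk n m j : ℤ) (blk n m (j + 1))).card : ℝ) =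
        max (min (blk n m (i + 1) : ℝ) (blk n m (j + 1) + d) -
          max (blk n m i : ℝ) (blk n m j + d)) 0 := by
      intro n
      have : ((Finset.Ico (blk n m i : ℤ) (blk n m (i + 1))).filter fun k =>
        k - d ∈ Finset.Ico (blk n m j : ℤ) (blk n m (j + 1))) =
        Finset.Ico (max (blk n m i : ℤ) (blk n m j + d))
          (min (blk n m (i + 1) : ℤ) (blk n m (j + 1) + d)) := by
        ext k
        simp only [Finset.mem_filter, Finset.mem_Ico, max_le_iff, lt_min_iff]
        omega
      rw [this, Int.card_Ico]
      have h2 : ∀ z : ℤ, ((z.toNat : ℕ) : ℝ) = max (z : ℝ) 0 := by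
        intro z
        have := Int.toNat_eq_max z
        rw [← Int.cast_natCast, this]; push_cast; rfl
      rw [h2]; push_cast; rfl
    simp only [c]
    have h0 : Tendsto (fun n : ℕ => (d : ℝ) / n) atTop (nhds 0) :=
      tendsto_const_div_atTop_nhds_zero_nat _
    have hlim := (((tendsto_blk hm (i + 1)).min ((tendsto_blk hm (j + 1)).add h0)).sub
      ((tendsto_blk hm i).max ((tendsto_blk hm j).add h0))).max (tendsto_const_nhds (x := (0 : ℝ)))
    have hval : max (min (((i + 1 : ℕ) : ℝ) / m) (((j + 1 : ℕ) : ℝ) / m + 0) -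
        max ((i : ℝ) / m) ((j : ℝ) / m + 0)) 0 = if i = j then (m : ℝ)⁻¹ else 0 := by
      simp only [add_zero]
      rw [min_div_div_right hm'.le, max_div_div_right hm'.le, ← sub_div]
      rcases lt_trichotomy i j with h | h | h
      · rw [if_neg h.ne]
        have : ((i + 1 : ℕ) : ℝ) ≤ j := by exact_mod_cast h
        refine max_eq_right (div_nonpos_of_nonpos_of_nonneg ?_ hm'.le)
        linarith [min_le_left ((i + 1 : ℕ) : ℝ) ((j + 1 : ℕ) : ℝ), le_max_right (i : ℝ) j]
      · subst h
        simp
      · rw [if_neg h.ne']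
        have : ((j + 1 : ℕ) : ℝ) ≤ i := by exact_mod_cast h
        refine max_eq_right (div_nonpos_of_nonpos_of_nonneg ?_ hm'.le)
        linarith [min_le_right ((i + 1 : ℕ) : ℝ) ((j + 1 : ℕ) : ℝ), le_max_left (i : ℝ) j]
    rw [hval] at hlim
    refine hlim.congr' ?_
    filter_upwards [eventually_gt_atTop 0] with n hn
    have hn' : (0 : ℝ) < n := by exact_mod_cast hn
    rw [← add_div, ← add_div, min_div_div_right hn'.le, max_div_div_right hn'.le, ← sub_div,
      div_eq_inv_mul]
    rw [mul_max_of_nonneg _ _ (by positivity), mul_zero]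
  · filter_upwards [eventually_gt_atTop 0] with n hn d
    have hn' : (0 : ℝ) < n := by exact_mod_cast hn
    rw [Real.norm_eq_abs, abs_mul]
    refine mul_le_of_le_one_right (abs_nonneg _) ?_
    rw [abs_of_nonneg (mul_nonneg (inv_nonneg.2 hn'.le) (Nat.cast_nonneg _)), inv_mul_le_iff₀ hn', mul_one]
    have : ((Finset.Ico (blk n m i : ℤ) (blk n m (i + 1))).filter fun k =>
        k - d ∈ Finset.Ico (blk n m j : ℤ) (blk n m (j + 1))).card ≤ n := by
      refine (Finset.card_filter_le _ _).trans ?_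
      rw [Int.card_Ico]
      have := blk_le n hm (j := i + 1) hi
      omega
    exact_mod_cast this

/-! ### Variances of block sums of truncated expansions -/

open Polynomial in
/-- The truncated Hermite expansion as a polynomial. -/
def hermPoly (f : ℝ → ℝ) (N : ℕ) : ℝ[X] :=
  ∑ q ∈ Finset.range N, C (hermCoeff f q) * (hermite q).map (Int.castRingHom ℝ)

open Polynomial in
/-- The preimage of `hermPoly f N` under `G ↦ X G - G'` (for coefficient `0` vanishing). -/
def gPoly (f : ℝ → ℝ) (N : ℕ) : ℝ[X] :=
  ∑ q ∈ Finset.range N, C (hermCoeff f q) * (hermite (q - 1)).map (Int.castRingHom ℝ)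

lemma eval_hermPoly (f : ℝ → ℝ) (N : ℕ) (t : ℝ) : (hermPoly f N).eval t = hermSum f N t := by
  simp only [hermPoly, hermSum, Polynomial.eval_finsetSum, Polynomial.eval_mul,
    Polynomial.eval_C, Hq_eq]

/-- A truncated expansion without constant term has the form `X G - G'`, because `H_{q+1} = X
H_q - H_q'`. -/
lemma hermPoly_eq {f : ℝ → ℝ} (h0 : hermCoeff f 0 = 0) (N : ℕ) :
    hermPoly f N = Polynomial.X * gPoly f N - Polynomial.derivative (gPoly f N) := by
  simp only [hermPoly, gPoly, Polynomial.derivative_sum, Finset.mul_sum, ← Finset.sum_sub_distrib]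
  refine Finset.sum_congr rfl fun q _ => ?_
  rcases q with _ | q
  · simp [h0]
  · rw [Nat.add_sub_cancel, Polynomial.hermite_succ]
    simp only [Polynomial.derivative_C_mul, Polynomial.map_sub, Polynomial.map_mul,
      Polynomial.map_X, Polynomial.derivative_map]
    ring

/-- The mean of `G` is the first Hermite coefficient of `f`, which vanishes here. -/
lemma integral_gPoly {f : ℝ → ℝ} (h0 : hermCoeff f 0 = 0) (h1 : hermCoeff f 1 = 0) (N : ℕ) :
    ∫ t, (gPoly f N).eval t ∂(gaussianReal 0 1) = 0 := by
  simp only [gPoly, Polynomial.eval_finsetSum, Polynomial.eval_mul, Polynomial.eval_C, ← Hq_eq]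
  rw [integral_finsetSum _ fun q _ => ((allLp_std.Hq _).const_mul _).integrable]
  refine Finset.sum_eq_zero fun q _ => ?_
  rw [integral_const_mul]
  rcases q with _ | _ | q
  · simp [h0]
  · simp [h1]
  · have := hermite_orth_std (q + 1) 0
    simp only [Hq_zero, mul_one] at this
    simp [this]

section wb
variable {P : Measure Ω} {ν : ℝ} {x : ℝ → Ω → ℝ}

/-- The normalization `n^{-1/2}`. -/
def rn (n : ℕ) : ℝ := (n : ℝ) ^ (-(1 : ℝ) / 2)

lemma rn_nonneg (n : ℕ) : 0 ≤ rn n := by unfold rn; positivity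

lemma rn_sq (n : ℕ) : rn n ^ 2 = (n : ℝ)⁻¹ := by
  rw [rn, ← Real.rpow_natCast, ← Real.rpow_mul (by positivity), ← Real.rpow_neg_one]
  norm_num

lemma tendsto_rn : Tendsto rn atTop (nhds 0) := by
  have : Tendsto (fun n : ℕ => (n : ℝ) ^ (-(1 / 2 : ℝ))) atTop (nhds 0) :=
    (tendsto_rpow_neg_atTop (by norm_num)).comp tendsto_natCast_atTop_atTop
  refine this.congr fun n => ?_
  rw [rn]; norm_num

/-- Weighted sums of `f` over the blocks, with weight `θ j` on the `j`-th block. -/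
def WB (x : ℝ → Ω → ℝ) (ν : ℝ) (f : ℝ → ℝ) (m : ℕ) (θ : ℕ → ℝ) (n : ℕ) (ω : Ω) : ℝ :=
  rn n * ∑ j ∈ Finset.range m, θ j *
    ∑ k ∈ Finset.Ico (blk n m j) (blk n m (j + 1)), f (Zinc x ν n k ω)

/-- The weight carried by the index `k`. -/
def wt (n m : ℕ) (θ : ℕ → ℝ) (k : ℕ) : ℝ :=
  ∑ j ∈ Finset.range m, if k ∈ Finset.Ico (blk n m j) (blk n m (j + 1)) then θ j else 0

lemma abs_wt_le (n m : ℕ) (θ : ℕ → ℝ) (k : ℕ) : |wt n m θ k| ≤ ∑ j ∈ Finset.range m, |θ j| := by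
  refine (Finset.abs_sum_le_sum_abs _ _).trans (Finset.sum_le_sum fun j _ => ?_)
  split_ifs
  · exact le_rfl
  · simp

lemma blk_lt {n m j k : ℕ} (hj : j < m)
    (hk : k ∈ Finset.Ico (blk n m j) (blk n m (j + 1))) : k < n :=
  (Finset.mem_Ico.1 hk).2.trans_le (blk_le n (by omega) hj)

lemma blkSum_eq (n m : ℕ) (θ : ℕ → ℝ) (g : ℕ → ℝ) :
    ∑ j ∈ Finset.range m, θ j * ∑ k ∈ Finset.Ico (blk n m j) (blk n m (j + 1)), g k =
      ∑ k ∈ Finset.range n, wt n m θ k * g k := by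
  simp only [wt, Finset.sum_mul]
  rw [Finset.sum_comm]
  refine Finset.sum_congr rfl fun j hj => ?_
  rw [Finset.mul_sum]
  simp only [ite_mul, zero_mul]
  rw [← Finset.sum_filter]
  refine Finset.sum_congr ?_ fun _ _ => rfl
  ext k
  simp only [Finset.mem_filter, Finset.mem_range]
  exact ⟨fun h => ⟨blk_lt (Finset.mem_range.1 hj) h, h⟩, fun h => h.2⟩

lemma WB_eq (f : ℝ → ℝ) (m : ℕ) (θ : ℕ → ℝ) (n : ℕ) (ω : Ω) :
    WB x ν f m θ n ω = ∑ k : Fin n, (rn n * wt n m θ k) * f (Zinc x ν n k ω) := by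
  rw [WB, blkSum_eq n m θ (fun k => f (Zinc x ν n k ω)), Finset.mul_sum, ← Fin.sum_univ_eq_sum_range
    (fun k => rn n * (wt n m θ k * f (Zinc x ν n k ω)))]
  exact Finset.sum_congr rfl fun k _ => by ring

lemma WB_zero (f : ℝ → ℝ) (m : ℕ) (θ : ℕ → ℝ) (ω : Ω) : WB x ν f m θ 0 ω = 0 := by
  rw [WB_eq]; simp

/-- Correlation function of the truncated expansion. -/
def rN (ν : ℝ) (f : ℝ → ℝ) (N : ℕ) (d : ℤ) : ℝ :=
  ∑ q ∈ Finset.range N, (q.factorial : ℝ) * hermCoeff f q ^ 2 * rho ν d ^ q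

lemma summable_rN (h0 : 0 < ν) (h1 : ν ≤ 1 / 2) {f : ℝ → ℝ} (hf : hermCoeff f 0 = 0) (N : ℕ) :
    Summable (rN ν f N) := by
  unfold rN
  refine summable_sum fun q _ => ?_
  rcases q with _ | q
  · simp [hf, summable_zero]
  · refine Summable.mul_left _ (Summable.of_norm_bounded (summable_rho h0 h1) fun d => ?_)
    rw [pow_succ, norm_mul, norm_pow, Real.norm_eq_abs]
    exact mul_le_of_le_one_left (abs_nonneg _) (pow_le_one₀ (abs_nonneg _) (abs_rho_le h0 h1 d))

lemma cgZ (hx : IsFBM P ν x) (n : ℕ) : CG P (fun k : Fin n => Zinc x ν n k) :=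
  hx.cg (fun _ => (n : ℝ) ^ ν) (fun k : Fin n => ((k : ℕ) : ℝ) / n)
    (fun k : Fin n => (((k : ℕ) : ℝ) + 1) / n) (fun k => grid_mem k.2.le) (fun k => grid_mem' k.2)

variable [IsProbabilityMeasure P]

lemma cov_Z_self (h0 : 0 < ν) (hx : IsFBM P ν x) {n k : ℕ} (hk : k < n) :
    cov[Zinc x ν n k, Zinc x ν n k; P] = 1 := by
  rw [hx.cov_Z h0 hk hk, sub_self, rho_zero h0]

lemma allLp_Z (hx : IsFBM P ν x) {n k : ℕ} (hk : k < n) : AllLp P (Zinc x ν n k) :=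
  (cgZ hx n).allLp ⟨k, hk⟩

lemma integral_rN (h0 : 0 < ν) (hx : IsFBM P ν x) (f : ℝ → ℝ) (N : ℕ) {n k l : ℕ}
    (hk : k < n) (hl : l < n) :
    ∫ ω, hermSum f N (Zinc x ν n k ω) * hermSum f N (Zinc x ν n l ω) ∂P =
      rN ν f N ((k : ℤ) - l) := by
  rw [integral_hermSum_mul (cgZ hx n) (k := ⟨k, hk⟩) (l := ⟨l, hl⟩) (cov_Z_self h0 hx hk)
    (cov_Z_self h0 hx hl), rN]
  refine Finset.sum_congr rfl fun q hq => ?_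
  rw [if_pos (Finset.mem_range.1 hq), hx.cov_Z h0 hk hl]; ring

lemma allLp_hermSum_comp (f : ℝ → ℝ) (N : ℕ) {X : Ω → ℝ} (hX : AllLp P X) :
    AllLp P (fun ω => hermSum f N (X ω)) :=
  AllLp.sum fun q _ => (hX.Hq q).const_mul _

lemma integral_WB_sq (h0 : 0 < ν) (hx : IsFBM P ν x) (f : ℝ → ℝ) (N m : ℕ) (θ : ℕ → ℝ) (n : ℕ) :
    ∫ ω, WB x ν (hermSum f N) m θ n ω ^ 2 ∂P = ∑ i ∈ Finset.range m, ∑ j ∈ Finset.range m,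
      θ i * θ j * ((n : ℝ)⁻¹ * ∑ k ∈ Finset.Ico (blk n m i) (blk n m (i + 1)),
        ∑ l ∈ Finset.Ico (blk n m j) (blk n m (j + 1)), rN ν f N ((k : ℤ) - l)) := by
  have e : ∀ ω, WB x ν (hermSum f N) m θ n ω ^ 2 = ∑ i ∈ Finset.range m, ∑ j ∈ Finset.range m,
      ∑ k ∈ Finset.Ico (blk n m i) (blk n m (i + 1)),
      ∑ l ∈ Finset.Ico (blk n m j) (blk n m (j + 1)), θ i * θ j * (n : ℝ)⁻¹ *
        (hermSum f N (Zinc x ν n k ω) * hermSum f N (Zinc x ν n l ω)) := by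
    intro ω
    rw [WB, mul_pow, rn_sq, sq, Finset.sum_mul_sum, Finset.mul_sum]
    refine Finset.sum_congr rfl fun i _ => ?_
    rw [Finset.mul_sum]
    refine Finset.sum_congr rfl fun j _ => ?_
    simp only [← Finset.mul_sum, ← Finset.sum_mul]
    ring
  have hi : ∀ i ∈ Finset.range m, ∀ j ∈ Finset.range m,
      ∀ k ∈ Finset.Ico (blk n m i) (blk n m (i + 1)),
      ∀ l ∈ Finset.Ico (blk n m j) (blk n m (j + 1)), Integrable (fun ω => θ i * θ j * (n : ℝ)⁻¹ *
        (hermSum f N (Zinc x ν n k ω) * hermSum f N (Zinc x ν n l ω))) P := by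
    intro i hi j hj k hk l hl
    exact (((allLp_hermSum_comp f N (allLp_Z hx (blk_lt (Finset.mem_range.1 hi) hk))).mul
      (allLp_hermSum_comp f N (allLp_Z hx (blk_lt (Finset.mem_range.1 hj) hl)))).const_mul
        _).integrable
  simp only [e]
  rw [integral_finsetSum _ fun i h1 => integrable_finsetSum _ fun j h2 =>
    integrable_finsetSum _ fun k h3 => integrable_finsetSum _ fun l h4 => hi i h1 j h2 k h3 l h4]
  refine Finset.sum_congr rfl fun i h1 => ?_
  rw [integral_finsetSum _ fun j h2 =>
    integrable_finsetSum _ fun k h3 => integrable_finsetSum _ fun l h4 => hi i h1 j h2 k h3 l h4]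
  refine Finset.sum_congr rfl fun j h2 => ?_
  rw [integral_finsetSum _ fun k h3 => integrable_finsetSum _ fun l h4 => hi i h1 j h2 k h3 l h4]
  rw [← mul_assoc, Finset.mul_sum]
  refine Finset.sum_congr rfl fun k h3 => ?_
  rw [integral_finsetSum _ fun l h4 => hi i h1 j h2 k h3 l h4, Finset.mul_sum]
  refine Finset.sum_congr rfl fun l h4 => ?_
  rw [integral_const_mul, integral_rN h0 hx f N (blk_lt (Finset.mem_range.1 h1) h3)
    (blk_lt (Finset.mem_range.1 h2) h4)]

/-- Convergence of the variances of block sums of a truncated expansion. -/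
lemma tendsto_WB_sq (h0 : 0 < ν) (h1 : ν ≤ 1 / 2) (hx : IsFBM P ν x) {f : ℝ → ℝ}
    (hf : hermCoeff f 0 = 0) (N : ℕ) {m : ℕ} (hm : 0 < m) (θ : ℕ → ℝ) :
    Tendsto (fun n => ∫ ω, WB x ν (hermSum f N) m θ n ω ^ 2 ∂P) atTop
      (nhds ((∑' d, rN ν f N d) * ((m : ℝ)⁻¹ * ∑ j ∈ Finset.range m, θ j ^ 2))) := by
  simp only [integral_WB_sq h0 hx]
  have : (∑' d, rN ν f N d) * ((m : ℝ)⁻¹ * ∑ j ∈ Finset.range m, θ j ^ 2) =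
      ∑ i ∈ Finset.range m, ∑ j ∈ Finset.range m, θ i * θ j *
        (if i = j then (m : ℝ)⁻¹ * ∑' d, rN ν f N d else 0) := by
    simp only [mul_ite, mul_zero, Finset.sum_ite_eq, Finset.mem_range]
    rw [Finset.mul_sum, Finset.mul_sum]
    refine Finset.sum_congr rfl fun i hi => ?_
    rw [if_pos (Finset.mem_range.1 hi)]; ring
  rw [this]
  exact tendsto_finsetSum _ fun i hi => tendsto_finsetSum _ fun j hj => Tendsto.const_mul _
    (pair_tendsto (summable_rN h0 h1 hf N) hm (Finset.mem_range.1 hi) (Finset.mem_range.1 hj))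
end wb

/-! ### Central limit theorem for truncated expansions -/

section pclt
variable {P : Measure Ω} {ν : ℝ} {x : ℝ → Ω → ℝ}

/-- The normalized increments at level `n` and those at level `k0` are jointly Gaussian. -/
lemma cgZZ (hx : IsFBM P ν x) (n k0 : ℕ) :
    CG P (Sum.elim (fun k : Fin n => Zinc x ν n k) (fun k : Fin k0 => Zinc x ν k0 k)) := by
  have := hx.cg (ι := Fin n ⊕ Fin k0) (Sum.elim (fun _ => (n : ℝ) ^ ν) (fun _ => (k0 : ℝ) ^ ν))
    (Sum.elim (fun k : Fin n => ((k : ℕ) : ℝ) / n) (fun k : Fin k0 => ((k : ℕ) : ℝ) / k0))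
    (Sum.elim (fun k : Fin n => (((k : ℕ) : ℝ) + 1) / n)
      (fun k : Fin k0 => (((k : ℕ) : ℝ) + 1) / k0))
    (by rintro (k | k); exacts [grid_mem k.2.le, grid_mem k.2.le])
    (by rintro (k | k); exacts [grid_mem' k.2, grid_mem' k.2])
  convert this using 1
  ext i ω
  rcases i with k | k <;> rfl

variable [IsProbabilityMeasure P]

/-- Increments at a fixed level `k0` decorrelate from increments at level `n` as `n → ∞`. -/
lemma abs_cov_ZZ_le (h0 : 0 < ν) (h1 : ν ≤ 1 / 2) (hx : IsFBM P ν x) {n k0 k l : ℕ}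
    (hk : k < n) (hl : l < k0) :
    |cov[Zinc x ν n k, Zinc x ν k0 l; P]| ≤ (k0 : ℝ) ^ ν * (n : ℝ) ^ (-ν) := by
  have hn : (0 : ℝ) < n := by exact_mod_cast (by omega : 0 < n)
  have h := hx.cov_incr h0 (grid_mem hl.le) (grid_mem' hl) (grid_mem hk.le) (grid_mem' hk)
    ((k0 : ℝ) ^ ν) ((n : ℝ) ^ ν)
  rw [covariance_comm]
  unfold Zinc
  rw [h, abs_mul, abs_mul, abs_of_nonneg (by positivity : (0 : ℝ) ≤ (k0 : ℝ) ^ ν),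
    abs_of_nonneg (by positivity : (0 : ℝ) ≤ (n : ℝ) ^ ν), mul_assoc]
  refine mul_le_mul_of_nonneg_left ?_ (by positivity)
  refine (mul_le_mul_of_nonneg_left (abs_incCov_le h0 h1 _ _ _ _) (by positivity)).trans ?_
  have : ((k : ℝ) + 1) / n - k / n = (n : ℝ)⁻¹ := by field_simp; ring
  rw [this, abs_of_pos (by positivity), Real.inv_rpow hn.le, ← Real.rpow_neg hn.le,
    ← Real.rpow_add hn]
  refine le_of_eq ?_
  ring_nf

/-- The central limit theorem for a truncated expansion, jointly with asymptotic independence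
from the sum at the fixed level `k0`, as needed in `mixing`. -/
lemma poly_clt (h0 : 0 < ν) (h1 : ν ≤ 1 / 2) (hx : IsFBM P ν x) {f : ℝ → ℝ}
    (hf0 : hermCoeff f 0 = 0) (hf1 : hermCoeff f 1 = 0) (N : ℕ) {m : ℕ} (hm : 0 < m) (θ : ℕ → ℝ)
    (k0 : ℕ) :
    Tendsto (fun n => ∫ ω, Complex.exp (Complex.I * ((WB x ν (hermSum f N) m θ n ω -
        WB x ν (hermSum f N) m θ k0 ω : ℝ) : ℂ)) ∂P) atTop
      (nhds ((∫ ω, Complex.exp (Complex.I * ((-WB x ν (hermSum f N) m θ k0 ω : ℝ) : ℂ)) ∂P) *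
        ((Real.exp (-((∑' d, rN ν f N d) * ((m : ℝ)⁻¹ * ∑ j ∈ Finset.range m, θ j ^ 2) / 2)) : ℝ)
          : ℂ))) := by
  set s2 := (∑' d, rN ν f N d) * ((m : ℝ)⁻¹ * ∑ j ∈ Finset.range m, θ j ^ 2) with hs2
  have hW := tendsto_WB_sq h0 h1 hx hf0 N hm θ
  rw [← hs2] at hW
  have hs0 : 0 ≤ s2 := ge_of_tendsto' hW fun n => integral_nonneg fun ω => sq_nonneg _
  obtain ⟨K, K', hK, hK', H⟩ := clt_bound P (hermPoly_eq hf0 N) (integral_gPoly hf0 hf1 N)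
  set W := ∑ j ∈ Finset.range m, |θ j| with hWd
  have hW0 : 0 ≤ W := Finset.sum_nonneg fun _ _ => abs_nonneg _
  set R := rhoSum ν
  have hR0 : 0 ≤ R := rhoSum_nonneg ν
  -- The sum at the fixed level enters with a minus sign.
  set β : Fin k0 → ℝ := fun l => -(rn k0 * wt k0 m θ l) with hβ
  set B := ∑ l, |β l|
  rw [tendsto_iff_norm_sub_tendsto_zero]
  have hb : ∀ᶠ n : ℕ in atTop, ‖(∫ ω, Complex.exp (Complex.I * ((WB x ν (hermSum f N) m θ n ω -
        WB x ν (hermSum f N) m θ k0 ω : ℝ) : ℂ)) ∂P) -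
        (∫ ω, Complex.exp (Complex.I * ((-WB x ν (hermSum f N) m θ k0 ω : ℝ) : ℂ)) ∂P) *
        ((Real.exp (-(s2 / 2)) : ℝ) : ℂ)‖ ≤ Real.sqrt ((n : ℝ)⁻¹ * (4 * W ^ 4 * K * R ^ 3)) +
          |∫ ω, WB x ν (hermSum f N) m θ n ω ^ 2 ∂P - s2| +
          B * (K' * Real.sqrt (((k0 : ℝ) ^ ν * (n : ℝ) ^ (-ν)) ^ 2 * (W ^ 2 * R))) := by
    filter_upwards [eventually_gt_atTop 0] with n hn
    have hn' : (0 : ℝ) < n := by exact_mod_cast hn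
    have h := H (Fin n) (Fin k0) _ (cgZZ hx n k0)
      (by rintro (k | k); exacts [cov_Z_self h0 hx k.2, cov_Z_self h0 hx k.2]) R (rn n * W)
      ((k0 : ℝ) ^ ν * (n : ℝ) ^ (-ν)) s2 (fun k => rn n * wt n m θ k) β
      (fun k => by
        rw [abs_mul, abs_of_nonneg (rn_nonneg n)]
        exact mul_le_mul_of_nonneg_left (abs_wt_le _ _ _ _) (rn_nonneg n))
      (fun k => by
        refine le_trans (le_of_eq ?_) (sum_rho_le h0 h1 k (Finset.range n))
        rw [← Fin.sum_univ_eq_sum_range (fun l => |rho ν ((k : ℤ) - l)|)]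
        refine Finset.sum_congr rfl fun l _ => ?_
        rw [← hx.cov_Z h0 k.2 l.2]; rfl)
      (fun k l => abs_cov_ZZ_le h0 h1 hx k.2 l.2) hs0
    simp only [Sum.elim_inl, Sum.elim_inr, eval_hermPoly, ← WB_eq, Fintype.card_fin] at h
    have e1 : ∀ ω, ∑ l, β l * hermSum f N (Zinc x ν k0 l ω) = -WB x ν (hermSum f N) m θ k0 ω := by
      intro ω; rw [WB_eq, ← Finset.sum_neg_distrib]
      exact Finset.sum_congr rfl fun l _ => by rw [hβ]; ring
    simp only [e1] at h
    have e2 : (rn n * W) ^ 4 * K * (4 * (n * R ^ 3)) = (n : ℝ)⁻¹ * (4 * W ^ 4 * K * R ^ 3) := by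
      have : (rn n * W) ^ 4 = (rn n ^ 2) ^ 2 * W ^ 4 := by ring
      rw [this, rn_sq]; field_simp
    have e3 : (rn n * W * ((k0 : ℝ) ^ ν * (n : ℝ) ^ (-ν))) ^ 2 * (n * R) =
        ((k0 : ℝ) ^ ν * (n : ℝ) ^ (-ν)) ^ 2 * (W ^ 2 * R) := by
      have : (rn n * W * ((k0 : ℝ) ^ ν * (n : ℝ) ^ (-ν))) ^ 2 =
        rn n ^ 2 * W ^ 2 * ((k0 : ℝ) ^ ν * (n : ℝ) ^ (-ν)) ^ 2 := by ring
      rw [this, rn_sq]; field_simp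
    rw [e2, e3] at h
    refine le_trans (le_of_eq ?_) h
    congr 2
    refine integral_congr_ae (ae_of_all _ fun ω => ?_)
    simp only
    rw [neg_add_eq_sub]
  refine tendsto_of_tendsto_of_tendsto_of_le_of_le' tendsto_const_nhds ?_
    (Eventually.of_forall fun n => norm_nonneg _) hb
  -- The three error terms tend to zero.
  have t1 : Tendsto (fun n : ℕ => Real.sqrt ((n : ℝ)⁻¹ * (4 * W ^ 4 * K * R ^ 3))) atTop
      (nhds (Real.sqrt (0 * (4 * W ^ 4 * K * R ^ 3)))) :=
    (tendsto_inv_atTop_nhds_zero_nat.mul_const _).sqrt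
  have t2 : Tendsto (fun n : ℕ => |∫ ω, WB x ν (hermSum f N) m θ n ω ^ 2 ∂P - s2|) atTop
      (nhds |s2 - s2|) := (hW.sub_const _).abs
  have t3' : Tendsto (fun n : ℕ => (n : ℝ) ^ (-ν)) atTop (nhds 0) :=
    (tendsto_rpow_neg_atTop h0).comp tendsto_natCast_atTop_atTop
  have t3 : Tendsto (fun n : ℕ => B * (K' * Real.sqrt (((k0 : ℝ) ^ ν * (n : ℝ) ^ (-ν)) ^ 2 *
      (W ^ 2 * R)))) atTop (nhds (B * (K' * Real.sqrt (((k0 : ℝ) ^ ν * 0) ^ 2 * (W ^ 2 * R))))) :=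
    ((((t3'.const_mul _).pow 2).mul_const _).sqrt.const_mul _).const_mul _
  have := (t1.add t2).add t3
  simpa using this
end pclt

/-! ### Mixing -/

/-- A bounded sequence in a Hilbert space that is asymptotically orthogonal to each of its own
terms converges weakly to zero. -/
lemma weak_zero {H : Type*} [NormedAddCommGroup H] [InnerProductSpace ℂ H] [CompleteSpace H]
    (u : ℕ → H) {C : ℝ} (hC : ∀ n, ‖u n‖ ≤ C)
    (h : ∀ k, Tendsto (fun n => inner ℂ (u k) (u n)) atTop (nhds 0)) (v : H) :
    Tendsto (fun n => inner ℂ v (u n)) atTop (nhds 0) := by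
  let V : Submodule ℂ H :=
    { carrier := {v | Tendsto (fun n => inner ℂ v (u n)) atTop (nhds 0)}
      zero_mem' := by simp
      add_mem' := fun {a b} ha hb => by
        have := Tendsto.add (show Tendsto (fun n => inner ℂ a (u n)) atTop (nhds 0) from ha)
          (show Tendsto (fun n => inner ℂ b (u n)) atTop (nhds 0) from hb)
        simpa [inner_add_left] using this
      smul_mem' := fun c a ha => by
        have := Tendsto.const_mul (starRingEnd ℂ c)
          (show Tendsto (fun n => inner ℂ a (u n)) atTop (nhds 0) from ha)
        simpa [inner_smul_left, mul_comm] using this }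
  have hV : ∀ w, w ∈ V ↔ Tendsto (fun n => inner ℂ w (u n)) atTop (nhds 0) := fun w => Iff.rfl
  have hC0 : 0 ≤ C := (norm_nonneg _).trans (hC 0)
  have hcl : IsClosed (V : Set H) := by
    refine isClosed_of_closure_subset fun v hv => ?_
    rw [SetLike.mem_coe, hV, tendsto_zero_iff_norm_tendsto_zero, Metric.tendsto_atTop]
    intro ε hε
    obtain ⟨w, hw, hvw⟩ := Metric.mem_closure_iff.1 hv (ε / (2 * (C + 1))) (by positivity)
    obtain ⟨n0, hn0⟩ := Metric.tendsto_atTop.1 ((hV w).1 hw) (ε / 2) (by positivity)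
    refine ⟨n0, fun n hn => ?_⟩
    have h1 := hn0 n hn
    rw [dist_zero_right] at h1
    rw [dist_zero_right, norm_norm]
    have h2 : inner ℂ v (u n) = inner ℂ (v - w) (u n) + inner ℂ w (u n) := by
      rw [← inner_add_left, sub_add_cancel]
    have h3 : ‖inner ℂ (v - w) (u n)‖ ≤ ε / (2 * (C + 1)) * C :=
      (norm_inner_le_norm _ _).trans (mul_le_mul (by rw [← dist_eq_norm]; exact hvw.le) (hC n)
        (norm_nonneg _) (by positivity))
    have h4 : ε / (2 * (C + 1)) * C ≤ ε / 2 := by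
      rw [div_mul_eq_mul_div, div_le_div_iff₀ (by positivity) (by norm_num)]; nlinarith
    rw [h2]
    exact (norm_add_le _ _).trans_lt (by linarith)
  -- Split `v` along the closed subspace `V`, which contains every `u n`, and its orthogonal
  -- complement.
  have : CompleteSpace V := hcl.completeSpace_coe
  obtain ⟨a, ha, b, hb, rfl⟩ := V.exists_add_mem_mem_orthogonal v
  have e : ∀ n, inner ℂ (a + b) (u n) = inner ℂ a (u n) := fun n => by
    rw [inner_add_left, Submodule.inner_left_of_mem_orthogonal ((hV (u n)).2 (h n)) hb, add_zero]
  simp only [e]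
  exact ha

lemma norm_cexp_I (t : ℝ) : ‖Complex.exp (Complex.I * (t : ℂ))‖ = 1 := by
  rw [mul_comm]; exact Complex.norm_exp_ofReal_mul_I t

lemma aesm_cexp {P : Measure Ω} {f : Ω → ℝ} (hf : AEStronglyMeasurable f P) :
    AEStronglyMeasurable (fun ω => Complex.exp (Complex.I * (f ω : ℂ))) P := by
  have : Continuous fun t : ℝ => Complex.exp (Complex.I * (t : ℂ)) := by fun_prop
  exact this.comp_aestronglyMeasurable hf

lemma integrable_cexp {P : Measure Ω} [IsFiniteMeasure P] {f : Ω → ℝ}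
    (hf : AEStronglyMeasurable f P) :
    Integrable (fun ω => Complex.exp (Complex.I * (f ω : ℂ))) P :=
  Integrable.of_bound (aesm_cexp hf) 1 (ae_of_all _ fun _ => (norm_cexp_I _).le)

/-- Rényi's mixing criterion in characteristic-function form. -/
lemma mixing {P : Measure Ω} [IsProbabilityMeasure P] {B : ℕ → Ω → ℝ}
    (hB : ∀ n, AEStronglyMeasurable (B n) P) (φ : ℝ)
    (h0 : Tendsto (fun n => ∫ ω, Complex.exp (Complex.I * (B n ω : ℂ)) ∂P) atTop (nhds (φ : ℂ)))
    (h : ∀ k, Tendsto (fun n => ∫ ω, Complex.exp (Complex.I * ((B n ω - B k ω : ℝ) : ℂ)) ∂P) atTop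
      (nhds ((∫ ω, Complex.exp (Complex.I * ((-B k ω : ℝ) : ℂ)) ∂P) * (φ : ℂ))))
    {F : Ω → ℂ} (hF : MemLp F 2 P) :
    Tendsto (fun n => ∫ ω, F ω * Complex.exp (Complex.I * (B n ω : ℂ)) ∂P) atTop
      (nhds ((∫ ω, F ω ∂P) * (φ : ℂ))) := by
  have hU : ∀ n, MemLp (fun ω => Complex.exp (Complex.I * (B n ω : ℂ)) - (φ : ℂ)) 2 P := fun n =>
    MemLp.of_bound ((aesm_cexp (hB n)).sub aestronglyMeasurable_const) (1 + |φ|)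
      (ae_of_all _ fun ω => (norm_sub_le _ _).trans (by rw [norm_cexp_I]; simp))
  have inn : ∀ {f g : Ω → ℂ} (hf : MemLp f 2 P) (hg : MemLp g 2 P),
      inner ℂ (hf.toLp f) (hg.toLp g) = ∫ ω, (starRingEnd ℂ (f ω)) * g ω ∂P := by
    intro f g hf hg
    rw [L2.inner_def]
    refine integral_congr_ae ?_
    filter_upwards [hf.coeFn_toLp, hg.coeFn_toLp] with ω h1 h2
    rw [h1, h2, RCLike.inner_apply, mul_comm]
  -- Apply this to `U n = exp (i B n) - φ`.
  have key := weak_zero (fun n => (hU n).toLp _) (C := 1 + |φ|) (fun n => ?_) (fun k => ?_)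
    ((hF.star).toLp _)
  · simp only [inn] at key
    have e : ∀ n, ∫ ω, F ω * Complex.exp (Complex.I * (B n ω : ℂ)) ∂P =
      (∫ ω, (starRingEnd ℂ (star F ω)) * (Complex.exp (Complex.I * (B n ω : ℂ)) - (φ : ℂ)) ∂P) +
        (∫ ω, F ω ∂P) * (φ : ℂ) := by
      intro n
      have hi : Integrable F P := hF.integrable (by norm_num)
      have hi2 : Integrable (fun ω => F ω * Complex.exp (Complex.I * (B n ω : ℂ))) P :=
        hi.mul_bdd (c := 1) (aesm_cexp (hB n)) (ae_of_all _ fun ω => (norm_cexp_I (B n ω)).le)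
      simp only [Pi.star_apply, RCLike.star_def, Complex.conj_conj, mul_sub]
      rw [integral_sub hi2 (hi.mul_const _), integral_mul_const]
      ring
    simp only [e]
    simpa using key.add_const ((∫ ω, F ω ∂P) * (φ : ℂ))
  · refine (Lp.norm_le_of_ae_bound (C := 1 + |φ|) (by positivity) ?_).trans (by simp [measureUnivNNReal])
    filter_upwards [(hU n).coeFn_toLp] with ω h1
    rw [h1]
    exact (norm_sub_le _ _).trans (by rw [norm_cexp_I]; simp)
  · simp only [inn]
    -- Expansion of the inner product of `U k` and `U n`.
    have e : ∀ n, ∫ ω, (starRingEnd ℂ (Complex.exp (Complex.I * (B k ω : ℂ)) - (φ : ℂ))) *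
        (Complex.exp (Complex.I * (B n ω : ℂ)) - (φ : ℂ)) ∂P =
        (∫ ω, Complex.exp (Complex.I * ((B n ω - B k ω : ℝ) : ℂ)) ∂P) -
        (φ : ℂ) * (∫ ω, Complex.exp (Complex.I * (B n ω : ℂ)) ∂P) -
        (∫ ω, Complex.exp (Complex.I * ((-B k ω : ℝ) : ℂ)) ∂P) * (φ : ℂ) + (φ : ℂ) * φ := by
      intro n
      have i1 := integrable_cexp (P := P) (f := fun ω => B n ω - B k ω) ((hB n).sub (hB k))
      have i2 := (integrable_cexp (hB n)).const_mul (φ : ℂ)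
      have i3 := (integrable_cexp (P := P) (f := fun ω => -B k ω) (hB k).neg).mul_const (φ : ℂ)
      have i12 : Integrable (fun ω => Complex.exp (Complex.I * ((B n ω - B k ω : ℝ) : ℂ)) -
        (φ : ℂ) * Complex.exp (Complex.I * (B n ω : ℂ))) P := i1.sub i2
      have i123 : Integrable (fun ω => Complex.exp (Complex.I * ((B n ω - B k ω : ℝ) : ℂ)) -
        (φ : ℂ) * Complex.exp (Complex.I * (B n ω : ℂ)) -
        Complex.exp (Complex.I * ((-B k ω : ℝ) : ℂ)) * (φ : ℂ)) P := i12.sub i3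
      rw [← integral_const_mul, ← integral_mul_const, ← integral_sub i1 i2,
        ← integral_sub i12 i3]
      have : (φ : ℂ) * φ = ∫ _, (φ : ℂ) * φ ∂P := by simp
      rw [this, ← integral_add i123 (integrable_const _)]
      refine integral_congr_ae (ae_of_all _ fun ω => ?_)
      simp only [map_sub, Complex.conj_ofReal, ← Complex.exp_conj, map_mul, Complex.conj_I,
        Pi.sub_apply]
      have : Complex.exp (Complex.I * ((B n ω - B k ω : ℝ) : ℂ)) =
        Complex.exp (-Complex.I * (B k ω : ℂ)) * Complex.exp (Complex.I * (B n ω : ℂ)) := by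
        rw [← Complex.exp_add]; congr 1; push_cast; ring
      rw [this]
      have : Complex.exp (Complex.I * ((-B k ω : ℝ) : ℂ)) =
        Complex.exp (-Complex.I * (B k ω : ℂ)) := by
        congr 1; push_cast; ring
      rw [this]
      ring
    simp only [e]
    have := (((h k).sub (h0.const_mul (φ : ℂ))).sub_const
      ((∫ ω, Complex.exp (Complex.I * ((-B k ω : ℝ) : ℂ)) ∂P) * (φ : ℂ))).add_const ((φ : ℂ) * φ)
    convert this using 2
    ring

/-! ### The limiting variance and uniform second moment bounds -/

/-- Interchange of limits: `A N` approximates `a` up to `δ N → 0`, eventually in `n`. -/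
lemma tendsto_approx {a : ℕ → ℂ} {A : ℕ → ℕ → ℂ} {b : ℕ → ℂ} {c : ℂ} {δ : ℕ → ℝ}
    (h1 : ∀ᶠ N in atTop, Tendsto (A N) atTop (nhds (b N)))
    (h2 : ∀ᶠ N in atTop, ∀ᶠ n in atTop, ‖a n - A N n‖ ≤ δ N)
    (hδ : Tendsto δ atTop (nhds 0)) (hb : Tendsto b atTop (nhds c)) :
    Tendsto a atTop (nhds c) := by
  rw [Metric.tendsto_nhds]
  intro ε hε
  have e1 := Metric.tendsto_nhds.1 hδ (ε / 3) (by positivity)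
  have e2 := Metric.tendsto_nhds.1 hb (ε / 3) (by positivity)
  obtain ⟨N, h1, h2, e1, e2⟩ := (h1.and (h2.and (e1.and e2))).exists
  filter_upwards [h2, Metric.tendsto_nhds.1 h1 (ε / 3) (by positivity)] with n h3 h4
  rw [dist_zero_right, Real.norm_eq_abs] at e1
  have h5 := dist_triangle4 (a n) (A N n) (b N) c
  rw [dist_eq_norm (a n) (A N n)] at h5
  linarith [le_abs_self (δ N)]

lemma norm_cexp_sub_le (a b : ℝ) :
    ‖Complex.exp (Complex.I * (a : ℂ)) - Complex.exp (Complex.I * (b : ℂ))‖ ≤ |a - b| := by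
  have e : Complex.exp (Complex.I * (a : ℂ)) - Complex.exp (Complex.I * (b : ℂ)) =
      Complex.exp (Complex.I * (b : ℂ)) * (Complex.exp (Complex.I * ((a - b : ℝ) : ℂ)) - 1) := by
    rw [mul_sub, ← Complex.exp_add, mul_one]; congr 2; push_cast; ring
  rw [e, norm_mul, norm_cexp_I, one_mul]
  exact Real.norm_exp_I_mul_ofReal_sub_one_le

/-- The limiting variance `∑_q q! a_q² ∑_d ρ(d)^q`. -/
def sig2 (ν : ℝ) (f : ℝ → ℝ) : ℝ :=
  ∑' q : ℕ, (q.factorial : ℝ) * hermCoeff f q ^ 2 * ∑' d : ℤ, rho ν d ^ q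

section wclt
variable {P : Measure Ω} {ν : ℝ} {x : ℝ → Ω → ℝ}

lemma abs_rho_pow_le (h0 : 0 < ν) (h1 : ν ≤ 1 / 2) {q : ℕ} (hq : q ≠ 0) (d : ℤ) :
    |rho ν d ^ q| ≤ |rho ν d| := by
  obtain ⟨r, rfl⟩ := Nat.exists_eq_succ_of_ne_zero hq
  rw [pow_succ, abs_mul, abs_pow]
  exact mul_le_of_le_one_left (abs_nonneg _) (pow_le_one₀ (abs_nonneg _) (abs_rho_le h0 h1 d))

lemma summable_rho_pow (h0 : 0 < ν) (h1 : ν ≤ 1 / 2) {q : ℕ} (hq : q ≠ 0) :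
    Summable (fun d => rho ν d ^ q) :=
  Summable.of_norm_bounded (summable_rho h0 h1) fun d => abs_rho_pow_le h0 h1 hq d

lemma abs_tsum_rho_pow_le (h0 : 0 < ν) (h1 : ν ≤ 1 / 2) {q : ℕ} (hq : q ≠ 0) :
    |∑' d : ℤ, rho ν d ^ q| ≤ rhoSum ν :=
  tsum_of_norm_bounded (f := fun d => rho ν d ^ q) (summable_rho h0 h1).hasSum
    fun d => abs_rho_pow_le h0 h1 hq d

lemma summable_sig2 (h0 : 0 < ν) (h1 : ν ≤ 1 / 2) {f : ℝ → ℝ}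
    (hf : MemLp f 2 (gaussianReal 0 1)) (hf0 : hermCoeff f 0 = 0) :
    Summable (fun q : ℕ => (q.factorial : ℝ) * hermCoeff f q ^ 2 * ∑' d : ℤ, rho ν d ^ q) := by
  have hs : Summable (fun q : ℕ => (q.factorial : ℝ) * hermCoeff f q ^ 2) :=
    summable_of_sum_range_le (fun q => by positivity) (sum_hermCoeff_le hf)
  refine Summable.of_norm_bounded (hs.mul_right (rhoSum ν)) fun q => ?_
  rcases eq_or_ne q 0 with rfl | hq
  · simp [hf0]
  · rw [norm_mul, Real.norm_of_nonneg (by positivity)]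
    exact mul_le_mul_of_nonneg_left (abs_tsum_rho_pow_le h0 h1 hq) (by positivity)

/-- The limiting variances of the truncated expansions converge to `sig2`. -/
lemma tendsto_sig2 (h0 : 0 < ν) (h1 : ν ≤ 1 / 2) {f : ℝ → ℝ}
    (hf : MemLp f 2 (gaussianReal 0 1)) (hf0 : hermCoeff f 0 = 0) :
    Tendsto (fun N => ∑' d, rN ν f N d) atTop (nhds (sig2 ν f)) := by
  refine (summable_sig2 h0 h1 hf hf0).hasSum.tendsto_sum_nat.congr fun N => ?_
  unfold rN
  rw [Summable.tsum_finsetSum]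
  · exact Finset.sum_congr rfl fun q _ => by rw [tsum_mul_left]
  · intro q _
    rcases eq_or_ne q 0 with rfl | hq
    · simp [hf0, summable_zero]
    · exact (summable_rho_pow h0 h1 hq).mul_left _

variable [IsProbabilityMeasure P]

lemma memLp_fZ (h0 : 0 < ν) (hx : IsFBM P ν x) {f : ℝ → ℝ} (hf : MemLp f 2 (gaussianReal 0 1))
    {n k : ℕ} (hk : k < n) : MemLp (fun ω => f (Zinc x ν n k ω)) 2 P :=
  (cgZ hx n).memLp_comp (k := ⟨k, hk⟩) (cov_Z_self h0 hx hk) hf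

lemma gebelein_Z (h0 : 0 < ν) (h1 : ν ≤ 1 / 2) (hx : IsFBM P ν x) {f : ℝ → ℝ}
    (hfm : Measurable f) (hf : MemLp f 2 (gaussianReal 0 1))
    (hfi : ∫ t, f t ∂(gaussianReal 0 1) = 0) {n k l : ℕ} (hk : k < n) (hl : l < n) :
    |∫ ω, f (Zinc x ν n k ω) * f (Zinc x ν n l ω) ∂P| ≤
      |rho ν ((k : ℤ) - l)| * ∫ t, f t ^ 2 ∂(gaussianReal 0 1) := by
  have := gebelein (cgZ hx n) (k := ⟨k, hk⟩) (l := ⟨l, hl⟩) (cov_Z_self h0 hx hk)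
    (cov_Z_self h0 hx hl) (by rw [hx.cov_Z h0 hk hl]; exact abs_rho_le h0 h1 _) hfm hfm hf hf hfi
  rw [Real.mul_self_sqrt (integral_nonneg fun t => sq_nonneg _)] at this
  rw [← hx.cov_Z h0 hk hl]; exact this

/-- Second moment of a weighted sum of a centered function of the increments. -/
lemma sum_fZ_sq_le (h0 : 0 < ν) (h1 : ν ≤ 1 / 2) (hx : IsFBM P ν x) {f : ℝ → ℝ}
    (hfm : Measurable f) (hf : MemLp f 2 (gaussianReal 0 1))
    (hfi : ∫ t, f t ∂(gaussianReal 0 1) = 0) {n : ℕ} {s : Finset ℕ} (hs : ∀ k ∈ s, k < n)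
    {a : ℕ → ℝ} {A : ℝ} (ha : ∀ k ∈ s, |a k| ≤ A) :
    ∫ ω, (∑ k ∈ s, a k * f (Zinc x ν n k ω)) ^ 2 ∂P ≤
      A ^ 2 * (s.card * (rhoSum ν * ∫ t, f t ^ 2 ∂(gaussianReal 0 1))) := by
  refine sq_sum_le (fun k hk => memLp_fZ h0 hx hf (hs k hk)) ha
    (fun k hk l hl => gebelein_Z h0 h1 hx hfm hf hfi (hs k hk) (hs l hl)) fun k hk => ?_
  rw [← Finset.sum_mul]
  exact mul_le_mul_of_nonneg_right (sum_rho_le h0 h1 k s) (integral_nonneg fun t => sq_nonneg _)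

lemma WB_eq' (f : ℝ → ℝ) (m : ℕ) (θ : ℕ → ℝ) (n : ℕ) (ω : Ω) :
    WB x ν f m θ n ω = ∑ k ∈ Finset.range n, (rn n * wt n m θ k) * f (Zinc x ν n k ω) := by
  rw [WB_eq, ← Fin.sum_univ_eq_sum_range (fun k => (rn n * wt n m θ k) * f (Zinc x ν n k ω))]

/-- The second moments of the weighted block sums are bounded uniformly in `n`. -/
lemma WB_sq_le (h0 : 0 < ν) (h1 : ν ≤ 1 / 2) (hx : IsFBM P ν x) {f : ℝ → ℝ}
    (hfm : Measurable f) (hf : MemLp f 2 (gaussianReal 0 1))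
    (hfi : ∫ t, f t ∂(gaussianReal 0 1) = 0) (m : ℕ) (θ : ℕ → ℝ) (n : ℕ) :
    ∫ ω, WB x ν f m θ n ω ^ 2 ∂P ≤ (∑ j ∈ Finset.range m, |θ j|) ^ 2 *
      (rhoSum ν * ∫ t, f t ^ 2 ∂(gaussianReal 0 1)) := by
  simp only [WB_eq']
  refine (sum_fZ_sq_le h0 h1 hx hfm hf hfi (s := Finset.range n)
    (fun k hk => Finset.mem_range.1 hk) (A := rn n * ∑ j ∈ Finset.range m, |θ j|)
    (fun k _ => ?_)).trans ?_
  · rw [abs_mul, abs_of_nonneg (rn_nonneg n)]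
    exact mul_le_mul_of_nonneg_left (abs_wt_le _ _ _ _) (rn_nonneg n)
  · rw [mul_pow, rn_sq, Finset.card_range]
    have h2 : 0 ≤ (∑ j ∈ Finset.range m, |θ j|) ^ 2 *
      (rhoSum ν * ∫ t, f t ^ 2 ∂(gaussianReal 0 1)) :=
      mul_nonneg (sq_nonneg _) (mul_nonneg (rhoSum_nonneg ν) (integral_nonneg fun t => sq_nonneg _))
    rcases Nat.eq_zero_or_pos n with rfl | hn
    · simpa using h2
    · have : (n : ℝ) ≠ 0 := by positivity
      refine le_of_eq ?_
      field_simp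

omit [IsProbabilityMeasure P] in
lemma aesm_WB (hx : IsFBM P ν x) {f : ℝ → ℝ} (hfm : Measurable f) (m : ℕ) (θ : ℕ → ℝ) (n : ℕ) :
    Measurable (WB x ν f m θ n) := by
  have hZ : ∀ k, Measurable (Zinc x ν n k) := fun k => by
    unfold Zinc
    exact ((hx.1 _).sub (hx.1 _)).const_mul _
  unfold WB
  exact (Finset.measurable_fun_sum _ fun j _ => (Finset.measurable_fun_sum _ fun k _ =>
    hfm.comp (hZ k)).const_mul _).const_mul _
end wclt

/-! ### Deterministic block weights -/

section dclt
variable {P : Measure Ω} [IsProbabilityMeasure P] {ν : ℝ} {x : ℝ → Ω → ℝ}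

lemma measurable_hermSum (f : ℝ → ℝ) (N : ℕ) : Measurable (hermSum f N) := by
  unfold hermSum
  exact Finset.measurable_fun_sum _ fun q _ => (measurable_Hq q).const_mul _

lemma integral_hermSum_eq_zero {f : ℝ → ℝ} (hf0 : hermCoeff f 0 = 0) (N : ℕ) :
    ∫ t, hermSum f N t ∂(gaussianReal 0 1) = 0 := by
  unfold hermSum
  rw [integral_finsetSum _ fun q _ => ((allLp_std.Hq q).const_mul _).integrable]
  refine Finset.sum_eq_zero fun q _ => ?_
  rw [integral_const_mul]
  rcases q with _ | q
  · simp [hf0]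
  · have := hermite_orth_std (q + 1) 0
    simp only [Hq_zero, mul_one] at this
    simp [this]

/-- An `L²` perturbation of the phase changes the integral by at most `M` times its `L²` norm. -/
lemma norm_integral_cexp_sub_le {F : Ω → ℂ} (hFm : AEStronglyMeasurable F P) {M : ℝ}
    (hM : ∀ ω, ‖F ω‖ ≤ M) {f g : Ω → ℝ} (hf : AEStronglyMeasurable f P) (hg : AEStronglyMeasurable g P)
    (hfg : MemLp (fun ω => f ω - g ω) 2 P) :
    ‖∫ ω, F ω * Complex.exp (Complex.I * (f ω : ℂ)) ∂P -
      ∫ ω, F ω * Complex.exp (Complex.I * (g ω : ℂ)) ∂P‖ ≤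
      M * Real.sqrt (∫ ω, (f ω - g ω) ^ 2 ∂P) := by
  have hF : Integrable F P := Integrable.of_bound hFm M (ae_of_all _ hM)
  have h1 : ∀ {f : Ω → ℝ}, AEStronglyMeasurable f P →
      Integrable (fun ω => F ω * Complex.exp (Complex.I * (f ω : ℂ))) P := fun {f} hf =>
    hF.mul_bdd (c := 1) (aesm_cexp hf) (ae_of_all _ fun ω => (norm_cexp_I (f ω)).le)
  have hM0 : 0 ≤ M := by
    have : Nonempty Ω := P.nonempty_of_neZero
    exact (norm_nonneg _).trans (hM (Classical.arbitrary Ω))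
  rw [← integral_sub (h1 hf) (h1 hg)]
  refine (norm_integral_le_integral_norm _).trans ?_
  refine (integral_mono_of_nonneg (ae_of_all _ fun ω => norm_nonneg _)
    ((memLp_abs hfg).integrable (by norm_num) |>.const_mul M) (ae_of_all _ fun ω => ?_)).trans ?_
  · simp only
    rw [← mul_sub, norm_mul]
    exact mul_le_mul (hM ω) (norm_cexp_sub_le _ _) (norm_nonneg _) hM0
  · rw [integral_const_mul]
    exact mul_le_mul_of_nonneg_left (integral_abs_le_sqrt hfg) hM0

/-- Joint stable convergence of the block sums, with deterministic weights. -/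
lemma det_clt (h0 : 0 < ν) (h1 : ν ≤ 1 / 2) (hx : IsFBM P ν x) {f : ℝ → ℝ} (hfm : Measurable f)
    (hf : MemLp f 2 (gaussianReal 0 1)) (hf0 : hermCoeff f 0 = 0) (hf1 : hermCoeff f 1 = 0)
    {m : ℕ} (hm : 0 < m) (θ : ℕ → ℝ) {F : Ω → ℂ} (hFm : AEStronglyMeasurable F P) {M : ℝ}
    (hM : ∀ ω, ‖F ω‖ ≤ M) :
    Tendsto (fun n => ∫ ω, F ω * Complex.exp (Complex.I * (WB x ν f m θ n ω : ℂ)) ∂P) atTop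
      (nhds ((∫ ω, F ω ∂P) *
        ((Real.exp (-(sig2 ν f * ((m : ℝ)⁻¹ * ∑ j ∈ Finset.range m, θ j ^ 2) / 2)) : ℝ) : ℂ))) := by
  set W := ∑ j ∈ Finset.range m, |θ j|
  have hfi : ∫ t, f t ∂(gaussianReal 0 1) = 0 := by
    simpa [hermCoeff, Hq_zero] using hf0
  have hs : ∀ N, MemLp (hermSum f N) 2 (gaussianReal 0 1) := fun N => (allLp_hermSum f N).two
  refine tendsto_approx (A := fun N n => ∫ ω, F ω *
      Complex.exp (Complex.I * (WB x ν (hermSum f N) m θ n ω : ℂ)) ∂P)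
    (b := fun N => (∫ ω, F ω ∂P) * ((Real.exp (-((∑' d, rN ν f N d) *
      ((m : ℝ)⁻¹ * ∑ j ∈ Finset.range m, θ j ^ 2) / 2)) : ℝ) : ℂ))
    (δ := fun N => M * Real.sqrt (W ^ 2 * (rhoSum ν *
      ∫ t, (f t - hermSum f N t) ^ 2 ∂(gaussianReal 0 1)))) ?_ ?_ ?_ ?_
  -- The sum at level `0` vanishes, so that `poly_clt` with `k0 = 0` is the central limit
  -- theorem itself.
  · refine Eventually.of_forall fun N => mixing
      (fun n => (aesm_WB hx (measurable_hermSum f N) m θ n).aestronglyMeasurable) _ ?_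
      (fun k => poly_clt h0 h1 hx hf0 hf1 N hm θ k)
      (MemLp.of_bound hFm M (ae_of_all _ hM))
    have := poly_clt h0 h1 hx hf0 hf1 N hm θ 0
    simpa [WB_zero] using this
  · refine Eventually.of_forall fun N => Eventually.of_forall fun n => ?_
    have e : ∀ ω, WB x ν f m θ n ω - WB x ν (hermSum f N) m θ n ω =
        WB x ν (fun t => f t - hermSum f N t) m θ n ω := by
      intro ω
      simp only [WB_eq', ← Finset.sum_sub_distrib, mul_sub]
    have hd : MemLp (fun t => f t - hermSum f N t) 2 (gaussianReal 0 1) := hf.sub (hs N)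
    have hL : MemLp (WB x ν (fun t => f t - hermSum f N t) m θ n) 2 P := by
      have : WB x ν (fun t => f t - hermSum f N t) m θ n = fun ω => ∑ k ∈ Finset.range n,
          (rn n * wt n m θ k) * (fun t => f t - hermSum f N t) (Zinc x ν n k ω) :=
        funext fun ω => WB_eq' _ _ _ _ _
      rw [this]
      exact memLp_finsetSum _ fun k hk => (memLp_fZ h0 hx hd (Finset.mem_range.1 hk)).const_mul _
    refine (norm_integral_cexp_sub_le hFm hM (aesm_WB hx hfm m θ n).aestronglyMeasurable
      (aesm_WB hx (measurable_hermSum f N) m θ n).aestronglyMeasurable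
      (by simp only [e]; exact hL)).trans ?_
    refine mul_le_mul_of_nonneg_left (Real.sqrt_le_sqrt ?_) ?_
    · simp only [e]
      refine WB_sq_le h0 h1 hx (hfm.sub (measurable_hermSum f N)) hd ?_ m θ n
      simp only [Pi.sub_apply]
      rw [integral_sub (hf.integrable (by norm_num)) ((hs N).integrable (by norm_num)), hfi,
        integral_hermSum_eq_zero hf0, sub_zero]
    · have : Nonempty Ω := P.nonempty_of_neZero
      exact (norm_nonneg _).trans (hM (Classical.arbitrary Ω))
  · have := ((((tendsto_hermSum hf).const_mul (rhoSum ν)).const_mul (W ^ 2)).sqrt).const_mul M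
    simpa using this
  · refine Tendsto.const_mul _ ((Complex.continuous_ofReal.tendsto _).comp
      ((Real.continuous_exp.tendsto _).comp ?_))
    exact (((tendsto_sig2 h0 h1 hf hf0).mul_const _).div_const 2).neg
end dclt

/-! ### Perturbation of random weights -/

section rclt
variable {P : Measure Ω} [IsProbabilityMeasure P] {ν : ℝ} {x : ℝ → Ω → ℝ}

lemma norm_bound_nonneg {F : Ω → ℂ} {M : ℝ} (hM : ∀ ω, ‖F ω‖ ≤ M) (P : Measure Ω)
    [IsProbabilityMeasure P] : 0 ≤ M := by
  have : Nonempty Ω := P.nonempty_of_neZero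
  exact (norm_nonneg _).trans (hM (Classical.arbitrary Ω))

lemma min_sq_integrable {u : Ω → ℝ} (hu : AEStronglyMeasurable u P) :
    MemLp (fun ω => min 1 |u ω|) 2 P := by
  have : Continuous fun t : ℝ => min 1 |t| := by fun_prop
  refine MemLp.of_bound (this.comp_aestronglyMeasurable hu) 1 (ae_of_all _ fun ω => ?_)
  rw [Real.norm_of_nonneg (by positivity)]
  exact min_le_left _ _

lemma sq_two_add_le {v : Ω → ℝ} (hv : MemLp v 2 P) :
    ∫ ω, (2 + |v ω|) ^ 2 ∂P ≤ 8 + 2 * ∫ ω, v ω ^ 2 ∂P := by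
  have hv2 : MemLp (fun ω => 2 + |v ω|) 2 P := (memLp_const (2 : ℝ)).add (memLp_abs hv)
  have hi : Integrable (fun ω => 2 * v ω ^ 2) P := hv.integrable_sq.const_mul 2
  have : ∫ ω, (2 + |v ω|) ^ 2 ∂P ≤ ∫ ω, (8 + 2 * v ω ^ 2) ∂P := by
    refine integral_mono hv2.integrable_sq (int_add (integrable_const 8) hi) fun ω => ?_
    simp only
    nlinarith [sq_nonneg (2 - |v ω|), sq_abs (v ω)]
  rw [integral_add (integrable_const _) hi, integral_const_mul] at this
  simpa using this

/-- A perturbation `∑ u_j v_j` of the phase, with `u_j` small in probability and `v_j` bounded in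
`L²`, has a small effect; no integrability of `u_j` is needed. -/
lemma prod_diff {F : Ω → ℂ} (hFm : AEStronglyMeasurable F P) {M : ℝ} (hM : ∀ ω, ‖F ω‖ ≤ M)
    {a b : Ω → ℝ} (ha : AEStronglyMeasurable a P) (hb : AEStronglyMeasurable b P) {κ : Type*}
    {s : Finset κ} {u v : κ → Ω → ℝ} (h : ∀ ω, |a ω - b ω| ≤ ∑ j ∈ s, |u j ω| * |v j ω|)
    (hu : ∀ j ∈ s, AEStronglyMeasurable (u j) P) (hv : ∀ j ∈ s, MemLp (v j) 2 P) {V : ℝ}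
    (hV : ∀ j ∈ s, ∫ ω, v j ω ^ 2 ∂P ≤ V) :
    ‖∫ ω, F ω * Complex.exp (Complex.I * (a ω : ℂ)) ∂P -
      ∫ ω, F ω * Complex.exp (Complex.I * (b ω : ℂ)) ∂P‖ ≤
      M * ∑ j ∈ s, Real.sqrt (∫ ω, (min 1 |u j ω|) ^ 2 ∂P) * Real.sqrt (8 + 2 * V) := by
  have hF : Integrable F P := Integrable.of_bound hFm M (ae_of_all _ hM)
  have h1 : ∀ {f : Ω → ℝ}, AEStronglyMeasurable f P →
      Integrable (fun ω => F ω * Complex.exp (Complex.I * (f ω : ℂ))) P := fun {f} hf =>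
    hF.mul_bdd (c := 1) (aesm_cexp hf) (ae_of_all _ fun ω => (norm_cexp_I (f ω)).le)
  have hM0 := norm_bound_nonneg hM P
  have hv2 : ∀ j ∈ s, MemLp (fun ω => 2 + |v j ω|) 2 P := fun j hj =>
    (memLp_const (2 : ℝ)).add (memLp_abs (hv j hj))
  have hi : ∀ j ∈ s, Integrable (fun ω => min 1 |u j ω| * (2 + |v j ω|)) P := fun j hj =>
    int_mul (min_sq_integrable (hu j hj)) (hv2 j hj)
  rw [← integral_sub (h1 ha) (h1 hb)]
  refine (norm_integral_le_integral_norm _).trans ?_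
  refine (integral_mono_of_nonneg (g := fun ω => M * ∑ j ∈ s, min 1 |u j ω| * (2 + |v j ω|))
    (ae_of_all _ fun ω => norm_nonneg _)
    ((integrable_finsetSum _ hi).const_mul M) (ae_of_all _ fun ω => ?_)).trans ?_
  · simp only
    rw [← mul_sub, norm_mul]
    refine mul_le_mul (hM ω) ?_ (norm_nonneg _) hM0
    -- If all `|u j| ≤ 1`, the exponential is Lipschitz; otherwise the trivial bound `2`
    -- suffices.
    by_cases hc : ∀ j ∈ s, |u j ω| ≤ 1
    · refine ((norm_cexp_sub_le _ _).trans (h ω)).trans (Finset.sum_le_sum fun j hj => ?_)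
      rw [min_eq_right (hc j hj)]
      nlinarith [abs_nonneg (u j ω)]
    · push Not at hc
      obtain ⟨j, hj, h1⟩ := hc
      have h2 : min 1 |u j ω| * (2 + |v j ω|) ≤ ∑ j ∈ s, min 1 |u j ω| * (2 + |v j ω|) :=
        Finset.single_le_sum (f := fun j => min 1 |u j ω| * (2 + |v j ω|))
          (fun i _ => by positivity) hj
      rw [min_eq_left h1.le] at h2
      refine (norm_sub_le _ _).trans ?_
      rw [norm_cexp_I, norm_cexp_I]
      linarith [abs_nonneg (v j ω)]
  · rw [integral_const_mul, integral_finsetSum _ hi]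
    refine mul_le_mul_of_nonneg_left (Finset.sum_le_sum fun j hj => ?_) hM0
    refine (le_abs_self _).trans ((abs_integral_mul_le (min_sq_integrable (hu j hj))
      (hv2 j hj)).trans ?_)
    refine mul_le_mul_of_nonneg_left (Real.sqrt_le_sqrt ?_) (Real.sqrt_nonneg _)
    have := sq_two_add_le (hv j hj)
    linarith [hV j hj]

/-- Normalized sum of `f` over the `j`-th block. -/
def Bk (x : ℝ → Ω → ℝ) (ν : ℝ) (f : ℝ → ℝ) (m n j : ℕ) (ω : Ω) : ℝ :=
  rn n * ∑ k ∈ Finset.Ico (blk n m j) (blk n m (j + 1)), f (Zinc x ν n k ω)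

omit [MeasurableSpace Ω] in
lemma WB_lin (f : ℝ → ℝ) (m : ℕ) (θ : ℕ → ℝ) (n : ℕ) (ω : Ω) :
    WB x ν f m θ n ω = ∑ j ∈ Finset.range m, θ j * Bk x ν f m n j ω := by
  rw [WB, Finset.mul_sum]
  exact Finset.sum_congr rfl fun j _ => by rw [Bk]; ring

omit [IsProbabilityMeasure P] in
lemma measurable_Zinc (hx : IsFBM P ν x) (n k : ℕ) : Measurable (Zinc x ν n k) := by
  unfold Zinc
  exact ((hx.1 _).sub (hx.1 _)).const_mul _

omit [IsProbabilityMeasure P] in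
lemma measurable_Bk (hx : IsFBM P ν x) {f : ℝ → ℝ} (hfm : Measurable f) (m n j : ℕ) :
    Measurable (Bk x ν f m n j) :=
  (Finset.measurable_fun_sum _ fun k _ => hfm.comp (measurable_Zinc hx n k)).const_mul _

lemma memLp_Bk (h0 : 0 < ν) (hx : IsFBM P ν x) {f : ℝ → ℝ} (hf : MemLp f 2 (gaussianReal 0 1))
    {m j : ℕ} (hj : j < m) (n : ℕ) : MemLp (Bk x ν f m n j) 2 P :=
  (memLp_finsetSum _ fun k hk => memLp_fZ h0 hx hf (blk_lt hj hk)).const_mul _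

/-- Second moment of a normalized sum over a set of indices. -/
lemma rn_sum_sq_le (h0 : 0 < ν) (h1 : ν ≤ 1 / 2) (hx : IsFBM P ν x) {f : ℝ → ℝ}
    (hfm : Measurable f) (hf : MemLp f 2 (gaussianReal 0 1))
    (hfi : ∫ t, f t ∂(gaussianReal 0 1) = 0) {n : ℕ} {s : Finset ℕ} (hs : ∀ k ∈ s, k < n) :
    ∫ ω, (rn n * ∑ k ∈ s, f (Zinc x ν n k ω)) ^ 2 ∂P ≤
      (s.card : ℝ) / n * (rhoSum ν * ∫ t, f t ^ 2 ∂(gaussianReal 0 1)) := by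
  have := sum_fZ_sq_le h0 h1 hx hfm hf hfi hs (a := fun _ => rn n) (A := rn n)
    (fun k _ => (abs_of_nonneg (rn_nonneg n)).le)
  simp only [← Finset.mul_sum] at this
  refine this.trans (le_of_eq ?_)
  rw [rn_sq]; ring

lemma Bk_sq_le (h0 : 0 < ν) (h1 : ν ≤ 1 / 2) (hx : IsFBM P ν x) {f : ℝ → ℝ}
    (hfm : Measurable f) (hf : MemLp f 2 (gaussianReal 0 1))
    (hfi : ∫ t, f t ∂(gaussianReal 0 1) = 0) {m j : ℕ} (hj : j < m) (n : ℕ) :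
    ∫ ω, Bk x ν f m n j ω ^ 2 ∂P ≤ rhoSum ν * ∫ t, f t ^ 2 ∂(gaussianReal 0 1) := by
  refine (rn_sum_sq_le h0 h1 hx hfm hf hfi fun k hk => blk_lt hj hk).trans ?_
  refine mul_le_of_le_one_left (mul_nonneg (rhoSum_nonneg ν)
    (integral_nonneg fun t => sq_nonneg _)) (div_le_one_of_le₀ ?_ (by positivity))
  have := blk_le n (by omega : 0 < m) (Nat.succ_le_of_lt hj)
  rw [Nat.card_Ico]
  exact_mod_cast (Nat.sub_le _ _).trans this

/-- Almost sure convergence to zero implies convergence in the truncated `L²` sense. -/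
lemma tendsto_min_sq {u : ℕ → Ω → ℝ} (hu : ∀ n, AEStronglyMeasurable (u n) P)
    (h : ∀ᵐ ω ∂P, Tendsto (fun n => u n ω) atTop (nhds 0)) :
    Tendsto (fun n => ∫ ω, (min 1 |u n ω|) ^ 2 ∂P) atTop (nhds 0) := by
  have := tendsto_integral_of_dominated_convergence (μ := P)
    (F := fun n ω => (min 1 |u n ω|) ^ 2) (f := fun _ => 0) (fun _ => (1 : ℝ))
    (fun n => (min_sq_integrable (hu n)).integrable_sq.1) (integrable_const _)
    (fun n => ae_of_all _ fun ω => by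
      rw [Real.norm_of_nonneg (by positivity)]
      exact pow_le_one₀ (by positivity) (min_le_left _ _)) ?_
  · simpa using this
  · filter_upwards [h] with ω hω
    have : Continuous fun t : ℝ => (min 1 |t|) ^ 2 := by fun_prop
    simpa [Function.comp_def] using (this.tendsto 0).comp hω
end rclt

/-! ### Random block weights -/

section rclt2
variable {P : Measure Ω} [IsProbabilityMeasure P] {ν : ℝ} {x : ℝ → Ω → ℝ}

omit [IsProbabilityMeasure P] in
lemma measurable_WB_random (hx : IsFBM P ν x) {f : ℝ → ℝ} (hfm : Measurable f) (m n : ℕ)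
    {Y : Ω → ℕ → ℝ} (hY : Measurable Y) : Measurable (fun ω => WB x ν f m (Y ω) n ω) := by
  simp only [WB_lin]
  exact Finset.measurable_fun_sum _ fun j _ =>
    ((measurable_pi_apply j).comp hY).mul (measurable_Bk hx hfm m n j)

/-- The limiting characteristic function, at one, of the sum with variance parameter `s2` and
weights `θ` on `m` blocks of equal length. -/
def gfac (s2 : ℝ) (m : ℕ) (θ : ℕ → ℝ) : ℝ :=
  Real.exp (-(s2 * ((m : ℝ)⁻¹ * ∑ j ∈ Finset.range m, θ j ^ 2) / 2))

lemma gfac_nonneg (s2 : ℝ) (m : ℕ) (θ : ℕ → ℝ) : 0 ≤ gfac s2 m θ := (Real.exp_pos _).le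

lemma gfac_le_one {s2 : ℝ} (h : 0 ≤ s2) (m : ℕ) (θ : ℕ → ℝ) : gfac s2 m θ ≤ 1 := by
  rw [gfac, Real.exp_le_one_iff, neg_nonpos]
  have : 0 ≤ ∑ j ∈ Finset.range m, θ j ^ 2 := Finset.sum_nonneg fun _ _ => sq_nonneg _
  positivity

lemma continuous_gfac (s2 : ℝ) (m : ℕ) : Continuous (gfac s2 m) := by
  unfold gfac; fun_prop

omit [IsProbabilityMeasure P] in
/-- Splitting an integral along the values of a simple function. -/
lemma integral_simpleFunc_split (S : SimpleFunc Ω (ℕ → ℝ)) {g : (ℕ → ℝ) → Ω → ℂ}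
    (hg : ∀ v, Integrable (g v) P) :
    ∫ ω, g (S ω) ω ∂P = ∑ v ∈ S.range, ∫ ω, Set.indicator (S ⁻¹' {v}) (g v) ω ∂P := by
  rw [← integral_finsetSum _ fun v _ => (hg v).indicator (S.measurableSet_fiber v)]
  refine integral_congr_ae (ae_of_all _ fun ω => ?_)
  simp only
  rw [Finset.sum_eq_single (S ω)]
  · rw [Set.indicator_of_mem (by simp)]
  · intro v _ hv
    rw [Set.indicator_of_notMem]
    simpa using fun h => hv h.symm
  · intro h; exact absurd (S.mem_range_self ω) h

/-- Stable convergence when the weight vector is a simple random variable: split along its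
finitely many values `v` and apply `det_clt` with `F` restricted to the event where the weights
equal `v`. -/
lemma simple_clt (h0 : 0 < ν) (h1 : ν ≤ 1 / 2) (hx : IsFBM P ν x) {f : ℝ → ℝ} (hfm : Measurable f)
    (hf : MemLp f 2 (gaussianReal 0 1)) (hf0 : hermCoeff f 0 = 0) (hf1 : hermCoeff f 1 = 0)
    {m : ℕ} (hm : 0 < m) (S : SimpleFunc Ω (ℕ → ℝ)) {F : Ω → ℂ} (hFm : AEStronglyMeasurable F P)
    {M : ℝ} (hM : ∀ ω, ‖F ω‖ ≤ M) :
    Tendsto (fun n => ∫ ω, F ω * Complex.exp (Complex.I * (WB x ν f m (S ω) n ω : ℂ)) ∂P) atTop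
      (nhds (∫ ω, F ω * (gfac (sig2 ν f) m (S ω) : ℂ) ∂P)) := by
  have hF : Integrable F P := Integrable.of_bound hFm M (ae_of_all _ hM)
  have hM0 := norm_bound_nonneg hM P
  have e1 : ∀ n, ∫ ω, F ω * Complex.exp (Complex.I * (WB x ν f m (S ω) n ω : ℂ)) ∂P =
      ∑ v ∈ S.range, ∫ ω, Set.indicator (S ⁻¹' {v}) F ω *
        Complex.exp (Complex.I * (WB x ν f m v n ω : ℂ)) ∂P := by
    intro n
    rw [integral_simpleFunc_split S (g := fun v ω => F ω *
      Complex.exp (Complex.I * (WB x ν f m v n ω : ℂ))) fun v => hF.mul_bdd (c := 1)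
        (aesm_cexp (aesm_WB hx hfm m v n).aestronglyMeasurable)
        (ae_of_all _ fun ω => (norm_cexp_I _).le)]
    refine Finset.sum_congr rfl fun v _ => integral_congr_ae (ae_of_all _ fun ω => ?_)
    simp only [Set.indicator_mul_left]
  have e2 : ∫ ω, F ω * (gfac (sig2 ν f) m (S ω) : ℂ) ∂P =
      ∑ v ∈ S.range, (∫ ω, Set.indicator (S ⁻¹' {v}) F ω ∂P) * (gfac (sig2 ν f) m v : ℂ) := by
    rw [integral_simpleFunc_split S (g := fun v ω => F ω * (gfac (sig2 ν f) m v : ℂ))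
      fun v => hF.mul_const _]
    refine Finset.sum_congr rfl fun v _ => ?_
    rw [← integral_mul_const]
    refine integral_congr_ae (ae_of_all _ fun ω => ?_)
    simp only [Set.indicator_mul_left]
  simp only [e1, e2]
  refine tendsto_finsetSum _ fun v _ => det_clt h0 h1 hx hfm hf hf0 hf1 hm v (M := M)
    (hFm.indicator (S.measurableSet_fiber v)) fun ω => ?_
  exact (norm_indicator_le_norm_self _ _).trans (hM ω)

/-- Stable convergence of the block sums with random weights. -/
lemma random_clt (h0 : 0 < ν) (h1 : ν ≤ 1 / 2) (hx : IsFBM P ν x) {f : ℝ → ℝ} (hfm : Measurable f)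
    (hf : MemLp f 2 (gaussianReal 0 1)) (hf0 : hermCoeff f 0 = 0) (hf1 : hermCoeff f 1 = 0)
    (hs : 0 ≤ sig2 ν f)
    {m : ℕ} (hm : 0 < m) {Y : Ω → ℕ → ℝ} (hY : Measurable Y) {F : Ω → ℂ}
    (hFm : AEStronglyMeasurable F P) {M : ℝ} (hM : ∀ ω, ‖F ω‖ ≤ M) :
    Tendsto (fun n => ∫ ω, F ω * Complex.exp (Complex.I * (WB x ν f m (Y ω) n ω : ℂ)) ∂P) atTop
      (nhds (∫ ω, F ω * (gfac (sig2 ν f) m (Y ω) : ℂ) ∂P)) := by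
  have hYs : StronglyMeasurable Y := hY.stronglyMeasurable
  have hM0 := norm_bound_nonneg hM P
  have hfi : ∫ t, f t ∂(gaussianReal 0 1) = 0 := by simpa [hermCoeff, Hq_zero] using hf0
  set V := rhoSum ν * ∫ t, f t ^ 2 ∂(gaussianReal 0 1)
  have hmY : ∀ j, Measurable fun ω => Y ω j := fun j => (measurable_pi_apply j).comp hY
  have hmS : ∀ N j, Measurable fun ω => hYs.approx N ω j := fun N j =>
    (measurable_pi_apply j).comp (hYs.approx N).measurable
  -- Approximation of the weights by simple random variables.
  refine tendsto_approx (A := fun N n => ∫ ω, F ω *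
      Complex.exp (Complex.I * (WB x ν f m (hYs.approx N ω) n ω : ℂ)) ∂P)
    (b := fun N => ∫ ω, F ω * (gfac (sig2 ν f) m (hYs.approx N ω) : ℂ) ∂P)
    (δ := fun N => M * ∑ j ∈ Finset.range m,
      Real.sqrt (∫ ω, (min 1 |Y ω j - hYs.approx N ω j|) ^ 2 ∂P) * Real.sqrt (8 + 2 * V))
    (Eventually.of_forall fun N => simple_clt h0 h1 hx hfm hf hf0 hf1 hm (hYs.approx N) hFm hM)
    (Eventually.of_forall fun N => Eventually.of_forall fun n => ?_) ?_ ?_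
  · refine prod_diff hFm hM (measurable_WB_random hx hfm m n hY).aestronglyMeasurable
      (measurable_WB_random hx hfm m n (hYs.approx N).measurable).aestronglyMeasurable
      (u := fun j ω => Y ω j - hYs.approx N ω j) (v := fun j => Bk x ν f m n j) (fun ω => ?_)
      (fun j _ => ((hmY j).sub (hmS N j)).aestronglyMeasurable)
      (fun j hj => memLp_Bk h0 hx hf (Finset.mem_range.1 hj) n)
      (fun j hj => Bk_sq_le h0 h1 hx hfm hf hfi (Finset.mem_range.1 hj) n)
    rw [WB_lin, WB_lin, ← Finset.sum_sub_distrib]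
    refine (Finset.abs_sum_le_sum_abs _ _).trans (Finset.sum_le_sum fun j _ => ?_)
    rw [← sub_mul, abs_mul]
  · have : ∀ j, Tendsto (fun N => Real.sqrt (∫ ω, (min 1 |Y ω j - hYs.approx N ω j|) ^ 2 ∂P) *
        Real.sqrt (8 + 2 * V)) atTop (nhds 0) := by
      intro j
      have h := (tendsto_min_sq (P := P) (u := fun N ω => Y ω j - hYs.approx N ω j)
        (fun N => ((hmY j).sub (hmS N j)).aestronglyMeasurable)
        (ae_of_all _ fun ω => ?_)).sqrt.mul_const (Real.sqrt (8 + 2 * V))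
      · simpa using h
      · have := ((tendsto_pi_nhds.1 (hYs.tendsto_approx ω)) j).const_sub (Y ω j)
        simpa using this
    simpa using (tendsto_finsetSum (Finset.range m) fun j _ => this j).const_mul M
  · refine tendsto_integral_of_dominated_convergence (fun _ => M) (fun N => ?_)
      (integrable_const _) (fun N => ae_of_all _ fun ω => ?_) (ae_of_all _ fun ω => ?_)
    · exact hFm.mul ((Complex.continuous_ofReal.comp (continuous_gfac _ m)).measurable.comp
        (hYs.approx N).measurable).aestronglyMeasurable
    · rw [norm_mul, Complex.norm_real, Real.norm_of_nonneg (gfac_nonneg _ _ _)]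
      exact (mul_le_of_le_one_right (norm_nonneg _) (gfac_le_one hs m _)).trans (hM ω)
    · exact (((Complex.continuous_ofReal.comp (continuous_gfac _ m)).tendsto _).comp
        (hYs.tendsto_approx ω)).const_mul _
end rclt2

/-! ### Second moments of first-order sums -/

section ibp2
variable {P : Measure Ω} {ι : Type*} [Fintype ι] {X : ι → Ω → ℝ}

lemma hasDerivAt_shift {F F' : ℝ → ℝ} (hF : ∀ t, HasDerivAt F (F' t) t) (a c : ℝ) :
    HasDerivAt (fun t : ℝ => F (a + t * c)) (c * F' a) 0 := by
  have h1 : HasDerivAt (fun t : ℝ => a + t * c) c 0 := by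
    simpa using ((hasDerivAt_id (0 : ℝ)).mul_const c).const_add a
  have h2 : HasDerivAt F (F' a) (a + 0 * c) := by simpa using hF a
  have := h2.comp (0 : ℝ) h1
  rw [mul_comm]; exact this

lemma CG.ibp_prod (hX : CG P X) (a k l : ι) {F F' G G' : ℝ → ℝ}
    (hF : ∀ t, HasDerivAt F (F' t) t) (hG : ∀ t, HasDerivAt G (G' t) t)
    (mF : Measurable F) (mF' : Measurable F') (mG : Measurable G) (mG' : Measurable G')
    (iF : AllLp P (fun ω => F (X k ω))) (iF' : AllLp P (fun ω => F' (X k ω)))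
    (iG : AllLp P (fun ω => G (X l ω))) (iG' : AllLp P (fun ω => G' (X l ω))) :
    ∫ ω, X a ω * (F (X k ω) * G (X l ω)) ∂P =
      cov[X a, X k; P] * ∫ ω, F' (X k ω) * G (X l ω) ∂P +
      cov[X a, X l; P] * ∫ ω, F (X k ω) * G' (X l ω) ∂P := by
  have h := hX.ibp a (Φ := fun z => F (z k) * G (z l))
    (D := fun z => cov[X a, X k; P] * (F' (z k) * G (z l)) +
      cov[X a, X l; P] * (F (z k) * G' (z l))) (by fun_prop) (by fun_prop)
    (fun z => by
      have := (hasDerivAt_shift hF (z k) (cov[X a, X k; P])).mul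
        (hasDerivAt_shift hG (z l) (cov[X a, X l; P]))
      refine this.congr_deriv ?_
      simp; ring) (iF.mul iG) (((iF'.mul iG).const_mul _).add ((iF.mul iG').const_mul _))
  rw [h, integral_add ((iF'.mul iG).const_mul _).integrable ((iF.mul iG').const_mul _).integrable,
    integral_const_mul, integral_const_mul]

lemma CG.ibp_prod' (hX : CG P X) (a b k l : ι) {F F' G G' : ℝ → ℝ}
    (hF : ∀ t, HasDerivAt F (F' t) t) (hG : ∀ t, HasDerivAt G (G' t) t)
    (mF : Measurable F) (mF' : Measurable F') (mG : Measurable G) (mG' : Measurable G')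
    (iF : AllLp P (fun ω => F (X k ω))) (iF' : AllLp P (fun ω => F' (X k ω)))
    (iG : AllLp P (fun ω => G (X l ω))) (iG' : AllLp P (fun ω => G' (X l ω))) :
    ∫ ω, X a ω * (X b ω * (F (X k ω) * G (X l ω))) ∂P =
      cov[X a, X b; P] * ∫ ω, F (X k ω) * G (X l ω) ∂P +
      cov[X a, X k; P] * ∫ ω, X b ω * (F' (X k ω) * G (X l ω)) ∂P +
      cov[X a, X l; P] * ∫ ω, X b ω * (F (X k ω) * G' (X l ω)) ∂P := by
  have ib := hX.allLp b
  have j1 := (iF.mul iG).const_mul (cov[X a, X b; P])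
  have j2 := (ib.mul (iF'.mul iG)).const_mul (cov[X a, X k; P])
  have j3 := (ib.mul (iF.mul iG')).const_mul (cov[X a, X l; P])
  have h := hX.ibp a (Φ := fun z => z b * (F (z k) * G (z l)))
    (D := fun z => cov[X a, X b; P] * (F (z k) * G (z l)) +
      cov[X a, X k; P] * (z b * (F' (z k) * G (z l))) +
      cov[X a, X l; P] * (z b * (F (z k) * G' (z l)))) (by fun_prop) (by fun_prop)
    (fun z => by
      have := (hasDerivAt_shift (F := fun t => t) hasDerivAt_id (z b) (cov[X a, X b; P])).mul
        ((hasDerivAt_shift hF (z k) (cov[X a, X k; P])).mul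
        (hasDerivAt_shift hG (z l) (cov[X a, X l; P])))
      refine this.congr_deriv ?_
      simp; ring) (ib.mul (iF.mul iG)) ((j1.add j2).add j3)
  rw [h, integral_add (j1.add j2).integrable j3.integrable,
    integral_add j1.integrable j2.integrable,
    integral_const_mul, integral_const_mul, integral_const_mul]

/-- The `L²(γ)` norm. -/
def gnorm (f : ℝ → ℝ) : ℝ := Real.sqrt (∫ t, f t ^ 2 ∂(gaussianReal 0 1))

lemma gnorm_nonneg (f : ℝ → ℝ) : 0 ≤ gnorm f := Real.sqrt_nonneg _

/-- Two integrations by parts followed by Gebelein's inequality: multiplying `f(X_k) f(X_l)` by two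
further Gaussian factors keeps the covariance of `X_k` and `X_l` as a factor in the bound. -/
lemma CG.quad_bound (hX : CG P X) (a b : ι) {k l : ι} {f f1 f2 : ℝ → ℝ}
    (hk : cov[X k, X k; P] = 1) (hl : cov[X l, X l; P] = 1)
    (hf : ∀ t, HasDerivAt f (f1 t) t) (hf1 : ∀ t, HasDerivAt f1 (f2 t) t)
    (mf : Measurable f) (mf1 : Measurable f1) (mf2 : Measurable f2)
    (gf : AllLp (gaussianReal 0 1) f) (gf1 : AllLp (gaussianReal 0 1) f1)
    (gf2 : AllLp (gaussianReal 0 1) f2)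
    (z : ∫ t, f t ∂(gaussianReal 0 1) = 0) (z1 : ∫ t, f1 t ∂(gaussianReal 0 1) = 0)
    {L : ℝ} (hL : 1 ≤ L) (cab : |cov[X a, X b; P]| ≤ L) (cak : |cov[X a, X k; P]| ≤ 1)
    (cal : |cov[X a, X l; P]| ≤ 1) (cbk : |cov[X b, X k; P]| ≤ 1) (cbl : |cov[X b, X l; P]| ≤ 1) :
    |∫ ω, X a ω * (X b ω * (f (X k ω) * f (X l ω))) ∂P| ≤ |cov[X k, X l; P]| *
      (L * (gnorm f * gnorm f + 2 * (gnorm f * gnorm f2) + 2 * (gnorm f1 * gnorm f1))) := by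
  have comp : ∀ {u : ℝ → ℝ}, AllLp (gaussianReal 0 1) u → ∀ {i : ι}, cov[X i, X i; P] = 1 →
      AllLp P (fun ω => u (X i ω)) := fun hu i hi r => hX.memLp_comp hi (hu r)
  have hc := hX.abs_cov_le_one hk hl
  -- After two integrations by parts, every term is a product of covariances with an expectation
  -- of derivatives of `f` at `X k` and `X l`.
  rw [hX.ibp_prod' a b k l hf hf mf mf1 mf mf1 (comp gf hk) (comp gf1 hk) (comp gf hl)
    (comp gf1 hl), hX.ibp_prod b k l hf1 hf mf1 mf2 mf mf1 (comp gf1 hk) (comp gf2 hk) (comp gf hl)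
    (comp gf1 hl), hX.ibp_prod b k l hf hf1 mf mf1 mf1 mf2 (comp gf hk) (comp gf1 hk) (comp gf1 hl)
    (comp gf2 hl)]
  have g1 := gebelein hX hk hl hc mf mf gf.two gf.two z
  have g2 := gebelein hX hk hl hc mf1 mf1 gf1.two gf1.two z1
  have g3 := gebelein hX hk hl hc mf mf2 gf.two gf2.two z
  have g4 := gebelein hX hl hk (by rwa [covariance_comm]) mf mf2 gf.two gf2.two z
  rw [covariance_comm (X l) (X k)] at g4
  have e4 : ∫ ω, f (X l ω) * f2 (X k ω) ∂P = ∫ ω, f2 (X k ω) * f (X l ω) ∂P :=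
    integral_congr_ae (ae_of_all _ fun ω => mul_comm _ _)
  rw [e4] at g4
  set I1 := ∫ ω, f (X k ω) * f (X l ω) ∂P
  set I2 := ∫ ω, f1 (X k ω) * f1 (X l ω) ∂P
  set I3 := ∫ ω, f (X k ω) * f2 (X l ω) ∂P
  set I4 := ∫ ω, f2 (X k ω) * f (X l ω) ∂P
  change |I1| ≤ _ * (gnorm f * gnorm f) at g1
  change |I2| ≤ _ * (gnorm f1 * gnorm f1) at g2
  change |I3| ≤ _ * (gnorm f * gnorm f2) at g3
  change |I4| ≤ _ * (gnorm f * gnorm f2) at g4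
  set c := |cov[X k, X l; P]|
  have c0 : 0 ≤ c := abs_nonneg _
  have p0 := mul_nonneg (gnorm_nonneg f) (gnorm_nonneg f)
  have p1 := mul_nonneg (gnorm_nonneg f) (gnorm_nonneg f2)
  have p2 := mul_nonneg (gnorm_nonneg f1) (gnorm_nonneg f1)
  have pr : ∀ u v w : ℝ, |u| ≤ 1 → |v| ≤ 1 → |u * (v * w)| ≤ |w| := fun u v w hu hv => by
    rw [abs_mul, abs_mul, ← mul_assoc]
    exact mul_le_of_le_one_left (abs_nonneg _) (mul_le_one₀ hu (abs_nonneg _) hv)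
  rw [mul_add, mul_add]
  have t1 : |cov[X a, X b; P] * I1| ≤ L * (c * (gnorm f * gnorm f)) := by
    rw [abs_mul]; gcongr
  have t2 := (pr _ _ _ cak cbk).trans g4
  have t3 := (pr _ _ _ cak cbl).trans g2
  have t4 := (pr _ _ _ cal cbk).trans g2
  have t5 := (pr _ _ _ cal cbl).trans g3
  have q1 : c * (gnorm f * gnorm f2) ≤ L * (c * (gnorm f * gnorm f2)) :=
    le_mul_of_one_le_left (by positivity) hL
  have q2 : c * (gnorm f1 * gnorm f1) ≤ L * (c * (gnorm f1 * gnorm f1)) :=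
    le_mul_of_one_le_left (by positivity) hL
  rw [abs_le] at *
  constructor <;> nlinarith
end ibp2

section power
variable {p : ℝ}

/-- First derivative of `|t|^p - c_p`. -/
def fpow1 (p t : ℝ) : ℝ := p * |t| ^ (p - 2) * t

/-- Second derivative of `|t|^p - c_p`. -/
def fpow2 (p t : ℝ) : ℝ := p * (p - 1) * |t| ^ (p - 2)

lemma hasDerivAt_fpow (hp : 2 ≤ p) (t : ℝ) : HasDerivAt (fpow p) (fpow1 p t) t :=
  (hasDerivAt_abs_rpow t (by linarith)).sub_const _

lemma hasDerivAt_fpow1 (hp : 2 ≤ p) (t : ℝ) : HasDerivAt (fpow1 p) (fpow2 p t) t := by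
  rcases hp.eq_or_lt with rfl | hp
  · have : fpow1 2 = fun t => 2 * t := by ext t; simp [fpow1]
    rw [this, show fpow2 2 t = 2 * 1 by simp [fpow2]; norm_num]
    exact (hasDerivAt_id t).const_mul 2
  rcases eq_or_ne t 0 with rfl | ht
  · rw [hasDerivAt_iff_tendsto_slope_zero]
    have e : fpow2 p 0 = p * |(0 : ℝ)| ^ (p - 2) := by
      simp [fpow2, Real.zero_rpow (by linarith : p - 2 ≠ 0)]
    rw [e]
    have hc : Continuous fun t : ℝ => p * |t| ^ (p - 2) :=
      (continuous_abs.rpow_const fun _ => Or.inr (by linarith)).const_mul p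
    refine ((hc.tendsto 0).mono_left nhdsWithin_le_nhds).congr' ?_
    filter_upwards [self_mem_nhdsWithin] with s hs
    have hs : s ≠ 0 := hs
    simp [fpow1]; field_simp
  · have e : fpow1 p =ᶠ[nhds t] fun s => p * (|s| ^ p * s⁻¹) := by
      filter_upwards [isOpen_ne.mem_nhds ht] with s hs
      have hs : s ≠ 0 := hs
      rw [fpow1, Real.rpow_sub (abs_pos.2 hs), Real.rpow_two, sq_abs]
      field_simp
    have h := ((hasDerivAt_abs_rpow t (by linarith : 1 < p)).mul (hasDerivAt_inv ht)).const_mul p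
    refine (h.congr_of_eventuallyEq e).congr_deriv ?_
    have e2 : |t| ^ p = |t| ^ (p - 2) * t ^ 2 := by
      rw [Real.rpow_sub (abs_pos.2 ht), Real.rpow_two, sq_abs]; field_simp
    rw [e2, fpow2]; field_simp; ring

lemma measurable_fpow1 (p : ℝ) : Measurable (fpow1 p) := by unfold fpow1; fun_prop
lemma measurable_fpow2 (p : ℝ) : Measurable (fpow2 p) := by unfold fpow2; fun_prop

lemma allLp_fpow1 (hp : 2 ≤ p) : AllLp (gaussianReal 0 1) (fpow1 p) := by
  refine (((allLp_std.rpow (p := p - 2) (by linarith)).const_mul p).mul allLp_std)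

lemma allLp_fpow2 (hp : 2 ≤ p) : AllLp (gaussianReal 0 1) (fpow2 p) :=
  (allLp_std.rpow (p := p - 2) (by linarith)).const_mul _

lemma integral_fpow1 (p : ℝ) : ∫ t, fpow1 p t ∂(gaussianReal 0 1) = 0 := by
  have hm : (gaussianReal 0 1).map (fun t => -t) = gaussianReal 0 1 := by
    rw [gaussianReal_map_neg]; simp
  have h : ∫ t, fpow1 p t ∂(gaussianReal 0 1) = ∫ t, fpow1 p (-t) ∂(gaussianReal 0 1) := by
    conv_lhs => rw [← hm]
    rw [integral_map (by fun_prop) (measurable_fpow1 p).aestronglyMeasurable]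
  have e : ∀ t, fpow1 p (-t) = -fpow1 p t := fun t => by simp [fpow1]
  simp only [e, integral_neg] at h
  linarith

/-- The constant in the second-moment bound for weighted sums. -/
def qconst (p : ℝ) : ℝ := gnorm (fpow p) * gnorm (fpow p) + 2 * (gnorm (fpow p) * gnorm (fpow2 p)) +
  2 * (gnorm (fpow1 p) * gnorm (fpow1 p))

lemma qconst_nonneg (p : ℝ) : 0 ≤ qconst p := by
  have := gnorm_nonneg (fpow p); have := gnorm_nonneg (fpow1 p); have := gnorm_nonneg (fpow2 p)
  unfold qconst; positivity
end power

section wsum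
variable {P : Measure Ω} [IsProbabilityMeasure P] {ν : ℝ} {x : ℝ → Ω → ℝ} {p : ℝ}

/-- Increment of the path between two grid points. -/
def Xinc (x : ℝ → Ω → ℝ) (n i k : ℕ) (ω : Ω) : ℝ := x ((k : ℝ) / n) ω - x ((i : ℝ) / n) ω

lemma cov_grid (h0 : 0 < ν) (hx : IsFBM P ν x) {n : ℕ} (hn : 0 < n) {s t s' t' : ℝ}
    (hs : s / n ∈ Set.Icc (0 : ℝ) 1) (ht : t / n ∈ Set.Icc (0 : ℝ) 1)
    (hs' : s' / n ∈ Set.Icc (0 : ℝ) 1) (ht' : t' / n ∈ Set.Icc (0 : ℝ) 1) :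
    cov[fun ω => (n : ℝ) ^ ν * (x (t / n) ω - x (s / n) ω),
      fun ω => (n : ℝ) ^ ν * (x (t' / n) ω - x (s' / n) ω); P] = incCov ν s t s' t' := by
  have hn' : (0 : ℝ) < n := by exact_mod_cast hn
  rw [hx.cov_incr h0 hs ht hs' ht', ← Real.rpow_add hn', ← two_mul, incCov_scale ν hn']

/-- The covariances of the products of a path increment with `h` of the normalized increment,
rescaled by `n ^ ν`, are controlled by `|ρ (k - l)|`. -/
lemma quad_Z (h0 : 0 < ν) (h1 : ν ≤ 1 / 2) (hx : IsFBM P ν x) (hp : 2 ≤ p) {n k l i j : ℕ}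
    (hk : k < n) (hl : l < n) (hi : i ≤ k) (hj : j ≤ l) {L : ℕ} (hL : 1 ≤ L)
    (hjl : l ≤ j + L) :
    |∫ ω, ((n : ℝ) ^ ν * Xinc x n i k ω * fpow p (Zinc x ν n k ω)) *
      ((n : ℝ) ^ ν * Xinc x n j l ω * fpow p (Zinc x ν n l ω)) ∂P| ≤
      |rho ν ((k : ℤ) - l)| * ((L : ℝ) ^ (2 * ν) * qconst p) := by
  have hn : 0 < n := by omega
  have hcg := hx.cg (ι := Fin 4) (fun _ => (n : ℝ) ^ ν)
    ![(i : ℝ) / n, (j : ℝ) / n, (k : ℝ) / n, (l : ℝ) / n]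
    ![(k : ℝ) / n, (l : ℝ) / n, ((k : ℝ) + 1) / n, ((l : ℝ) + 1) / n]
    (by intro a; fin_cases a
        exacts [grid_mem (by omega), grid_mem (by omega), grid_mem hk.le, grid_mem hl.le])
    (by intro a; fin_cases a
        exacts [grid_mem hk.le, grid_mem hl.le, grid_mem' hk, grid_mem' hl])
  have hle : |((l : ℝ) - j)| ^ (2 * ν) ≤ (L : ℝ) ^ (2 * ν) := by
    have e1 : (j : ℝ) ≤ l := by exact_mod_cast hj
    have e2 : (l : ℝ) ≤ j + L := by exact_mod_cast hjl
    rw [abs_of_nonneg (by linarith)]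
    exact Real.rpow_le_rpow (by linarith) (by linarith) (by linarith)
  have hone : ∀ s t : ℝ, ∀ a : ℕ, |incCov ν s t a (a + 1)| ≤ 1 := fun s t a => by
    simpa using abs_incCov_le h0 h1 s t a (a + 1)
  have h := hcg.quad_bound 0 1 (k := 2) (l := 3) (cov_Z_self h0 hx hk) (cov_Z_self h0 hx hl)
    (hasDerivAt_fpow hp) (hasDerivAt_fpow1 hp) (measurable_fpow p) (measurable_fpow1 p)
    (measurable_fpow2 p) (allLp_fpow allLp_std (by linarith)) (allLp_fpow1 hp) (allLp_fpow2 hp)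
    (integral_fpow (by linarith)) (integral_fpow1 p) (L := (L : ℝ) ^ (2 * ν))
    (Real.one_le_rpow (by exact_mod_cast hL) (by linarith))
    (((congrArg abs (cov_grid h0 hx hn (grid_mem (by omega)) (grid_mem hk.le)
      (grid_mem (by omega)) (grid_mem hl.le))).le.trans (abs_incCov_le h0 h1 _ _ _ _)).trans hle)
    ((congrArg abs (cov_grid h0 hx hn (grid_mem (by omega)) (grid_mem hk.le)
      (grid_mem hk.le) (grid_mem' hk))).le.trans (hone _ _ _))
    ((congrArg abs (cov_grid h0 hx hn (grid_mem (by omega)) (grid_mem hk.le)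
      (grid_mem hl.le) (grid_mem' hl))).le.trans (hone _ _ _))
    ((congrArg abs (cov_grid h0 hx hn (grid_mem (by omega)) (grid_mem hl.le)
      (grid_mem hk.le) (grid_mem' hk))).le.trans (hone _ _ _))
    ((congrArg abs (cov_grid h0 hx hn (grid_mem (by omega)) (grid_mem hl.le)
      (grid_mem hl.le) (grid_mem' hl))).le.trans (hone _ _ _))
  rw [← hx.cov_Z h0 hk hl]
  refine le_trans (le_of_eq ?_) h
  congr 1
  refine integral_congr_ae (ae_of_all _ fun ω => ?_)
  simp only [Xinc, Zinc, Matrix.cons_val]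
  ring

lemma allLp_XZ (hx : IsFBM P ν x) (hp : 2 ≤ p) {n i k : ℕ} (hk : k < n) (hi : i ≤ k) :
    AllLp P (fun ω => Xinc x n i k ω * fpow p (Zinc x ν n k ω)) :=
  ((hx.memLp (grid_mem hk.le)).sub (hx.memLp (grid_mem (by omega)))).mul
    (allLp_fpow (allLp_Z hx hk) (by linarith))

/-- Second moment of sums of `(x_{t_k} - x_{t_{b(k)}}) h_k`. -/
lemma sum_XZ_sq_le (h0 : 0 < ν) (h1 : ν ≤ 1 / 2) (hx : IsFBM P ν x) (hp : 2 ≤ p) {n : ℕ}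
    {s : Finset ℕ} (hs : ∀ k ∈ s, k < n) {b : ℕ → ℕ} (hb : ∀ k ∈ s, b k ≤ k) {L : ℕ} (hL : 1 ≤ L)
    (hbL : ∀ k ∈ s, k ≤ b k + L) :
    ∫ ω, (∑ k ∈ s, Xinc x n (b k) k ω * fpow p (Zinc x ν n k ω)) ^ 2 ∂P ≤
      s.card * (((L : ℝ) / n) ^ (2 * ν) * (rhoSum ν * qconst p)) := by
  rcases Nat.eq_zero_or_pos n with rfl | hn
  · have : s = ∅ := Finset.eq_empty_of_forall_notMem fun k hk => by have := hs k hk; omega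
    simp [this]
  have hn' : (0 : ℝ) < n := by exact_mod_cast hn
  have hnν : (0 : ℝ) < (n : ℝ) ^ ν := by positivity
  have h := sq_sum_le (P := P) (s := s)
    (Y := fun k ω => (n : ℝ) ^ ν * Xinc x n (b k) k ω * fpow p (Zinc x ν n k ω))
    (a := fun _ => ((n : ℝ) ^ ν)⁻¹) (A := ((n : ℝ) ^ ν)⁻¹)
    (c := fun k l => |rho ν ((k : ℤ) - l)| * ((L : ℝ) ^ (2 * ν) * qconst p))
    (R := rhoSum ν * ((L : ℝ) ^ (2 * ν) * qconst p))
    (fun k hk => by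
      simpa only [mul_assoc] using ((allLp_XZ hx hp (hs k hk) (hb k hk)).const_mul _).two)
    (fun k _ => by rw [abs_of_pos (by positivity)])
    (fun k hk l hl => quad_Z h0 h1 hx hp (hs k hk) (hs l hl) (hb k hk) (hb l hl) hL (hbL l hl))
    (fun k hk => by
      rw [← Finset.sum_mul]
      exact mul_le_mul_of_nonneg_right (sum_rho_le h0 h1 k s)
        (mul_nonneg (by positivity) (qconst_nonneg p)))
  refine le_trans (le_of_eq ?_) (h.trans (le_of_eq ?_))
  · refine integral_congr_ae (ae_of_all _ fun ω => ?_)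
    simp only
    congr 1
    refine Finset.sum_congr rfl fun k _ => ?_
    field_simp
  · rw [Real.div_rpow (by positivity) (by positivity), two_mul, Real.rpow_add hn']
    field_simp
end wsum

/-! ### Discrete sewing -/

section sewing

/-- Discrete sewing lemma: an almost additive two-parameter function vanishing on neighbouring
points is bounded by the power `θ > 1` of the distance. -/
lemma discrete_sewing {N : ℕ → ℕ → ℝ} {n : ℕ} {C θ : ℝ} (hθ : 1 < θ) (hC : 0 ≤ C)
    (h0 : ∀ i, N i i = 0) (h1 : ∀ i, N i (i + 1) = 0)
    (h : ∀ i k j, i ≤ k → k ≤ j → j ≤ n → N i j ≤ N i k + N k j + C * ((j - i : ℕ) : ℝ) ^ θ) :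
    ∀ i j, i ≤ j → j ≤ n → N i j ≤ C / (1 - (2 / 3 : ℝ) ^ (θ - 1)) * ((j - i : ℕ) : ℝ) ^ θ := by
  have hr : (2 / 3 : ℝ) ^ (θ - 1) < 1 :=
    Real.rpow_lt_one (by norm_num) (by norm_num) (by linarith)
  set r := (2 / 3 : ℝ) ^ (θ - 1) with hrd
  set K := C / (1 - r) with hK
  have hK0 : 0 ≤ K := div_nonneg hC (by linarith)
  have hKC : K * r + C = K := by
    have : 1 - r ≠ 0 := by linarith
    rw [hK]; field_simp; ring
  suffices H : ∀ d i j, j - i = d → i ≤ j → j ≤ n → N i j ≤ K * ((d : ℕ) : ℝ) ^ θ from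
    fun i j hij hj => H _ i j rfl hij hj
  intro d
  induction d using Nat.strong_induction_on with
  | _ d ih =>
    intro i j hd hij hj
    rcases Nat.lt_or_ge d 2 with hd2 | hd2
    · have h0' : N i j = 0 := by
        rcases (by omega : j = i ∨ j = i + 1) with rfl | rfl
        exacts [h0 _, h1 _]
      rw [h0']; positivity
    -- Split at the midpoint: both halves have length at most `2 d / 3`.
    have e1 := ih (d / 2) (by omega) i (i + d / 2) (by omega) (by omega) (by omega)
    have e2 := ih (d - d / 2) (by omega) (i + d / 2) j (by omega) (by omega) hj
    have e3 := h i (i + d / 2) j (by omega) (by omega) hj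
    rw [hd] at e3
    have hdp : (0 : ℝ) < d := by exact_mod_cast (by omega : 0 < d)
    have part : ∀ a : ℕ, 3 * a ≤ 2 * d → (a : ℝ) ^ θ ≤ (d : ℝ) ^ θ * (r * (a / d)) := by
      intro a ha
      have h3 : (a : ℝ) / d ≤ 2 / 3 := by
        rw [div_le_div_iff₀ hdp (by norm_num)]
        have : (3 : ℝ) * a ≤ 2 * d := by exact_mod_cast ha
        linarith
      rcases Nat.eq_zero_or_pos a with rfl | hap
      · simp [Real.zero_rpow (by linarith : θ ≠ 0)]
      have hap' : (0 : ℝ) < (a : ℝ) / d := by positivity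
      have : ((a : ℝ) / d) ^ θ ≤ r * (a / d) := by
        rw [show θ = (θ - 1) + 1 by ring, Real.rpow_add_one hap'.ne']
        exact mul_le_mul_of_nonneg_right
          (Real.rpow_le_rpow hap'.le h3 (by linarith)) hap'.le
      calc (a : ℝ) ^ θ = (d : ℝ) ^ θ * ((a : ℝ) / d) ^ θ := by
            rw [← Real.mul_rpow hdp.le hap'.le]; congr 1; field_simp
        _ ≤ _ := by gcongr
    have p1 := part (d / 2) (by omega)
    have p2 := part (d - d / 2) (by omega)
    have hsum : ((d / 2 : ℕ) : ℝ) / d + ((d - d / 2 : ℕ) : ℝ) / d = 1 := by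
      rw [← add_div, ← Nat.cast_add, show d / 2 + (d - d / 2) = d by omega, div_self hdp.ne']
    -- This is where the exponent exceeding one produces a contraction factor `r < 1`.
    have p3 : ((d / 2 : ℕ) : ℝ) ^ θ + ((d - d / 2 : ℕ) : ℝ) ^ θ ≤ (d : ℝ) ^ θ * r := by
      calc _ ≤ (d : ℝ) ^ θ * (r * ((d / 2 : ℕ) / d)) + (d : ℝ) ^ θ * (r * ((d - d / 2 : ℕ) / d)) :=
            add_le_add p1 p2
        _ = (d : ℝ) ^ θ * r * (((d / 2 : ℕ) : ℝ) / d + ((d - d / 2 : ℕ) : ℝ) / d) := by ring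
        _ = _ := by rw [hsum, mul_one]
    calc N i j ≤ K * (((d / 2 : ℕ) : ℝ) ^ θ + ((d - d / 2 : ℕ) : ℝ) ^ θ) + C * (d : ℝ) ^ θ := by
          linarith
      _ ≤ K * ((d : ℝ) ^ θ * r) + C * (d : ℝ) ^ θ := by gcongr
      _ = (K * r + C) * (d : ℝ) ^ θ := by ring
      _ = _ := by rw [hKC]

variable {P : Measure Ω}

/-- Sewing for the sums of `A i l * v l`: the defect of additivity at `k` is the sum of `(A i l
- A k l) * v l`. -/
lemma sewing_sum {A : ℕ → ℕ → Ω → ℝ} {v : ℕ → Ω → ℝ} {n : ℕ} {C θ : ℝ} (hθ : 1 < θ) (hC : 0 ≤ C)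
    (hA : ∀ i ω, A i i ω = 0)
    (hi : ∀ i k, i ≤ k → k < n → Integrable (fun ω => A i k ω * v k ω) P)
    (hD : ∀ i k j, i ≤ k → k ≤ j → j ≤ n →
      ∫ ω, |∑ l ∈ Finset.Ico k j, (A i l ω - A k l ω) * v l ω| ∂P ≤ C * ((j - i : ℕ) : ℝ) ^ θ)
    (i j : ℕ) (hij : i ≤ j) (hj : j ≤ n) :
    ∫ ω, |∑ l ∈ Finset.Ico i j, A i l ω * v l ω| ∂P ≤
      C / (1 - (2 / 3 : ℝ) ^ (θ - 1)) * ((j - i : ℕ) : ℝ) ^ θ := by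
  have hs : ∀ i k j, i ≤ k → j ≤ n →
      Integrable (fun ω => |∑ l ∈ Finset.Ico k j, A i l ω * v l ω|) P := fun i k j hik hj =>
    (integrable_finsetSum _ fun l hl => hi i l (by have := Finset.mem_Ico.1 hl; omega)
      (by have := Finset.mem_Ico.1 hl; omega)).abs
  refine discrete_sewing (N := fun i j => ∫ ω, |∑ l ∈ Finset.Ico i j, A i l ω * v l ω| ∂P)
    hθ hC (fun i => by simp) (fun i => by simp [hA]) (fun i k j hik hkj hj => ?_) i j hij hj
  refine le_trans ?_ (add_le_add_right (hD i k j hik hkj hj) _)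
  have id : Integrable (fun ω => |∑ l ∈ Finset.Ico k j, (A i l ω - A k l ω) * v l ω|) P := by
    refine (integrable_finsetSum _ fun l hl => ?_).abs
    have := Finset.mem_Ico.1 hl
    simp only [sub_mul]
    exact (hi i l (by omega) (by omega)).sub (hi k l (by omega) (by omega))
  have i2 := int_add (hs i i k le_rfl (by omega)) (hs k k j le_rfl hj)
  rw [← integral_add (hs i i k le_rfl (by omega)) (hs k k j le_rfl hj), ← integral_add i2 id]
  refine integral_mono (hs i i j le_rfl hj) (int_add i2 id) fun ω => ?_
  simp only
  rw [← Finset.sum_Ico_consecutive _ hik hkj]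
  have e : ∑ l ∈ Finset.Ico k j, A i l ω * v l ω = ∑ l ∈ Finset.Ico k j, A k l ω * v l ω +
      ∑ l ∈ Finset.Ico k j, (A i l ω - A k l ω) * v l ω := by
    rw [← Finset.sum_add_distrib]; exact Finset.sum_congr rfl fun l _ => by ring
  rw [e, ← add_assoc]
  exact (abs_add_le _ _).trans (add_le_add_left (abs_add_le _ _) _)

/-- Cauchy–Schwarz with given bounds of the second moments. -/
lemma integral_abs_mul_le {f g : Ω → ℝ} (hf : MemLp f 2 P) (hg : MemLp g 2 P) {a b : ℝ}
    (ha : 0 ≤ a) (hb : 0 ≤ b) (hfa : ∫ ω, f ω ^ 2 ∂P ≤ a ^ 2) (hgb : ∫ ω, g ω ^ 2 ∂P ≤ b ^ 2) :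
    ∫ ω, |f ω * g ω| ∂P ≤ a * b := by
  have h := abs_integral_mul_le (memLp_abs hf) (memLp_abs hg)
  simp only [sq_abs, ← abs_mul] at h
  refine (le_abs_self _).trans (h.trans ?_)
  gcongr
  · exact (Real.sqrt_le_sqrt hfa).trans (Real.sqrt_sq ha).le
  · exact (Real.sqrt_le_sqrt hgb).trans (Real.sqrt_sq hb).le

lemma sq_of_eLpNorm {f : Ω → ℝ} (hf : Measurable f) {a : ℝ} (ha : 0 ≤ a)
    (h : eLpNorm f 2 P ≤ ENNReal.ofReal a) : MemLp f 2 P ∧ ∫ ω, f ω ^ 2 ∂P ≤ a ^ 2 := by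
  have hm : MemLp f 2 P := ⟨hf.aestronglyMeasurable, h.trans_lt ENNReal.ofReal_lt_top⟩
  refine ⟨hm, ?_⟩
  have h2 := hm.eLpNorm_eq_integral_rpow_norm (by simp) (by simp)
  rw [h2] at h
  have h3 := (ENNReal.ofReal_le_ofReal_iff ha).1 h
  simp only [ENNReal.toReal_ofNat, Real.rpow_ofNat, Real.norm_eq_abs, sq_abs] at h3
  have i0 : 0 ≤ ∫ ω, f ω ^ 2 ∂P := integral_nonneg fun _ => sq_nonneg _
  calc ∫ ω, f ω ^ 2 ∂P = ((∫ ω, f ω ^ 2 ∂P) ^ (2⁻¹ : ℝ)) ^ 2 := by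
        rw [← Real.rpow_natCast, ← Real.rpow_mul i0]; simp
    _ ≤ a ^ 2 := by gcongr
end sewing

section ctrl
variable {P : Measure Ω} {ν : ℝ} {x : ℝ → Ω → ℝ} {K₀ : ℝ} {y : ℕ → ℝ → Ω → ℝ}

/-- The bound on the remainder of order two as a second moment. The absolute value of `K₀`
appears since `K₀` is not assumed nonnegative. -/
lemma Controlled.rem (hy : Controlled P ν 2 K₀ (xlift x) y) (hx : ∀ t, Measurable (x t))
    {s t : ℝ} (hs : 0 ≤ s) (hst : s ≤ t) (ht : t ≤ 1) :
    MemLp (fun ω => y 0 t ω - y 0 s ω - y 1 s ω * (x t ω - x s ω)) 2 P ∧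
      ∫ ω, (y 0 t ω - y 0 s ω - y 1 s ω * (x t ω - x s ω)) ^ 2 ∂P ≤
        (|K₀| * (t - s) ^ (2 * ν)) ^ 2 := by
  have h := hy.2.2.2 0 (by norm_num) s t hs hst ht
  have hp : 0 ≤ (t - s) ^ (2 * ν) := Real.rpow_nonneg (by linarith) _
  have m0 := hy.1 0 (by norm_num)
  have m1 := hy.1 1 (by norm_num)
  have hh : eLpNorm (fun ω => y 0 t ω - y 0 s ω - y 1 s ω * (x t ω - x s ω)) 2 P ≤
      ENNReal.ofReal (K₀ * (t - s) ^ (2 * ν)) := by simpa [xlift] using h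
  exact sq_of_eLpNorm (((m0 t).sub (m0 s)).sub ((m1 s).mul ((hx t).sub (hx s))))
    (by positivity) (hh.trans (ENNReal.ofReal_le_ofReal
      (mul_le_mul_of_nonneg_right (le_abs_self _) hp)))

/-- The bound on the derivative process as a second moment. -/
lemma Controlled.der (hy : Controlled P ν 2 K₀ (xlift x) y)
    {s t : ℝ} (hs : 0 ≤ s) (hst : s ≤ t) (ht : t ≤ 1) :
    MemLp (fun ω => y 1 t ω - y 1 s ω) 2 P ∧
      ∫ ω, (y 1 t ω - y 1 s ω) ^ 2 ∂P ≤ (|K₀| * (t - s) ^ ν) ^ 2 := by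
  have h := hy.2.2.2 1 (by norm_num) s t hs hst ht
  have hp : 0 ≤ (t - s) ^ ν := Real.rpow_nonneg (by linarith) _
  have m1 := hy.1 1 (by norm_num)
  have hh : eLpNorm (fun ω => y 1 t ω - y 1 s ω) 2 P ≤
      ENNReal.ofReal (K₀ * (t - s) ^ ν) := by simpa using h
  exact sq_of_eLpNorm ((m1 t).sub (m1 s)) (by positivity) (hh.trans (ENNReal.ofReal_le_ofReal
    (mul_le_mul_of_nonneg_right (le_abs_self _) hp)))
end ctrl

/-! ### Remainder sums within a block -/

section taylor
variable {P : Measure Ω} [IsProbabilityMeasure P] {ν : ℝ} {x : ℝ → Ω → ℝ} {p : ℝ}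
  {K₀ : ℝ} {y : ℕ → ℝ → Ω → ℝ}

/-- First-order Taylor remainder of the weight process between two grid points. -/
def Rem (y : ℕ → ℝ → Ω → ℝ) (x : ℝ → Ω → ℝ) (n i k : ℕ) (ω : Ω) : ℝ :=
  y 0 ((k : ℝ) / n) ω - y 0 ((i : ℝ) / n) ω - y 1 ((i : ℝ) / n) ω * Xinc x n i k ω

lemma sqrt_mul_rpow_half_sq {c d : ℝ} (hc : 0 ≤ c) (hd : 0 ≤ d) :
    (Real.sqrt c * d ^ (1 / 2 : ℝ)) ^ 2 = d * c := by
  rw [mul_pow, Real.sq_sqrt hc, ← Real.rpow_natCast (d ^ (1 / 2 : ℝ)), ← Real.rpow_mul hd]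
  norm_num; ring

/-- The variance constant of unweighted sums. -/
def vconst (ν p : ℝ) : ℝ := rhoSum ν * ∫ t, fpow p t ^ 2 ∂(gaussianReal 0 1)

lemma vconst_nonneg (ν p : ℝ) : 0 ≤ vconst ν p :=
  mul_nonneg (rhoSum_nonneg ν) (integral_nonneg fun _ => sq_nonneg _)

lemma grid_sub {n i k : ℕ} (hik : i ≤ k) : (k : ℝ) / n - (i : ℝ) / n = ((k - i : ℕ) : ℝ) / n := by
  rw [Nat.cast_sub hik]; ring

omit [IsProbabilityMeasure P] in
lemma rem_grid (hy : Controlled P ν 2 K₀ (xlift x) y) (hx : IsFBM P ν x) {n i k : ℕ} (hik : i ≤ k)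
    (hk : k ≤ n) : MemLp (Rem y x n i k) 2 P ∧
      ∫ ω, Rem y x n i k ω ^ 2 ∂P ≤ (|K₀| * (((k - i : ℕ) : ℝ) / n) ^ (2 * ν)) ^ 2 := by
  rw [← grid_sub hik]
  exact hy.rem hx.1 (by positivity) (by gcongr) (grid_mem hk).2

omit [IsProbabilityMeasure P] in
lemma der_grid (hy : Controlled P ν 2 K₀ (xlift x) y) {n i k : ℕ} (hik : i ≤ k)
    (hk : k ≤ n) : MemLp (fun ω => y 1 ((k : ℝ) / n) ω - y 1 ((i : ℝ) / n) ω) 2 P ∧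
      ∫ ω, (y 1 ((k : ℝ) / n) ω - y 1 ((i : ℝ) / n) ω) ^ 2 ∂P ≤
        (|K₀| * (((k - i : ℕ) : ℝ) / n) ^ ν) ^ 2 := by
  rw [← grid_sub hik]
  exact hy.der (by positivity) (by gcongr) (grid_mem hk).2

/-- The compensated weighted sums are of higher order, by sewing. -/
lemma rem_sum_le (h0 : 1 / 4 < ν) (h1 : ν ≤ 1 / 2) (hx : IsFBM P ν x)
    (hy : Controlled P ν 2 K₀ (xlift x) y) (hp : 2 ≤ p) {n : ℕ} (i j : ℕ) (hij : i ≤ j)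
    (hj : j ≤ n) :
    ∫ ω, |∑ k ∈ Finset.Ico i j, Rem y x n i k ω * fpow p (Zinc x ν n k ω)| ∂P ≤
      (|K₀| * (Real.sqrt (vconst ν p) + Real.sqrt (rhoSum ν * qconst p)) * ((n : ℝ) ^ (2 * ν))⁻¹) /
        (1 - (2 / 3 : ℝ) ^ (2 * ν + 1 / 2 - 1)) * ((j - i : ℕ) : ℝ) ^ (2 * ν + 1 / 2) := by
  have hν : 0 < ν := by linarith
  have hv := vconst_nonneg ν p
  have hq := mul_nonneg (rhoSum_nonneg ν) (qconst_nonneg p)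
  have hf := memLp_fpow (p := p) (by linarith)
  have hfi := integral_fpow (p := p) (by linarith)
  refine sewing_sum (A := fun i k => Rem y x n i k) (by linarith) (by positivity)
    (fun i ω => by simp [Rem, Xinc]) (fun i k hik hk =>
      int_mul (rem_grid hy hx hik hk.le).1 (memLp_fZ hν hx hf hk)) ?_ i j hij hj
  clear hij hj i j
  intro i k j hik hkj hj
  rcases Nat.eq_zero_or_pos (j - i) with hd | hd
  · rw [show k = j by omega]
    simp only [Finset.Ico_self, Finset.sum_empty, abs_zero, integral_zero]
    positivity
  have hn : (0 : ℝ) < n := by exact_mod_cast (by omega : 0 < n)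
  set d : ℝ := ((j - i : ℕ) : ℝ) with hdd
  have hd0 : 0 < d := Nat.cast_pos.2 hd
  have hki : ((k - i : ℕ) : ℝ) ≤ d := Nat.cast_le.2 (by omega)
  have hjk : ((j - k : ℕ) : ℝ) ≤ d := Nat.cast_le.2 (by omega)
  have hs : ∀ l ∈ Finset.Ico k j, l < n := fun l hl => by
    have := Finset.mem_Ico.1 hl; omega
  obtain ⟨r1, r2⟩ := rem_grid hy hx hik (hkj.trans hj)
  obtain ⟨d1, d2⟩ := der_grid hy hik (hkj.trans hj)
  have s1 : MemLp (fun ω => ∑ l ∈ Finset.Ico k j, fpow p (Zinc x ν n l ω)) 2 P :=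
    memLp_finsetSum _ fun l hl => memLp_fZ hν hx hf (hs l hl)
  have s2 : MemLp (fun ω => ∑ l ∈ Finset.Ico k j, Xinc x n k l ω * fpow p (Zinc x ν n l ω)) 2 P :=
    memLp_finsetSum _ fun l hl => (allLp_XZ hx hp (hs l hl) (Finset.mem_Ico.1 hl).1).two
  have b1 := sum_fZ_sq_le hν h1 hx (measurable_fpow p) hf hfi hs (a := fun _ => 1) (A := 1)
    (fun _ _ => by simp)
  have b2 := sum_XZ_sq_le hν h1 hx hp hs (b := fun _ => k) (L := j - i)
    (fun l hl => (Finset.mem_Ico.1 hl).1) hd (fun l hl => by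
      have := Finset.mem_Ico.1 hl; omega)
  simp only [one_mul, one_pow, Nat.card_Ico] at b1 b2
  have t1 := integral_abs_mul_le r1 s1 (a := |K₀| * (d / n) ^ (2 * ν))
    (b := Real.sqrt (vconst ν p) * d ^ (1 / 2 : ℝ)) (by positivity) (by positivity)
    (r2.trans (by gcongr)) (by
      rw [sqrt_mul_rpow_half_sq hv hd0.le]
      exact b1.trans (mul_le_mul_of_nonneg_right hjk hv))
  have t2 := integral_abs_mul_le d1 s2 (a := |K₀| * (d / n) ^ ν)
    (b := Real.sqrt (rhoSum ν * qconst p) * d ^ (1 / 2 : ℝ) * (d / n) ^ ν) (by positivity)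
    (by positivity) (d2.trans (by gcongr)) (by
      rw [mul_pow, sqrt_mul_rpow_half_sq hq hd0.le, ← Real.rpow_natCast ((d / n) ^ ν),
        ← Real.rpow_mul (by positivity), mul_comm ν]
      refine b2.trans ?_
      rw [mul_assoc, mul_comm (rhoSum ν * qconst p)]
      exact mul_le_mul_of_nonneg_right hjk (by positivity))
  have i1 := (int_mul r1 s1).abs
  have i2 := (int_mul d1 s2).abs
  -- Identity of Chen type for the defect of additivity.
  have e : ∀ ω, ∑ l ∈ Finset.Ico k j, (Rem y x n i l ω - Rem y x n k l ω) *
      fpow p (Zinc x ν n l ω) = Rem y x n i k ω * ∑ l ∈ Finset.Ico k j, fpow p (Zinc x ν n l ω) +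
      (y 1 ((k : ℝ) / n) ω - y 1 ((i : ℝ) / n) ω) *
        ∑ l ∈ Finset.Ico k j, Xinc x n k l ω * fpow p (Zinc x ν n l ω) := by
    intro ω
    rw [Finset.mul_sum, Finset.mul_sum, ← Finset.sum_add_distrib]
    refine Finset.sum_congr rfl fun l _ => ?_
    simp only [Rem, Xinc]; ring
  simp only [e]
  refine (integral_mono_of_nonneg (ae_of_all _ fun ω => abs_nonneg _) (int_add i1 i2)
    (ae_of_all _ fun ω => abs_add_le _ _)).trans ?_
  rw [integral_add i1 i2]
  refine (add_le_add t1 t2).trans (le_of_eq ?_)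
  rw [Real.rpow_add hd0, two_mul, Real.div_rpow hd0.le hn.le, Real.div_rpow hd0.le hn.le,
    Real.rpow_add hd0, Real.rpow_add hn]
  field_simp
end taylor

section blocks

lemma blk_sub_le {n m c d : ℕ} (hm : 0 < m) (hmn : m ≤ n) (hcd : c < d) :
    ((blk n m d - blk n m c : ℕ) : ℝ) ≤ 2 * ((d - c : ℕ) : ℝ) * n / m := by
  have hm' : (0 : ℝ) < m := by exact_mod_cast hm
  have e1 : m * blk n m d ≤ d * n := Nat.mul_div_le _ _
  have e2 : c * n < m * blk n m c + m := by
    have := Nat.div_add_mod (c * n) m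
    have := Nat.mod_lt (c * n) hm
    unfold blk; omega
  have e1' : (m : ℝ) * blk n m d ≤ d * n := by exact_mod_cast e1
  have e2' : (c : ℝ) * n < m * blk n m c + m := by exact_mod_cast e2
  have e3 : (m : ℝ) ≤ n := by exact_mod_cast hmn
  have e4 : (c : ℝ) + 1 ≤ d := by exact_mod_cast hcd
  rw [Nat.cast_sub (blk_mono n m hcd.le), Nat.cast_sub hcd.le, le_div_iff₀ hm']
  nlinarith

lemma blk_succ_le (n m l : ℕ) : blk n m (l + 1) ≤ blk n m l + (n / m + 1) := by
  rcases Nat.eq_zero_or_pos m with rfl | hm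
  · simp [blk]
  unfold blk
  rw [add_mul, one_mul, Nat.add_div hm]
  split_ifs <;> omega

lemma blk_len_cast {n m : ℕ} (hm : 0 < m) (hmn : m ≤ n) :
    ((n / m + 1 : ℕ) : ℝ) ≤ 2 * n / m := by
  have hm' : (0 : ℝ) < m := by exact_mod_cast hm
  have e1 : ((n / m : ℕ) : ℝ) ≤ n / m := Nat.cast_div_le
  have e3 : (1 : ℝ) ≤ n / m := by rw [le_div_iff₀ hm']; exact_mod_cast (by omega : 1 * m ≤ n)
  push_cast
  rw [mul_div_assoc]; linarith

lemma sum_blocks (n m : ℕ) (F : ℕ → ℝ) {c d : ℕ} (hcd : c ≤ d) :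
    ∑ l ∈ Finset.Ico c d, ∑ k ∈ Finset.Ico (blk n m l) (blk n m (l + 1)), F k =
      ∑ k ∈ Finset.Ico (blk n m c) (blk n m d), F k := by
  induction d, hcd using Nat.le_induction with
  | base => simp
  | succ d hcd ih =>
    rw [Finset.sum_Ico_succ_top hcd, ih, Finset.sum_Ico_consecutive _ (blk_mono n m hcd)
      (blk_mono n m (Nat.le_succ d))]

/-- The left end point of the block containing `k`. -/
def bstart (n m k : ℕ) : ℕ := blk n m (Nat.findGreatest (fun j => blk n m j ≤ k) m)

lemma bstart_eq {n m l k : ℕ} (hl : l < m) (hk : k ∈ Finset.Ico (blk n m l) (blk n m (l + 1))) :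
    bstart n m k = blk n m l := by
  have hk := Finset.mem_Ico.1 hk
  unfold bstart
  congr 1
  rw [Nat.findGreatest_eq_iff]
  refine ⟨hl.le, fun _ => hk.1, fun j hj _ => ?_⟩
  have := blk_mono n m (show l + 1 ≤ j from hj)
  omega

lemma bstart_spec {n m c d k : ℕ} (hcd : c ≤ d) (hd : d ≤ m)
    (hk : k ∈ Finset.Ico (blk n m c) (blk n m d)) :
    bstart n m k ≤ k ∧ k ≤ bstart n m k + (n / m + 1) := by
  induction d, hcd using Nat.le_induction with
  | base => simp at hk
  | succ d hcd ih =>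
    by_cases h : k < blk n m d
    · exact ih (by omega) (Finset.mem_Ico.2 ⟨(Finset.mem_Ico.1 hk).1, h⟩)
    · have hk' := (Finset.mem_Ico.1 hk).2
      rw [bstart_eq (l := d) (by omega) (Finset.mem_Ico.2 ⟨by omega, hk'⟩)]
      have := blk_succ_le n m d
      omega
end blocks

/-! ### Sums over all blocks -/

section jsum
variable {P : Measure Ω} [IsProbabilityMeasure P] {ν : ℝ} {x : ℝ → Ω → ℝ} {p : ℝ}
  {K₀ : ℝ} {y : ℕ → ℝ → Ω → ℝ}

/-- First-order sum `n^{-1/2} ∑ (x_{t_k} - x_{t_b}) h_k` over the `l`-th block, starting at `b`. -/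
def Jb (x : ℝ → Ω → ℝ) (ν p : ℝ) (n m l : ℕ) (ω : Ω) : ℝ :=
  rn n * ∑ k ∈ Finset.Ico (blk n m l) (blk n m (l + 1)),
    Xinc x n (blk n m l) k ω * fpow p (Zinc x ν n k ω)

omit [MeasurableSpace Ω] in
lemma sum_Jb (n m : ℕ) {c d : ℕ} (hcd : c ≤ d) (hd : d ≤ m) (ω : Ω) :
    ∑ l ∈ Finset.Ico c d, Jb x ν p n m l ω = rn n * ∑ k ∈ Finset.Ico (blk n m c) (blk n m d),
      Xinc x n (bstart n m k) k ω * fpow p (Zinc x ν n k ω) := by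
  rw [← sum_blocks n m _ hcd, Finset.mul_sum]
  refine Finset.sum_congr rfl fun l hl => ?_
  unfold Jb
  congr 1
  refine Finset.sum_congr rfl fun k hk => ?_
  rw [bstart_eq (by have := Finset.mem_Ico.1 hl; omega) hk]

lemma memLp_Jb (hx : IsFBM P ν x) (hp : 2 ≤ p) {n m l : ℕ} (hl : l < m) :
    MemLp (Jb x ν p n m l) 2 P :=
  (memLp_finsetSum _ fun k hk => (allLp_XZ hx hp
    ((Finset.mem_Ico.1 hk).2.trans_le (blk_le n (by omega) hl))
    (Finset.mem_Ico.1 hk).1).two).const_mul _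

/-- The constant in the second-moment bound for first-order sums. -/
def wconst (ν p : ℝ) : ℝ := rhoSum ν * qconst p

lemma wconst_nonneg (ν p : ℝ) : 0 ≤ wconst ν p := mul_nonneg (rhoSum_nonneg ν) (qconst_nonneg p)

/-- The second moment of the first-order sums over the blocks `c, …, d - 1` is of order `(d - c)
/ m * m ^ (-2ν)`. -/
lemma sum_Jb_sq_le (h0 : 0 < ν) (h1 : ν ≤ 1 / 2) (hx : IsFBM P ν x) (hp : 2 ≤ p) {n m c d : ℕ}
    (hm : 0 < m) (hmn : m ≤ n) (hcd : c < d) (hd : d ≤ m) :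
    ∫ ω, (∑ l ∈ Finset.Ico c d, Jb x ν p n m l ω) ^ 2 ∂P ≤
      2 * ((d - c : ℕ) : ℝ) / m * wconst ν p * (2 / m : ℝ) ^ (2 * ν) := by
  have hn : (0 : ℝ) < n := by exact_mod_cast (by omega : 0 < n)
  have hm' : (0 : ℝ) < m := by exact_mod_cast hm
  simp only [sum_Jb n m hcd.le hd, mul_pow, rn_sq, integral_const_mul]
  have b := sum_XZ_sq_le h0 h1 hx hp (s := Finset.Ico (blk n m c) (blk n m d))
    (fun k hk => (Finset.mem_Ico.1 hk).2.trans_le (blk_le n hm hd)) (b := bstart n m)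
    (L := n / m + 1) (fun k hk => (bstart_spec hcd.le hd hk).1) (Nat.le_add_left 1 _)
    (fun k hk => (bstart_spec hcd.le hd hk).2)
  rw [Nat.card_Ico] at b
  have e1 : (((n / m + 1 : ℕ) : ℝ) / n) ^ (2 * ν) ≤ (2 / m : ℝ) ^ (2 * ν) := by
    refine Real.rpow_le_rpow (by positivity) ?_ (by linarith)
    refine (div_le_div_of_nonneg_right (blk_len_cast hm hmn) hn.le).trans (le_of_eq ?_)
    field_simp
  have hw := wconst_nonneg ν p
  calc _ ≤ (n : ℝ)⁻¹ * ((2 * ((d - c : ℕ) : ℝ) * n / m) * ((2 / m : ℝ) ^ (2 * ν) * wconst ν p)) := by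
        refine mul_le_mul_of_nonneg_left (b.trans ?_) (by positivity)
        exact mul_le_mul (blk_sub_le hm hmn hcd) (mul_le_mul_of_nonneg_right e1 hw)
          (mul_nonneg (by positivity) hw) (by positivity)
    _ = _ := by field_simp

/-- The fluctuation of the derivative process over the blocks is negligible. -/
lemma der_sum_le (h0 : 1 / 4 < ν) (h1 : ν ≤ 1 / 2) (hx : IsFBM P ν x)
    (hy : Controlled P ν 2 K₀ (xlift x) y) (hp : 2 ≤ p) {n m : ℕ} (hm : 0 < m) (hmn : m ≤ n) :
    ∫ ω, |∑ l ∈ Finset.Ico 0 m, (y 1 ((blk n m l : ℝ) / n) ω - y 1 ((blk n m 0 : ℝ) / n) ω) *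
        Jb x ν p n m l ω| ∂P ≤
      |K₀| * Real.sqrt (wconst ν p) * 2 ^ (2 * ν + 1 / 2) / (1 - (2 / 3 : ℝ) ^ (ν + 3 / 4 - 1)) *
        (m : ℝ) ^ (1 / 4 - ν) := by
  have hν : 0 < ν := by linarith
  have hn : (0 : ℝ) < n := by exact_mod_cast (by omega : 0 < n)
  have hm' : (0 : ℝ) < m := by exact_mod_cast hm
  have hw := wconst_nonneg ν p
  -- The sewing exponent `ν + 3/4` exceeds one exactly when `ν > 1/4`; the available
  -- exponent `ν + 1/2` in the block distance may be enlarged to it, since distances are integers.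
  have h := sewing_sum (P := P) (n := m) (v := Jb x ν p n m) (θ := ν + 3 / 4)
    (A := fun i l ω => y 1 ((blk n m l : ℝ) / n) ω - y 1 ((blk n m i : ℝ) / n) ω)
    (C := |K₀| * Real.sqrt (wconst ν p) * (2 / m : ℝ) ^ (2 * ν + 1 / 2)) (by linarith)
    (by positivity) (fun i ω => by simp)
    (fun i k hik hk => int_mul (der_grid hy (blk_mono n m hik) (blk_le n hm hk.le)).1
      (memLp_Jb hx hp hk)) ?_ 0 m (Nat.zero_le m) le_rfl
  · refine h.trans (le_of_eq ?_)
    rw [Nat.sub_zero, Real.div_rpow (by norm_num) hm'.le,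
      show (1 / 4 - ν : ℝ) = (ν + 3 / 4) - (2 * ν + 1 / 2) by ring, Real.rpow_sub hm']
    ring
  intro i k j hik hkj hj
  simp only [sub_sub_sub_cancel_left]
  rcases hik.eq_or_lt with rfl | hik'
  · simp only [sub_self, zero_mul, Finset.sum_const_zero, abs_zero, integral_zero]
    positivity
  rcases hkj.eq_or_lt with rfl | hkj'
  · simp only [Finset.Ico_self, Finset.sum_empty, abs_zero, integral_zero]
    positivity
  simp only [← Finset.mul_sum]
  set d : ℝ := ((j - i : ℕ) : ℝ) with hdd
  have hd0 : 1 ≤ d := Nat.one_le_cast.2 (by omega)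
  have hki : ((k - i : ℕ) : ℝ) ≤ d := Nat.cast_le.2 (by omega)
  have hjk : ((j - k : ℕ) : ℝ) ≤ d := Nat.cast_le.2 (by omega)
  obtain ⟨d1, d2⟩ := der_grid hy (blk_mono n m hik) (blk_le n hm (by omega : k ≤ m))
  have s1 : MemLp (fun ω => ∑ l ∈ Finset.Ico k j, Jb x ν p n m l ω) 2 P :=
    memLp_finsetSum _ fun l hl => memLp_Jb hx hp (by have := Finset.mem_Ico.1 hl; omega)
  have b1 := sum_Jb_sq_le hν h1 hx hp hm hmn hkj' hj
  have e1 : ((blk n m k - blk n m i : ℕ) : ℝ) / n ≤ 2 / m * d := by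
    refine (div_le_div_of_nonneg_right (blk_sub_le hm hmn hik') hn.le).trans ?_
    rw [show 2 * ((k - i : ℕ) : ℝ) * n / m / n = 2 / m * ((k - i : ℕ) : ℝ) by field_simp]
    gcongr
  have t := integral_abs_mul_le d1 s1 (a := |K₀| * (2 / m * d) ^ ν)
    (b := Real.sqrt (wconst ν p) * (2 / m * d) ^ (1 / 2 : ℝ) * (2 / m : ℝ) ^ ν) (by positivity)
    (by positivity) (d2.trans (by gcongr)) (by
      rw [mul_pow, sqrt_mul_rpow_half_sq hw (by positivity), ← Real.rpow_natCast ((2 / m : ℝ) ^ ν),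
        ← Real.rpow_mul (by positivity), mul_comm ν]
      refine b1.trans ?_
      rw [show 2 * ((j - k : ℕ) : ℝ) / m = 2 / m * ((j - k : ℕ) : ℝ) by ring, Nat.cast_ofNat]
      gcongr)
  refine t.trans ?_
  have hd : 0 < d := by linarith
  have e3 : d ^ (ν + 1 / 2) ≤ d ^ (ν + 3 / 4) :=
    Real.rpow_le_rpow_of_exponent_le hd0 (by linarith)
  have e4 : |K₀| * (2 / m * d) ^ ν *
      (Real.sqrt (wconst ν p) * (2 / m * d) ^ (1 / 2 : ℝ) * (2 / m : ℝ) ^ ν) =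
      |K₀| * Real.sqrt (wconst ν p) * (2 / m : ℝ) ^ (2 * ν + 1 / 2) * d ^ (ν + 1 / 2) := by
    have h2 : (0 : ℝ) < 2 / m := by positivity
    rw [Real.mul_rpow h2.le hd.le, Real.mul_rpow h2.le hd.le, Real.rpow_add hd, two_mul,
      Real.rpow_add h2, Real.rpow_add h2]
    ring
  rw [e4]
  gcongr

/-- The compensated sums over all blocks are negligible. -/
lemma rem_total_le (h0 : 1 / 4 < ν) (h1 : ν ≤ 1 / 2) (hx : IsFBM P ν x)
    (hy : Controlled P ν 2 K₀ (xlift x) y) (hp : 2 ≤ p) {n m : ℕ} (hm : 0 < m) (hmn : m ≤ n) :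
    ∫ ω, |∑ l ∈ Finset.Ico 0 m, rn n * ∑ k ∈ Finset.Ico (blk n m l) (blk n m (l + 1)),
        Rem y x n (blk n m l) k ω * fpow p (Zinc x ν n k ω)| ∂P ≤
      |K₀| * (Real.sqrt (vconst ν p) + Real.sqrt (wconst ν p)) /
        (1 - (2 / 3 : ℝ) ^ (2 * ν + 1 / 2 - 1)) * 2 ^ (2 * ν + 1 / 2) *
        (m : ℝ) ^ (1 / 2 - 2 * ν) := by
  have hν : 0 < ν := by linarith
  have hn : (0 : ℝ) < n := by exact_mod_cast (by omega : 0 < n)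
  have hm' : (0 : ℝ) < m := by exact_mod_cast hm
  have hf := memLp_fpow (p := p) (by linarith)
  have hr : (2 / 3 : ℝ) ^ (2 * ν + 1 / 2 - 1) < 1 :=
    Real.rpow_lt_one (by norm_num) (by norm_num) (by linarith)
  set K := |K₀| * (Real.sqrt (vconst ν p) + Real.sqrt (wconst ν p)) /
        (1 - (2 / 3 : ℝ) ^ (2 * ν + 1 / 2 - 1)) with hK
  have hK0 : 0 ≤ K := div_nonneg (by positivity) (by linarith)
  have hi : ∀ l ∈ Finset.Ico 0 m, Integrable (fun ω => |rn n *
      ∑ k ∈ Finset.Ico (blk n m l) (blk n m (l + 1)),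
        Rem y x n (blk n m l) k ω * fpow p (Zinc x ν n k ω)|) P := fun l hl =>
    ((integrable_finsetSum _ fun k hk => by
      have hk := Finset.mem_Ico.1 hk
      have hkn := hk.2.trans_le (blk_le n hm (Finset.mem_Ico.1 hl).2)
      exact int_mul (rem_grid hy hx hk.1 hkn.le).1 (memLp_fZ hν hx hf hkn)).const_mul _).abs
  refine (integral_mono_of_nonneg (ae_of_all _ fun ω => abs_nonneg _) (integrable_finsetSum _ hi)
    (ae_of_all _ fun ω => Finset.abs_sum_le_sum_abs _ _)).trans ?_
  rw [integral_finsetSum _ hi]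
  -- The powers of `n` cancel, leaving `m ^ (-(2ν + 1/2))` for each block.
  have each : ∀ l ∈ Finset.Ico 0 m, ∫ ω, |rn n *
      ∑ k ∈ Finset.Ico (blk n m l) (blk n m (l + 1)),
        Rem y x n (blk n m l) k ω * fpow p (Zinc x ν n k ω)| ∂P ≤
      K * 2 ^ (2 * ν + 1 / 2) * (m : ℝ) ^ (-(2 * ν + 1 / 2)) := by
    intro l hl
    have h := rem_sum_le h0 h1 hx hy hp (blk n m l) (blk n m (l + 1)) (blk_mono n m (Nat.le_succ l))
      (blk_le n hm (Finset.mem_Ico.1 hl).2)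
    simp only [abs_mul, abs_of_nonneg (rn_nonneg n), integral_const_mul]
    have e1 : ((blk n m (l + 1) - blk n m l : ℕ) : ℝ) ≤ 2 * n / m := by
      simpa using blk_sub_le hm hmn (Nat.lt_succ_self l)
    calc _ ≤ rn n * (K * ((n : ℝ) ^ (2 * ν))⁻¹ * (2 * n / m : ℝ) ^ (2 * ν + 1 / 2)) := by
          refine mul_le_mul_of_nonneg_left (h.trans ?_) (rn_nonneg n)
          rw [mul_div_right_comm]
          exact mul_le_mul_of_nonneg_left (Real.rpow_le_rpow (by positivity) e1 (by linarith))
            (mul_nonneg hK0 (by positivity))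
      _ = K * 2 ^ (2 * ν + 1 / 2) * (m : ℝ) ^ (-(2 * ν + 1 / 2)) *
          (rn n * ((n : ℝ) ^ (2 * ν))⁻¹ * (n : ℝ) ^ (2 * ν + 1 / 2)) := by
          rw [Real.div_rpow (by positivity) hm'.le, Real.mul_rpow (by norm_num) hn.le,
            Real.rpow_neg hm'.le]
          ring
      _ = _ := by
          rw [rn, ← Real.rpow_neg hn.le, ← Real.rpow_add hn, ← Real.rpow_add hn,
            show (-(1 : ℝ) / 2 + -(2 * ν) + (2 * ν + 1 / 2)) = 0 by ring, Real.rpow_zero, mul_one]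
  refine (Finset.sum_le_card_nsmul _ _ _ each).trans (le_of_eq ?_)
  rw [Nat.card_Ico, Nat.sub_zero, nsmul_eq_mul,
    show (1 / 2 - 2 * ν : ℝ) = 1 + -(2 * ν + 1 / 2) by ring, Real.rpow_add hm', Real.rpow_one]
  ring
end jsum

/-! ### Decomposition of the weighted sum and Riemann sums -/

section sigma
variable {P : Measure Ω} [IsProbabilityMeasure P] {ν : ℝ} {x : ℝ → Ω → ℝ} {p : ℝ}
  {K₀ : ℝ} {y : ℕ → ℝ → Ω → ℝ}

/-- The limiting variance is nonnegative, being a limit of second moments. -/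
lemma sig2_nonneg (h0 : 0 < ν) (h1 : ν ≤ 1 / 2) (hx : IsFBM P ν x) {f : ℝ → ℝ}
    (hf : MemLp f 2 (gaussianReal 0 1)) (hf0 : hermCoeff f 0 = 0) : 0 ≤ sig2 ν f := by
  refine ge_of_tendsto' (tendsto_sig2 h0 h1 hf hf0) fun N => ?_
  have h := ge_of_tendsto' (b := (0 : ℝ)) (tendsto_WB_sq h0 h1 hx hf0 N one_pos fun _ => 1)
    fun n => integral_nonneg fun ω => sq_nonneg _
  simpa using h

/-- Only the even Hermite coefficients of `|t|^p - c_p` contribute to the limiting variance. -/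
lemma sig2_fpow (ν : ℝ) (hp : 0 ≤ p) : sig2 ν (fpow p) = ∑' q : ℕ, if 1 ≤ q then
    (Nat.factorial (2 * q) : ℝ) * (apow p q) ^ 2 * ∑' k : ℤ, (rho ν k) ^ (2 * q) else 0 := by
  unfold sig2
  have hinj : Function.Injective fun q : ℕ => 2 * q := fun a b h => by simpa using h
  rw [← hinj.tsum_eq]
  · refine tsum_congr fun q => ?_
    split_ifs with h
    · rw [hermCoeff_fpow_even hp]
    · obtain rfl : q = 0 := by omega
      simp [hermCoeff_fpow_zero hp]
  · intro q hq
    rcases Nat.even_or_odd q with h | h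
    · obtain ⟨r, rfl⟩ := h
      exact ⟨r, by simp only; omega⟩
    · simp [hermCoeff_fpow_odd p h] at hq

/-- An `L¹` perturbation of the phase. -/
lemma norm_integral_cexp_sub_le_L1 {F : Ω → ℂ} (hFm : AEStronglyMeasurable F P) {M : ℝ}
    (hM : ∀ ω, ‖F ω‖ ≤ M) {f g : Ω → ℝ} (hf : AEStronglyMeasurable f P)
    (hg : AEStronglyMeasurable g P) {e : Ω → ℝ} (he : Integrable e P)
    (h : ∀ ω, |f ω - g ω| ≤ e ω) :
    ‖∫ ω, F ω * Complex.exp (Complex.I * (f ω : ℂ)) ∂P -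
      ∫ ω, F ω * Complex.exp (Complex.I * (g ω : ℂ)) ∂P‖ ≤ M * ∫ ω, e ω ∂P := by
  have hF : Integrable F P := Integrable.of_bound hFm M (ae_of_all _ hM)
  have h1 : ∀ {f : Ω → ℝ}, AEStronglyMeasurable f P →
      Integrable (fun ω => F ω * Complex.exp (Complex.I * (f ω : ℂ))) P := fun {f} hf =>
    hF.mul_bdd (c := 1) (aesm_cexp hf) (ae_of_all _ fun ω => (norm_cexp_I (f ω)).le)
  rw [← integral_sub (h1 hf) (h1 hg), ← integral_const_mul]
  refine (norm_integral_le_integral_norm _).trans ?_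
  refine integral_mono_of_nonneg (ae_of_all _ fun ω => norm_nonneg _) (he.const_mul M)
    (ae_of_all _ fun ω => ?_)
  simp only
  rw [← mul_sub, norm_mul]
  exact mul_le_mul (hM ω) ((norm_cexp_sub_le _ _).trans (h ω)) (norm_nonneg _)
    (norm_bound_nonneg hM P)

omit [MeasurableSpace Ω] in
/-- Decomposition of the weighted sum over `m` blocks: frozen weights, second-order remainders,
and the first-order sums weighted by the derivative process. -/
lemma weighted_sum_eq (x : ℝ → Ω → ℝ) (y : ℕ → ℝ → Ω → ℝ) (ν p : ℝ) (n : ℕ) {m : ℕ} (hm : 0 < m)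
    (ω : Ω) :
    rn n * ∑ k ∈ Finset.range n, y 0 ((k : ℝ) / n) ω * fpow p (Zinc x ν n k ω) =
      ∑ l ∈ Finset.range m, y 0 ((blk n m l : ℝ) / n) ω * Bk x ν (fpow p) m n l ω +
      ∑ l ∈ Finset.Ico 0 m, rn n * ∑ k ∈ Finset.Ico (blk n m l) (blk n m (l + 1)),
        Rem y x n (blk n m l) k ω * fpow p (Zinc x ν n k ω) +
      ∑ l ∈ Finset.Ico 0 m, (y 1 ((blk n m l : ℝ) / n) ω - y 1 ((blk n m 0 : ℝ) / n) ω) *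
        Jb x ν p n m l ω +
      y 1 0 ω * ∑ l ∈ Finset.Ico 0 m, Jb x ν p n m l ω := by
  have h := sum_blocks n m (fun k => y 0 ((k : ℝ) / n) ω * fpow p (Zinc x ν n k ω))
    (Nat.zero_le m)
  rw [blk_zero, blk_self n hm] at h
  rw [Finset.range_eq_Ico, ← h, Finset.mul_sum, Finset.mul_sum, Finset.range_eq_Ico, ← Finset.sum_add_distrib,
    ← Finset.sum_add_distrib, ← Finset.sum_add_distrib]
  refine Finset.sum_congr rfl fun l _ => ?_
  simp only [Bk, Jb, Finset.mul_sum, blk_zero, Nat.cast_zero, zero_div]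
  rw [← Finset.sum_add_distrib, ← Finset.sum_add_distrib, ← Finset.sum_add_distrib]
  refine Finset.sum_congr rfl fun k _ => ?_
  unfold Rem
  ring

/-- Left Riemann sums of a continuous function on `[0, 1]` converge to its integral. -/
lemma tendsto_riemann {f : ℝ → ℝ} (hf : ContinuousOn f (Set.Icc 0 1)) :
    Tendsto (fun N : ℕ => ((N + 1 : ℕ) : ℝ)⁻¹ * ∑ j ∈ Finset.range (N + 1),
      f ((j : ℝ) / (N + 1 : ℕ))) atTop (nhds (∫ v in (0 : ℝ)..1, f v)) := by
  have huc := isCompact_Icc.uniformContinuousOn_of_continuous hf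
  rw [Metric.uniformContinuousOn_iff] at huc
  rw [Metric.tendsto_atTop]
  intro ε hε
  obtain ⟨δ, hδ, H⟩ := huc (ε / 2) (by positivity)
  obtain ⟨N0, hN0⟩ := exists_nat_one_div_lt hδ
  refine ⟨N0, fun N hN => ?_⟩
  set m := N + 1 with hmd
  have hm' : (0 : ℝ) < (m : ℕ) := Nat.cast_pos.2 (by omega)
  have hsm : (1 : ℝ) / m < δ := by
    refine lt_of_le_of_lt (one_div_le_one_div_of_le (by positivity) ?_) hN0
    rw [hmd]; push_cast
    have : (N0 : ℝ) ≤ N := Nat.cast_le.2 hN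
    linarith
  have hsub : ∀ j < m, ∀ v ∈ Set.Icc ((j : ℝ) / m) (((j + 1 : ℕ) : ℝ) / m),
      v ∈ Set.Icc (0 : ℝ) 1 := fun j hj v hv =>
    ⟨le_trans (by positivity) hv.1, hv.2.trans ((div_le_one hm').2 (Nat.cast_le.2 hj))⟩
  have hle : ∀ j : ℕ, (j : ℝ) / m ≤ ((j + 1 : ℕ) : ℝ) / m := fun j => by
    gcongr; omega
  have hint : ∀ j < m, IntervalIntegrable f volume ((j : ℝ) / m) (((j + 1 : ℕ) : ℝ) / m) :=
    fun j hj => (hf.mono fun v hv => hsub j hj v (by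
      rwa [Set.uIcc_of_le (hle j)] at hv)).intervalIntegrable
  have hsum := intervalIntegral.sum_integral_adjacent_intervals (f := f) (μ := volume)
    (a := fun j : ℕ => (j : ℝ) / m) (n := m) hint
  simp only [Nat.cast_zero, zero_div, div_self hm'.ne'] at hsum
  rw [dist_eq_norm, ← hsum, Finset.mul_sum, ← Finset.sum_sub_distrib]
  have each : ∀ j ∈ Finset.range m, ‖(m : ℝ)⁻¹ * f ((j : ℝ) / m) -
      ∫ v in ((j : ℝ) / m)..(((j + 1 : ℕ) : ℝ) / m), f v‖ ≤ ε / 2 * (m : ℝ)⁻¹ := by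
    intro j hj
    have hj := Finset.mem_range.1 hj
    have hlen : ((j + 1 : ℕ) : ℝ) / m - (j : ℝ) / m = (m : ℝ)⁻¹ := by
      push_cast; field_simp; ring
    have e : (m : ℝ)⁻¹ * f ((j : ℝ) / m) =
        ∫ v in ((j : ℝ) / m)..(((j + 1 : ℕ) : ℝ) / m), f ((j : ℝ) / m) := by
      rw [intervalIntegral.integral_const, hlen, smul_eq_mul]
    rw [e, ← intervalIntegral.integral_sub intervalIntegrable_const (hint j hj)]
    refine (intervalIntegral.norm_integral_le_of_norm_le_const (C := ε / 2) fun v hv => ?_).trans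
      (le_of_eq ?_)
    · rw [Set.uIoc_of_le (hle j)] at hv
      have hd := H _ (hsub j hj _ ⟨le_rfl, hle j⟩) _ (hsub j hj v ⟨hv.1.le, hv.2⟩) (by
        rw [Real.dist_eq, abs_sub_comm, abs_of_pos (by linarith [hv.1])]
        have := hv.2
        rw [one_div] at hsm
        linarith)
      rw [← dist_eq_norm]
      exact hd.le
    · rw [hlen, abs_of_pos (by positivity)]
  refine (norm_sum_le_of_le _ each).trans_lt ?_
  rw [Finset.sum_const, Finset.card_range, nsmul_eq_mul, mul_left_comm, mul_inv_cancel₀ hm'.ne']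
  linarith
end sigma

/-! ### Passage to the limit -/

section assembly
variable {P : Measure Ω} [IsProbabilityMeasure P] {ν : ℝ} {x : ℝ → Ω → ℝ} {p : ℝ}
  {K₀ : ℝ} {y : ℕ → ℝ → Ω → ℝ}

omit [IsProbabilityMeasure P] in
lemma Controlled.meas (hy : Controlled P ν 2 K₀ (xlift x) y) {k : ℕ} (hk : k ≤ 1) (t : ℝ) :
    Measurable (y k t) := hy.1 k hk t

/-- The integral `E[F e^{i φ}]`. -/
def cfun (P : Measure Ω) (F : Ω → ℂ) (φ : Ω → ℝ) : ℂ :=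
  ∫ ω, F ω * Complex.exp (Complex.I * (φ ω : ℂ)) ∂P

/-- The full phase `λ S_n`. -/
def ph0 (x : ℝ → Ω → ℝ) (y : ℕ → ℝ → Ω → ℝ) (ν p lam : ℝ) (n : ℕ) (ω : Ω) : ℝ :=
  lam * (rn n * ∑ k ∈ Finset.range n, y 0 ((k : ℝ) / n) ω * fpow p (Zinc x ν n k ω))

/-- Frozen weights plus the leading first-order term. -/
def ph1 (x : ℝ → Ω → ℝ) (y : ℕ → ℝ → Ω → ℝ) (ν p lam : ℝ) (m n : ℕ) (ω : Ω) : ℝ :=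
  lam * (∑ l ∈ Finset.range m, y 0 ((blk n m l : ℝ) / n) ω * Bk x ν (fpow p) m n l ω +
    y 1 0 ω * ∑ l ∈ Finset.Ico 0 m, Jb x ν p n m l ω)

/-- Weights frozen at the beginning of each block of the `n`-grid. -/
def ph2 (x : ℝ → Ω → ℝ) (y : ℕ → ℝ → Ω → ℝ) (ν p lam : ℝ) (m n : ℕ) (ω : Ω) : ℝ :=
  lam * ∑ l ∈ Finset.range m, y 0 ((blk n m l : ℝ) / n) ω * Bk x ν (fpow p) m n l ω

/-- Weights frozen at the points `j / m`. -/
def ph3 (x : ℝ → Ω → ℝ) (y : ℕ → ℝ → Ω → ℝ) (ν p lam : ℝ) (m n : ℕ) (ω : Ω) : ℝ :=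
  WB x ν (fpow p) m (fun j => lam * y 0 ((j : ℝ) / m) ω) n ω

lemma aesm_ph0 (hx : IsFBM P ν x) (hy : Controlled P ν 2 K₀ (xlift x) y) (lam : ℝ) (n : ℕ) :
    AEStronglyMeasurable (ph0 x y ν p lam n) P :=
  (((Finset.measurable_fun_sum _ fun k _ => (hy.meas (Nat.zero_le 1) _).mul
    ((measurable_fpow p).comp (measurable_Zinc hx n k))).const_mul _).const_mul
      lam).aestronglyMeasurable

lemma measurable_ph2 (hx : IsFBM P ν x) (hy : Controlled P ν 2 K₀ (xlift x) y) (lam : ℝ)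
    (m n : ℕ) : Measurable (ph2 x y ν p lam m n) :=
  (Finset.measurable_fun_sum _ fun l _ => (hy.meas (Nat.zero_le 1) _).mul
    (measurable_Bk hx (measurable_fpow p) m n l)).const_mul lam

lemma memLp_sum_Jb (hx : IsFBM P ν x) (hp : 2 ≤ p) (n m : ℕ) :
    MemLp (fun ω => ∑ l ∈ Finset.Ico 0 m, Jb x ν p n m l ω) 2 P :=
  memLp_finsetSum _ fun _ hl => memLp_Jb hx hp (Finset.mem_Ico.1 hl).2

lemma aesm_ph1 (hx : IsFBM P ν x) (hy : Controlled P ν 2 K₀ (xlift x) y) (hp : 2 ≤ p) (lam : ℝ)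
    (m n : ℕ) : AEStronglyMeasurable (ph1 x y ν p lam m n) P := by
  have h : AEStronglyMeasurable (fun ω => ∑ l ∈ Finset.range m,
      y 0 ((blk n m l : ℝ) / n) ω * Bk x ν (fpow p) m n l ω) P :=
    (Finset.measurable_fun_sum _ fun l _ => (hy.meas (Nat.zero_le 1) _).mul
      (measurable_Bk hx (measurable_fpow p) m n l)).aestronglyMeasurable
  exact (h.add ((hy.meas le_rfl 0).aestronglyMeasurable.mul
    (memLp_sum_Jb hx hp n m).1)).const_mul lam

/-- Measurability of the vector of frozen weights. -/
lemma measurable_weights (hy : Controlled P ν 2 K₀ (xlift x) y) (lam : ℝ) (m : ℕ) :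
    Measurable fun ω => fun j : ℕ => lam * y 0 ((j : ℝ) / m) ω :=
  measurable_pi_lambda _ fun _ => (hy.meas (Nat.zero_le 1) _).const_mul lam

lemma aesm_ph3 (hx : IsFBM P ν x) (hy : Controlled P ν 2 K₀ (xlift x) y) (lam : ℝ)
    (m n : ℕ) : AEStronglyMeasurable (ph3 x y ν p lam m n) P :=
  (measurable_WB_random hx (measurable_fpow p) m n
    (measurable_weights hy lam m)).aestronglyMeasurable

/-- Removal of the second-order remainders and of the fluctuation of `y'`. -/
lemma step1 (h0 : 1 / 4 < ν) (h1 : ν ≤ 1 / 2) (hx : IsFBM P ν x)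
    (hy : Controlled P ν 2 K₀ (xlift x) y) (hp : 2 ≤ p) {F : Ω → ℂ}
    (hFm : AEStronglyMeasurable F P) {M : ℝ} (hM : ∀ ω, ‖F ω‖ ≤ M) (lam : ℝ) :
    ∃ C₁ C₂ : ℝ, ∀ m n : ℕ, 0 < m → m ≤ n →
      ‖cfun P F (ph0 x y ν p lam n) - cfun P F (ph1 x y ν p lam m n)‖ ≤
        C₁ * (m : ℝ) ^ (1 / 2 - 2 * ν) + C₂ * (m : ℝ) ^ (1 / 4 - ν) := by
  refine ⟨M * |lam| * (|K₀| * (Real.sqrt (vconst ν p) + Real.sqrt (wconst ν p)) /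
        (1 - (2 / 3 : ℝ) ^ (2 * ν + 1 / 2 - 1)) * 2 ^ (2 * ν + 1 / 2)),
    M * |lam| * (|K₀| * Real.sqrt (wconst ν p) * 2 ^ (2 * ν + 1 / 2) /
      (1 - (2 / 3 : ℝ) ^ (ν + 3 / 4 - 1))), fun m n hm hmn => ?_⟩
  have hν : 0 < ν := by linarith
  have hM0 := norm_bound_nonneg hM P
  set R : Ω → ℝ := fun ω => ∑ l ∈ Finset.Ico 0 m, rn n *
    ∑ k ∈ Finset.Ico (blk n m l) (blk n m (l + 1)),
      Rem y x n (blk n m l) k ω * fpow p (Zinc x ν n k ω) with hR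
  set Q : Ω → ℝ := fun ω => ∑ l ∈ Finset.Ico 0 m,
    (y 1 ((blk n m l : ℝ) / n) ω - y 1 ((blk n m 0 : ℝ) / n) ω) * Jb x ν p n m l ω with hQ
  have iR : Integrable R P := integrable_finsetSum _ fun l hl =>
    (integrable_finsetSum _ fun k hk => by
      have hk := Finset.mem_Ico.1 hk
      have hkn := hk.2.trans_le (blk_le n hm (Finset.mem_Ico.1 hl).2)
      exact int_mul (rem_grid hy hx hk.1 hkn.le).1
        (memLp_fZ hν hx (memLp_fpow (by linarith)) hkn)).const_mul _
  have iQ : Integrable Q P := integrable_finsetSum _ fun l hl =>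
    int_mul (der_grid hy (blk_mono n m (Nat.zero_le l))
      (blk_le n hm (Finset.mem_Ico.1 hl).2.le)).1 (memLp_Jb hx hp (Finset.mem_Ico.1 hl).2)
  have bR : ∫ ω, |R ω| ∂P ≤ _ := rem_total_le h0 h1 hx hy hp hm hmn
  have bQ : ∫ ω, |Q ω| ∂P ≤ _ := der_sum_le h0 h1 hx hy hp hm hmn
  have ie : Integrable (fun ω => |lam| * (|R ω| + |Q ω|)) P :=
    (int_add iR.abs iQ.abs).const_mul _
  refine (norm_integral_cexp_sub_le_L1 hFm hM (aesm_ph0 hx hy lam n) (aesm_ph1 hx hy hp lam m n)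
    ie fun ω => ?_).trans ?_
  · have e : ph0 x y ν p lam n ω - ph1 x y ν p lam m n ω = lam * (R ω + Q ω) := by
      rw [ph0, ph1, weighted_sum_eq x y ν p n hm ω]
      simp only [hR, hQ]
      ring
    rw [e, abs_mul]
    exact mul_le_mul_of_nonneg_left (abs_add_le _ _) (abs_nonneg _)
  · rw [integral_const_mul, integral_add iR.abs iQ.abs, ← mul_assoc]
    refine (mul_le_mul_of_nonneg_left (add_le_add bR bQ) (by positivity)).trans (le_of_eq ?_)
    ring

/-- Removal of the leading first-order term; `y'₀` need not be square integrable. -/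
lemma step2 (h0 : 1 / 4 < ν) (h1 : ν ≤ 1 / 2) (hx : IsFBM P ν x)
    (hy : Controlled P ν 2 K₀ (xlift x) y) (hp : 2 ≤ p) {F : Ω → ℂ}
    (hFm : AEStronglyMeasurable F P) {M : ℝ} (hM : ∀ ω, ‖F ω‖ ≤ M) (lam : ℝ) {m n : ℕ}
    (hm : 0 < m) (hmn : m ≤ n) :
    ‖cfun P F (ph1 x y ν p lam m n) - cfun P F (ph2 x y ν p lam m n)‖ ≤
      M * (Real.sqrt (∫ ω, (min 1 |lam * y 1 0 ω * (m : ℝ) ^ (-ν)|) ^ 2 ∂P) *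
        Real.sqrt (8 + 2 * (2 * wconst ν p * 2 ^ (2 * ν)))) := by
  have hν : 0 < ν := by linarith
  have hm' : (0 : ℝ) < m := Nat.cast_pos.2 hm
  -- Distribute a power of `m` so that the first factor tends to zero almost surely while the
  -- second one stays bounded in `L²`.
  have h := prod_diff hFm hM (aesm_ph1 hx hy hp lam m n)
    (measurable_ph2 (p := p) hx hy lam m n).aestronglyMeasurable (s := {(0 : ℕ)})
    (u := fun _ ω => lam * y 1 0 ω * (m : ℝ) ^ (-ν))
    (v := fun _ ω => (m : ℝ) ^ ν * ∑ l ∈ Finset.Ico 0 m, Jb x ν p n m l ω)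
    (V := 2 * wconst ν p * 2 ^ (2 * ν)) (fun ω => ?_)
    (fun _ _ => (((hy.meas le_rfl 0).const_mul lam).mul_const _).aestronglyMeasurable)
    (fun _ _ => (memLp_sum_Jb hx hp n m).const_mul _) (fun _ _ => ?_)
  · rw [Finset.sum_singleton] at h
    exact h
  · rw [Finset.sum_singleton, ← abs_mul]
    refine le_of_eq (congrArg _ ?_)
    have : (m : ℝ) ^ (-ν) * (m : ℝ) ^ ν = 1 := by
      rw [← Real.rpow_add hm', neg_add_cancel, Real.rpow_zero]
    rw [ph1, ph2]
    linear_combination (-(lam * y 1 0 ω * ∑ l ∈ Finset.Ico 0 m, Jb x ν p n m l ω)) * this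
  · simp only [mul_pow, integral_const_mul]
    refine (mul_le_mul_of_nonneg_left (sum_Jb_sq_le hν h1 hx hp hm hmn hm le_rfl)
      (by positivity)).trans (le_of_eq ?_)
    rw [Nat.sub_zero, Real.div_rpow (by norm_num) hm'.le, ← Real.rpow_natCast ((m : ℝ) ^ ν),
      ← Real.rpow_mul hm'.le, Nat.cast_ofNat, mul_comm ν]
    have : (m : ℝ) ^ (2 * ν) ≠ 0 := (Real.rpow_pos_of_pos hm' _).ne'
    field_simp

/-- Moving the sampling points of the weights from the `n`-grid to `j / m`. -/
lemma step3 (h0 : 1 / 4 < ν) (h1 : ν ≤ 1 / 2) (hx : IsFBM P ν x)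
    (hy : Controlled P ν 2 K₀ (xlift x) y) (hp : 2 ≤ p) {F : Ω → ℂ}
    (hFm : AEStronglyMeasurable F P) {M : ℝ} (hM : ∀ ω, ‖F ω‖ ≤ M) (lam : ℝ) {m : ℕ}
    (hm : 0 < m) {ε : ℝ} (hε : 0 < ε) : ∀ᶠ n in atTop,
    ‖cfun P F (ph2 x y ν p lam m n) - cfun P F (ph3 x y ν p lam m n)‖ ≤ ε := by
  have hν : 0 < ν := by linarith
  have hm' : (0 : ℝ) < m := Nat.cast_pos.2 hm
  have hf := memLp_fpow (p := p) (by linarith)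
  have hfi := integral_fpow (p := p) (by linarith)
  have hu : ∀ n j, AEStronglyMeasurable (fun ω => lam * (y 0 ((blk n m j : ℝ) / n) ω -
      y 0 ((j : ℝ) / m) ω)) P := fun n j =>
    (((hy.meas (Nat.zero_le 1) _).sub (hy.meas (Nat.zero_le 1) _)).const_mul
      lam).aestronglyMeasurable
  have b : ∀ n, ‖cfun P F (ph2 x y ν p lam m n) - cfun P F (ph3 x y ν p lam m n)‖ ≤
      M * ∑ j ∈ Finset.range m, Real.sqrt (∫ ω, (min 1 |lam * (y 0 ((blk n m j : ℝ) / n) ω -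
        y 0 ((j : ℝ) / m) ω)|) ^ 2 ∂P) * Real.sqrt (8 + 2 * vconst ν p) := fun n =>
    prod_diff hFm hM (measurable_ph2 (p := p) hx hy lam m n).aestronglyMeasurable
      (aesm_ph3 hx hy lam m n) (s := Finset.range m)
      (u := fun j ω => lam * (y 0 ((blk n m j : ℝ) / n) ω - y 0 ((j : ℝ) / m) ω))
      (v := fun j => Bk x ν (fpow p) m n j) (V := vconst ν p) (fun ω => by
        rw [ph2, ph3, WB_lin, Finset.mul_sum, ← Finset.sum_sub_distrib]
        refine (Finset.abs_sum_le_sum_abs _ _).trans (le_of_eq ?_)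
        refine Finset.sum_congr rfl fun j _ => ?_
        rw [← abs_mul]
        exact congrArg _ (by ring)) (fun j _ => hu n j)
      (fun j hj => memLp_Bk hν hx hf (Finset.mem_range.1 hj) n)
      (fun j hj => Bk_sq_le hν h1 hx (measurable_fpow p) hf hfi (Finset.mem_range.1 hj) n)
  have t : Tendsto (fun n => M * ∑ j ∈ Finset.range m, Real.sqrt (∫ ω, (min 1 |lam *
      (y 0 ((blk n m j : ℝ) / n) ω - y 0 ((j : ℝ) / m) ω)|) ^ 2 ∂P) *
        Real.sqrt (8 + 2 * vconst ν p)) atTop (nhds (M * ∑ j ∈ Finset.range m,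
        Real.sqrt 0 * Real.sqrt (8 + 2 * vconst ν p))) := by
    refine (tendsto_finsetSum _ fun j hj => ?_).const_mul M
    refine Tendsto.mul_const _ ((Real.continuous_sqrt.tendsto 0).comp
      (tendsto_min_sq (fun n => hu n j) (ae_of_all _ fun ω => ?_)))
    have hj := Finset.mem_range.1 hj
    have hc := hy.2.1 0 (by norm_num) ω ((j : ℝ) / m)
      ⟨by positivity, (div_le_one hm').2 (Nat.cast_le.2 hj.le)⟩
    have hw : Tendsto (fun n : ℕ => (blk n m j : ℝ) / n) atTop
        (nhdsWithin ((j : ℝ) / m) (Set.Icc 0 1)) :=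
      tendsto_nhdsWithin_iff.2 ⟨tendsto_blk hm j, Eventually.of_forall fun n =>
        ⟨by positivity, div_le_one_of_le₀ (Nat.cast_le.2 (blk_le n hm hj.le)) (by positivity)⟩⟩
    have h2 : Tendsto (fun n : ℕ => lam * (y 0 ((blk n m j : ℝ) / n) ω - y 0 ((j : ℝ) / m) ω))
        atTop (nhds (lam * (y 0 ((j : ℝ) / m) ω - y 0 ((j : ℝ) / m) ω))) :=
      ((hc.tendsto.comp hw).sub_const _).const_mul lam
    simpa using h2
  simp only [Real.sqrt_zero, zero_mul, Finset.sum_const_zero, mul_zero] at t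
  filter_upwards [t.eventually (gt_mem_nhds hε)] with n hn
  exact (b n).trans hn.le

/-- Riemann-sum limit of the conditional characteristic functions. -/
lemma tendsto_gfac_int (hy : Controlled P ν 2 K₀ (xlift x) y) {F : Ω → ℂ}
    (hFm : AEStronglyMeasurable F P) {M : ℝ} (hM : ∀ ω, ‖F ω‖ ≤ M) (lam : ℝ) {s2 : ℝ}
    (hs : 0 ≤ s2) :
    Tendsto (fun N : ℕ => ∫ ω, F ω * (gfac s2 (N + 1)
        (fun j => lam * y 0 ((j : ℝ) / (N + 1 : ℕ)) ω) : ℂ) ∂P) atTop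
      (nhds (∫ ω, F ω * Complex.exp ((-(lam ^ 2 * s2 / 2 *
        ∫ v in (0 : ℝ)..1, (y 0 v ω) ^ 2 : ℝ) : ℂ)) ∂P)) := by
  refine tendsto_integral_of_dominated_convergence (fun _ => M) (fun N => ?_) (integrable_const M)
    (fun N => ae_of_all _ fun ω => ?_) (ae_of_all _ fun ω => ?_)
  · exact hFm.mul (Complex.measurable_ofReal.comp ((continuous_gfac s2 (N + 1)).measurable.comp
      (measurable_weights hy lam (N + 1)))).aestronglyMeasurable
  · rw [norm_mul, Complex.norm_real, Real.norm_of_nonneg (gfac_nonneg _ _ _)]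
    exact (mul_le_of_le_one_right (norm_nonneg _) (gfac_le_one hs _ _)).trans (hM ω)
  · refine Tendsto.const_mul _ ?_
    have hc : ContinuousOn (fun v => y 0 v ω ^ 2) (Set.Icc 0 1) :=
      (hy.2.1 0 (by norm_num) ω).pow 2
    have h := (tendsto_riemann hc).const_mul (-(lam ^ 2 * s2 / 2))
    have h2 := (Complex.continuous_ofReal.tendsto _).comp ((Real.continuous_exp.tendsto _).comp h)
    rw [Complex.ofReal_exp, neg_mul] at h2
    push_cast at h2 ⊢
    refine h2.congr fun N => ?_
    simp only [Function.comp_apply, gfac]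
    congr 2
    simp only [mul_pow, ← Finset.mul_sum]
    push_cast
    ring

/-- Stable convergence of the weighted power variation, tested against a bounded random variable. -/
lemma main_clt (h0 : 1 / 4 < ν) (h1 : ν ≤ 1 / 2) (hx : IsFBM P ν x)
    (hy : Controlled P ν 2 K₀ (xlift x) y) (hp : 2 ≤ p) {F : Ω → ℂ}
    (hFm : AEStronglyMeasurable F P) {M : ℝ} (hM : ∀ ω, ‖F ω‖ ≤ M) (lam : ℝ) :
    Tendsto (fun n => cfun P F (ph0 x y ν p lam n)) atTop
      (nhds (∫ ω, F ω * Complex.exp ((-(lam ^ 2 * sig2 ν (fpow p) / 2 *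
        ∫ v in (0 : ℝ)..1, (y 0 v ω) ^ 2 : ℝ) : ℂ)) ∂P)) := by
  have hν : 0 < ν := by linarith
  have hp0 : 0 ≤ p := by linarith
  have hf := memLp_fpow hp0
  have hf0 := hermCoeff_fpow_zero hp0
  have hs := sig2_nonneg hν h1 hx hf hf0
  obtain ⟨C₁, C₂, hC⟩ := step1 h0 h1 hx hy hp hFm hM lam
  have hcast : Tendsto (fun N : ℕ => ((N + 1 : ℕ) : ℝ)) atTop atTop :=
    tendsto_natCast_atTop_atTop.comp (tendsto_add_atTop_nat 1)
  have hpow : ∀ {r : ℝ}, r < 0 → Tendsto (fun N : ℕ => ((N + 1 : ℕ) : ℝ) ^ r) atTop (nhds 0) :=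
    fun {r} hr => by
      have := (tendsto_rpow_neg_atTop (y := -r) (by linarith)).comp hcast
      rw [neg_neg] at this
      exact this
  have hu : Tendsto (fun N : ℕ => ∫ ω, (min 1 |lam * y 1 0 ω * ((N + 1 : ℕ) : ℝ) ^ (-ν)|) ^ 2 ∂P)
      atTop (nhds 0) := by
    refine tendsto_min_sq (fun N =>
      (((hy.meas le_rfl 0).const_mul lam).mul_const _).aestronglyMeasurable)
      (ae_of_all _ fun ω => ?_)
    simpa using (hpow (r := -ν) (by linarith)).const_mul (lam * y 1 0 ω)
  -- First `n → ∞` with `m = N + 1` blocks, then `N → ∞`; the exponents `1/2 - 2ν` and `1/4 - ν`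
  -- are negative as `ν > 1/4`.
  refine tendsto_approx
    (A := fun N n => cfun P F (ph3 x y ν p lam (N + 1) n))
    (b := fun N => ∫ ω, F ω * (gfac (sig2 ν (fpow p)) (N + 1)
        (fun j => lam * y 0 ((j : ℝ) / (N + 1 : ℕ)) ω) : ℂ) ∂P)
    (δ := fun N => (C₁ * ((N + 1 : ℕ) : ℝ) ^ (1 / 2 - 2 * ν) +
        C₂ * ((N + 1 : ℕ) : ℝ) ^ (1 / 4 - ν)) +
      M * (Real.sqrt (∫ ω, (min 1 |lam * y 1 0 ω * ((N + 1 : ℕ) : ℝ) ^ (-ν)|) ^ 2 ∂P) *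
        Real.sqrt (8 + 2 * (2 * wconst ν p * 2 ^ (2 * ν)))) + ((N + 1 : ℕ) : ℝ) ^ (-1 : ℝ))
    (Eventually.of_forall fun N => random_clt hν h1 hx (measurable_fpow p) hf hf0
      (hermCoeff_fpow_odd p odd_one) hs (Nat.succ_pos N) (measurable_weights hy lam (N + 1)) hFm hM)
    (Eventually.of_forall fun N => ?_) ?_ (tendsto_gfac_int hy hFm hM lam hs)
  · have hN : (0 : ℝ) < ((N + 1 : ℕ) : ℝ) ^ (-1 : ℝ) :=
      Real.rpow_pos_of_pos (Nat.cast_pos.2 (Nat.succ_pos N)) _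
    filter_upwards [step3 h0 h1 hx hy hp hFm hM lam (Nat.succ_pos N) hN,
      eventually_ge_atTop (N + 1)] with n hn hNn
    have t1 := hC (N + 1) n (Nat.succ_pos N) hNn
    have t2 := step2 h0 h1 hx hy hp hFm hM lam (Nat.succ_pos N) hNn
    refine (norm_sub_le_norm_sub_add_norm_sub _ (cfun P F (ph2 x y ν p lam (N + 1) n)) _).trans ?_
    refine add_le_add ?_ hn
    exact (norm_sub_le_norm_sub_add_norm_sub _ (cfun P F (ph1 x y ν p lam (N + 1) n)) _).trans
      (add_le_add t1 t2)
  · have e1 := (hpow (r := 1 / 2 - 2 * ν) (by linarith)).const_mul C₁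
    have e2 := (hpow (r := 1 / 4 - ν) (by linarith)).const_mul C₂
    have e3 := (((Real.continuous_sqrt.tendsto 0).comp hu).mul_const
      (Real.sqrt (8 + 2 * (2 * wconst ν p * 2 ^ (2 * ν))))).const_mul M
    have e4 := hpow (r := -1) (by norm_num)
    have := ((e1.add e2).add e3).add e4
    simpa using this
end assembly

/-- **Weighted power variation CLT** (Theorem 4.16 (i)): for fBm with
`ν ∈ (1/4, 1/2]`, a controlled weight `(y,y')` and `p ≥ 2`,
`S_n = n^{-1/2} ∑_k y_{t_k}(|n^ν δx_{t_k t_{k+1}}|^p - c_p)` converges stably to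
`σ ∫₀¹ y dW`, `W` independent of `x` (characteristic-function formulation). -/
theorem weighted_power_variation_clt
    {Ω : Type*} [MeasurableSpace Ω] (P : Measure Ω) [IsProbabilityMeasure P]
    (ν : ℝ) (hν : 1 / 4 < ν) (hν2 : ν ≤ 1 / 2)
    (x : ℝ → Ω → ℝ) (hx : IsFBM P ν x)
    (K₀ : ℝ) (y : ℕ → ℝ → Ω → ℝ) (hy : Controlled P ν 2 K₀ (xlift x) y)
    (p : ℝ) (hp : 2 ≤ p) :
    ∀ (m : ℕ) (u : Fin m → ℝ), (∀ j, u j ∈ Set.Icc (0 : ℝ) 1) →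
      ∀ g : (Fin m → ℝ) → ℂ, Continuous g → (∃ M, ∀ v, ‖g v‖ ≤ M) →
      ∀ lam : ℝ,
      Tendsto (fun n : ℕ => ∫ ω, g (fun j => x (u j) ω) *
            Complex.exp (Complex.I * ((lam * ((n : ℝ) ^ (-(1 : ℝ) / 2) *
              ∑ k ∈ Finset.range n, y 0 ((k : ℝ) / n) ω *
                (|(n : ℝ) ^ ν * (x (((k : ℝ) + 1) / n) ω - x ((k : ℝ) / n) ω)| ^ p -
                  cconst p)) : ℝ) : ℂ)) ∂P)
        atTop (nhds (∫ ω, g (fun j => x (u j) ω) *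
          Complex.exp ((-(lam ^ 2 *
              (∑' q : ℕ, if 1 ≤ q then
                (Nat.factorial (2 * q) : ℝ) * (apow p q) ^ 2 * ∑' k : ℤ, (rho ν k) ^ (2 * q)
              else 0) / 2 *
              ∫ v in (0 : ℝ)..1, (y 0 v ω) ^ 2 : ℝ) : ℂ)) ∂P)) := by
  intro m u _ g hg hM lam
  obtain ⟨M, hM⟩ := hM
  have hgm : AEStronglyMeasurable (fun ω => g fun j => x (u j) ω) P :=
    (hg.measurable.comp (measurable_pi_lambda _ fun j => hx.1 (u j))).aestronglyMeasurable
  have h := main_clt hν hν2 hx hy hp hgm (fun ω => hM _) lam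
  rw [sig2_fpow ν (by linarith : 0 ≤ p)] at h
  exact h

end
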